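/- arXiv:2404.09175 — 3 statements merged into one kernel-verified Lean document; each statement's English description precedes it below -/
import Mathlib

section
/- Suppose Γ is additively closed and π and all elements of Γ are algebraic over K. Then for every x ∈ K_v that is algebraic over K, the digit sequence of the expansion of x with respect to (Γ, π) is p-automatic. -/
/-!
Common setup: `Kv` is a complete field equipped with a (normalized, `ℤ`-valued)
valuation `Valued.v : Kv → ℤₘ₀ = WithZero (Multiplicative ℤ)`, and `K` is a dense
subfield of `Kv` (so that `Kv` is the completion `K_v` of `K`).  The valuation is
written multiplicatively: the additive valuation of `x` is `n` iff
`Valued.v x = ofAdd (-n)`; the valuation ring `A_v` is `{x | Valued.v x ≤ 1}` and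
`π A_v = {x | Valued.v x ≤ Valued.v π}`.
-/

open scoped Multiplicative

/-- The multiplicative value monoid `ℤₘ₀` for normalized `ℤ`-valued valuations. -/
abbrev ZM0 : Type := WithZero (Multiplicative ℤ)

/-- A sequence `b : ℕ → α` is `k`-automatic if its `k`-kernel
`{ (b (n k^i + j))_n : i ≥ 0, 0 ≤ j < k^i }` is finite. -/
def IsKAutomatic {α : Type*} (k : ℕ) (b : ℕ → α) : Prop :=
  {c : ℕ → α | ∃ i j : ℕ, j < k ^ i ∧ c = fun n => b (n * k ^ i + j)}.Finite

/-- The sequence `{a n}_{n ≥ m}` is ultimately periodic: there are `N ≥ m` and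
`L > 0` with `a (n + L) = a n` for all `n ≥ N`. -/
def UltimatelyPeriodic {α : Type*} (m : ℤ) (a : ℤ → α) : Prop :=
  ∃ N L : ℤ, m ≤ N ∧ 0 < L ∧ ∀ n : ℤ, N ≤ n → a (n + L) = a n

variable {Kv : Type*} [Field Kv] [Valued Kv ZM0]

/-- `x = ∑_{n ≥ m} a_n π^n` is the expansion of `x` with respect to `(Γ, π)`:
all digits `a n` for `n ≥ m` lie in `Γ` and the series converges to `x`. -/
def IsExpansion (π : Kv) (Γ : Set Kv) (m : ℤ) (a : ℤ → Kv) (x : Kv) : Prop :=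
  (∀ n : ℤ, m ≤ n → a n ∈ Γ) ∧
    HasSum (fun n : ℕ => a (m + n) * π ^ (m + (n : ℤ))) x

/-- `Γ ⊆ A_v` is a complete set of representatives of `A_v / π A_v`: reduction
modulo `π A_v` maps `Γ` bijectively onto `A_v / π A_v`. -/
def IsCompleteSetOfReps (π : Kv) (Γ : Set Kv) : Prop :=
  (∀ γ ∈ Γ, Valued.v γ ≤ 1) ∧
    ∀ x : Kv, Valued.v x ≤ 1 → ∃! γ, γ ∈ Γ ∧ Valued.v (x - γ) ≤ Valued.v π

/-- `(Γ, π)` has property A: for every `x ∈ K_v`, `x` is rational (i.e. `x ∈ K`)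
iff the digit sequence of the expansion of `x` w.r.t. `(Γ, π)` is ultimately
periodic. -/
def HasPropertyA (K : Subfield Kv) (π : Kv) (Γ : Set Kv) : Prop :=
  ∀ (x : Kv) (m : ℤ) (a : ℤ → Kv), IsExpansion π Γ m a x →
    (x ∈ K ↔ UltimatelyPeriodic m a)

/-- `(Γ, π)` has property B: for every `x ∈ K_v`, `x` is algebraic over `K` iff
the digit sequence of the expansion of `x` w.r.t. `(Γ, π)` is `p`-automatic. -/
def HasPropertyB (p : ℕ) (K : Subfield Kv) (π : Kv) (Γ : Set Kv) : Prop :=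
  ∀ (x : Kv) (m : ℤ) (a : ℤ → Kv), IsExpansion π Γ m a x →
    (IsAlgebraic ↥K x ↔ IsKAutomatic p fun n : ℕ => a (m + n))

/-- The degree `[S : F]` of a subset `S ⊆ Kv` over a subfield `F ⊆ Kv` (intended
for `F ⊆ S` with `S` a field): the rank of the `F`-span of `S` in `Kv`. -/
noncomputable def degOver (F : Subfield Kv) (S : Set Kv) : Cardinal :=
  Module.rank ↥F ↥(Submodule.span ↥F S)

/-- `Kv` is the completion of a global function field `K` of characteristic `p`
with respect to a normalized nontrivial valuation:  `Kv` has characteristic `p`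
and is complete, `K` is dense in `Kv`, the valuation takes every value `ofAdd n`
(`n ∈ ℤ`) on `K` (normalization/nontriviality), and `K` contains an element `x₀`
transcendental over the prime field `𝔽_p = ⊥` with `[K : 𝔽_p(x₀)] < ∞`. -/
structure IsGlobalFunctionFieldCompletion (p : ℕ) (K : Subfield Kv) : Prop where
  charP : CharP Kv p
  complete : CompleteSpace Kv
  dense : Dense (K : Set Kv)
  normalized : ∀ n : ℤ, ∃ x ∈ K,
    Valued.v x = ((Multiplicative.ofAdd n : Multiplicative ℤ) : ZM0)
  globalFunctionField : ∃ x₀ ∈ K, Transcendental (⊥ : Subfield Kv) x₀ ∧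
    degOver (Subfield.closure {x₀}) (K : Set Kv) < Cardinal.aleph0

/-- The constant field `𝔽_q` of `K`: the algebraic closure of `𝔽_p` in `K`,
i.e. the elements of `K` fixed by some positive power of the Frobenius. -/
def ConstantField (p : ℕ) (K : Subfield Kv) : Set Kv :=
  {x : Kv | x ∈ K ∧ ∃ n : ℕ, 0 < n ∧ x ^ p ^ n = x}

/-- The subfield `𝔽_q(π)` of `Kv` generated by `π` over the constant field. -/
def FqPi (p : ℕ) (K : Subfield Kv) (π : Kv) : Subfield Kv :=
  Subfield.closure (ConstantField p K ∪ {π})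

/-- `𝔽_q((π))`: the completion of `𝔽_q(π)`, i.e. its closure in `Kv`. -/
noncomputable def FqPiCompletion (p : ℕ) (K : Subfield Kv) (π : Kv) : Subfield Kv :=
  (FqPi p K π).topologicalClosure

namespace AutExp

open PowerSeries in
noncomputable def lam (p l : ℕ) (f : (ZMod p)⟦X⟧) : (ZMod p)⟦X⟧ :=
  PowerSeries.mk fun n => PowerSeries.coeff (p * n + l) f

section
variable {p : ℕ} [hp : Fact p.Prime]
open PowerSeries

lemma ps_pow (f : (ZMod p)⟦X⟧) : f ^ p = f.expand p hp.out.ne_zero := by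
  ext n
  have h1 : PowerSeries.coeff n (f ^ p) = PowerSeries.coeff n ((trunc (n+1) f : (ZMod p)⟦X⟧) ^ p) := by
    rw [← coeff_coe_trunc_of_lt (Nat.lt_succ_self n),
      ← coeff_coe_trunc_of_lt (f := (_ : (ZMod p)⟦X⟧) ^ p) (Nat.lt_succ_self n), trunc_trunc_pow]
  rw [h1, ← Polynomial.coe_pow, ← ZMod.expand_card, Polynomial.coeff_coe,
    Polynomial.coeff_expand hp.out.pos, PowerSeries.coeff_expand]
  split_ifs with h
  · rw [coeff_trunc, if_pos]
    exact Nat.lt_succ_of_le (Nat.div_le_self _ _)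
  · rfl

lemma lam_add (l : ℕ) (f g : (ZMod p)⟦X⟧) : lam p l (f + g) = lam p l f + lam p l g := by
  ext n; simp [lam]

lemma lam_zero (l : ℕ) : lam p l 0 = 0 := by
  ext n; simp [lam]

lemma lam_sum {ι : Type*} (l : ℕ) (s : Finset ι) (f : ι → (ZMod p)⟦X⟧) :
    lam p l (∑ i ∈ s, f i) = ∑ i ∈ s, lam p l (f i) := by
  classical
  induction s using Finset.induction_on with
  | empty => simp [lam_zero]
  | insert a s ha ih => rw [Finset.sum_insert ha, Finset.sum_insert ha, lam_add, ih]

lemma lam_X_pow {l m : ℕ} (hl : l < p) (hm : m < p) (c : (ZMod p)⟦X⟧) :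
    lam p l (PowerSeries.X ^ m * c ^ p) = if l = m then c else 0 := by
  ext n
  rw [lam, coeff_mk, coeff_X_pow_mul', ps_pow, PowerSeries.coeff_expand]
  by_cases h : l = m
  · subst h
    simp [hp.out.pos]
  · rw [if_neg h]
    split_ifs with h1 h2
    · exfalso
      obtain ⟨k, hk⟩ := h2
      apply h
      have e : p * n + l = p * k + m := by omega
      have := congrArg (· % p) e
      simpa [Nat.mul_add_mod, Nat.mod_eq_of_lt hl, Nat.mod_eq_of_lt hm] using this
    · simp
    · simp

lemma lam_decomp (b : (ZMod p)⟦X⟧) :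
    b = ∑ m : Fin p, PowerSeries.X ^ (m : ℕ) * (lam p m b) ^ p := by
  have key : ∀ n l, l < p → PowerSeries.coeff (p * n + l)
      (∑ m : Fin p, PowerSeries.X ^ (m : ℕ) * (lam p m b) ^ p) = PowerSeries.coeff (p * n + l) b := by
    intro n l hl
    have : lam p l (∑ m : Fin p, PowerSeries.X ^ (m : ℕ) * (lam p m b) ^ p) = lam p l b := by
      rw [lam_sum]
      simp only [lam_X_pow hl (Fin.is_lt _)]
      rw [Finset.sum_eq_single (⟨l, hl⟩ : Fin p)]
      · simp
      · intro m _ hm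
        rw [if_neg]
        rintro rfl
        exact hm rfl
      · simp
    have := congrArg (PowerSeries.coeff n) this
    simpa [lam] using this
  ext d
  rw [← Nat.div_add_mod d p]
  exact (key _ _ (Nat.mod_lt _ hp.out.pos)).symm

lemma lam_mul {l : ℕ} (hl : l < p) (a b : (ZMod p)⟦X⟧) : lam p l (a ^ p * b) = a * lam p l b := by
  have : a ^ p * b = ∑ m : Fin p, PowerSeries.X ^ (m : ℕ) * (a * lam p m b) ^ p := by
    conv_lhs => rw [lam_decomp b]
    rw [Finset.mul_sum]
    refine Finset.sum_congr rfl fun m _ => ?_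
    ring
  rw [this, lam_sum]
  simp only [lam_X_pow hl (Fin.is_lt _)]
  rw [Finset.sum_eq_single (⟨l, hl⟩ : Fin p)]
  · simp
  · intro m _ hm
    rw [if_neg]
    rintro rfl
    exact hm rfl
  · simp

lemma exists_lam_ne (b : (ZMod p)⟦X⟧) (hb : b ≠ 0) : ∃ l < p, lam p l b ≠ 0 := by
  by_contra! h
  apply hb
  rw [lam_decomp b]
  apply Finset.sum_eq_zero
  intro m _
  rw [h m m.2, zero_pow hp.out.ne_zero, mul_zero]

lemma lam_poly (l : ℕ) (D : Polynomial (ZMod p)) :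
    ∃ D' : Polynomial (ZMod p), (D' : (ZMod p)⟦X⟧) = lam p l D ∧ p * D'.natDegree ≤ D.natDegree := by
  have hcoef : ∀ n, D.natDegree < n → PowerSeries.coeff n (lam p l D) = 0 := by
    intro n hn
    rw [lam, coeff_mk, Polynomial.coeff_coe]
    apply Polynomial.coeff_eq_zero_of_natDegree_lt
    have := Nat.le_mul_of_pos_left n hp.out.pos
    omega
  have e : ((trunc (D.natDegree + 1) (lam p l D) : Polynomial (ZMod p)) : (ZMod p)⟦X⟧) = lam p l D := by
    ext n
    rw [Polynomial.coeff_coe, coeff_trunc]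
    split_ifs with h
    · rfl
    · exact (hcoef n (by omega)).symm
  refine ⟨_, e, ?_⟩
  by_contra! h
  set D' := trunc (D.natDegree + 1) (lam p l D)
  have h0 : D' ≠ 0 := by
    intro h0; rw [h0] at h; simp at h
  have h1 : D'.coeff D'.natDegree ≠ 0 := Polynomial.leadingCoeff_ne_zero.2 h0
  apply h1
  rw [← Polynomial.coeff_coe, e, lam, coeff_mk, Polynomial.coeff_coe]
  apply Polynomial.coeff_eq_zero_of_natDegree_lt
  omega

lemma ore_reduce (f : (ZMod p)⟦X⟧) (d : ℕ) : ∀ (A : ℕ → Polynomial (ZMod p)),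
    (∃ i < d, A i ≠ 0) → ∑ i ∈ Finset.range d, (A i : (ZMod p)⟦X⟧) * f ^ p ^ i = 0 →
    ∃ (d : ℕ) (A : ℕ → Polynomial (ZMod p)), A 0 ≠ 0 ∧
      ∑ i ∈ Finset.range (d + 1), (A i : (ZMod p)⟦X⟧) * f ^ p ^ i = 0 := by
  induction d with
  | zero => rintro A ⟨i, hi, -⟩; omega
  | succ d ih =>
    rintro A ⟨i, hi, hA⟩ hsum
    by_cases h0 : A 0 = 0
    · obtain ⟨j, rfl⟩ : ∃ j, i = j + 1 := Nat.exists_eq_succ_of_ne_zero (by rintro rfl; exact hA h0)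
      obtain ⟨l, hl, hlne⟩ := exists_lam_ne (A (j+1) : (ZMod p)⟦X⟧) (by simpa using hA)
      choose B hB hBd using fun i => lam_poly l (A (i + 1))
      refine ih B ⟨j, by omega, ?_⟩ ?_
      · intro h; apply hlne; rw [← hB, h]; simp
      · rw [Finset.sum_range_succ', h0] at hsum
        simp only [Polynomial.coe_zero, zero_mul, add_zero] at hsum
        have := congrArg (lam p l) hsum
        rw [lam_zero, lam_sum] at this
        rw [← this]
        refine Finset.sum_congr rfl fun i _ => ?_
        rw [hB, pow_succ, pow_mul, mul_comm _ ((f ^ p ^ i) ^ p), lam_mul hl, mul_comm]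
    · exact ⟨d, A, h0, hsum⟩

lemma exists_ore {F k : Type*} [Field k] [Field F] [Algebra (Polynomial (ZMod p)) k]
    [IsFractionRing (Polynomial (ZMod p)) k]
    [Algebra k F] [Algebra (Polynomial (ZMod p)) F] [IsScalarTower (Polynomial (ZMod p)) k F]
    [Algebra (ZMod p)⟦X⟧ F] [IsScalarTower (Polynomial (ZMod p)) (ZMod p)⟦X⟧ F]
    (hinj : Function.Injective (algebraMap (ZMod p)⟦X⟧ F))
    (f : (ZMod p)⟦X⟧) (hf : IsAlgebraic k (algebraMap _ F f)) :
    ∃ (d : ℕ) (A : ℕ → Polynomial (ZMod p)), A 0 ≠ 0 ∧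
      ∑ i ∈ Finset.range (d + 1), (A i : (ZMod p)⟦X⟧) * f ^ p ^ i = 0 := by
  set y := algebraMap _ F f with hy
  have hfd : FiniteDimensional k (IntermediateField.adjoin k {y}) :=
    IntermediateField.adjoin.finiteDimensional hf.isIntegral
  have hnl : ¬ LinearIndependent k (fun i : ℕ => y ^ p ^ i) := by
    intro h
    let z : ℕ → IntermediateField.adjoin k {y} := fun i =>
      ⟨y, IntermediateField.mem_adjoin_simple_self k y⟩ ^ p ^ i
    have hz : LinearIndependent k z := by
      apply LinearIndependent.of_comp (IntermediateField.adjoin k {y}).val.toLinearMap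
      exact h
    have := hz.finite
    exact Infinite.not_finite (α := ℕ) this
  rw [← LinearIndependent.iff_fractionRing (Polynomial (ZMod p)) k, linearIndependent_iff'] at hnl
  push Not at hnl
  obtain ⟨s, g, hg, i, hi, hgi⟩ := hnl
  classical
  refine ore_reduce f (s.sup id + 1) (fun i => if i ∈ s then g i else 0)
    ⟨i, ?_, by simpa [hi] using hgi⟩ ?_
  · exact Nat.lt_succ_of_le (Finset.le_sup (f := id) hi)
  · apply hinj
    rw [map_zero, ← hg, map_sum]
    symm
    apply Finset.sum_subset_zero_on_sdiff
    · intro j hj; exact Finset.mem_range.2 (Nat.lt_succ_of_le (Finset.le_sup (f := id) hj))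
    · intro j hj; simp [(Finset.mem_sdiff.1 hj).2]
    · intro j hj
      rw [if_pos hj, map_mul, map_pow, Algebra.smul_def, IsScalarTower.algebraMap_apply _ (ZMod p)⟦X⟧ F]
      rfl

def TSet (f : (ZMod p)⟦X⟧) (d : ℕ) (A : ℕ → Polynomial (ZMod p)) (N : ℕ) : Set (ZMod p)⟦X⟧ :=
  {h | ∃ D : ℕ → Polynomial (ZMod p), (∀ i, (D i).natDegree ≤ N) ∧
    (A 0 : (ZMod p)⟦X⟧) * h = ∑ i ∈ Finset.range (d + 1), (D i : (ZMod p)⟦X⟧) * f ^ p ^ i}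

lemma TSet_finite (f : (ZMod p)⟦X⟧) (d : ℕ) (A : ℕ → Polynomial (ZMod p)) (N : ℕ) (h0 : A 0 ≠ 0) :
    (TSet f d A N).Finite := by
  have h0' : (A 0 : (ZMod p)⟦X⟧) ≠ 0 := by simpa using h0
  choose D hD1 hD2 using fun h : TSet f d A N => h.2
  have : Finite (TSet f d A N) := by
    apply Finite.of_injective (β := Fin (d+1) → Fin (N+1) → ZMod p)
      (fun h i n => (D h i).coeff n)
    intro h h' e
    apply Subtype.ext
    apply mul_left_cancel₀ h0'
    rw [hD2, hD2]
    refine Finset.sum_congr rfl fun i hi => ?_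
    congr 2
    ext n
    by_cases hn : n < N + 1
    · exact congrFun (congrFun e ⟨i, Finset.mem_range.1 hi⟩) ⟨n, hn⟩
    · rw [Polynomial.coeff_eq_zero_of_natDegree_lt, Polynomial.coeff_eq_zero_of_natDegree_lt]
      · have := hD1 h' i; omega
      · have := hD1 h i; omega
  exact Set.toFinite _

lemma TSet_lam (f : (ZMod p)⟦X⟧) (d : ℕ) (A : ℕ → Polynomial (ZMod p)) (B : ℕ)
    (hB : ∀ i ≤ d, (A i).natDegree ≤ B)
    (hA : ∑ i ∈ Finset.range (d + 1), (A i : (ZMod p)⟦X⟧) * f ^ p ^ i = 0)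
    {l : ℕ} (hl : l < p) (h : (ZMod p)⟦X⟧) (hh : h ∈ TSet f d A (2 * B)) :
    lam p l h ∈ TSet f d A (2 * B) := by
  obtain ⟨D, hD1, hD2⟩ := hh
  obtain ⟨q, hq⟩ : ∃ q, p = q + 2 := ⟨p - 2, by have := hp.out.two_le; omega⟩
  let C : ℕ → Polynomial (ZMod p) := fun i => A 0 ^ (q + 1) * D (i + 1) - A 0 ^ q * D 0 * A (i + 1)
  have hC : ∀ i < d, (C i).natDegree ≤ p * (2 * B) := by
    intro i hi
    have h1 : (A 0 ^ (q + 1) * D (i + 1)).natDegree ≤ (q + 1) * B + 2 * B :=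
      Polynomial.natDegree_mul_le_of_le (Polynomial.natDegree_pow_le_of_le _ (hB 0 (by omega))) (hD1 _)
    have h2 : (A 0 ^ q * D 0 * A (i + 1)).natDegree ≤ q * B + 2 * B + B :=
      Polynomial.natDegree_mul_le_of_le (Polynomial.natDegree_mul_le_of_le
        (Polynomial.natDegree_pow_le_of_le _ (hB 0 (by omega))) (hD1 _)) (hB _ (by omega))
    refine (Polynomial.natDegree_sub_le _ _).trans (max_le (h1.trans ?_) (h2.trans ?_)) <;>
    · rw [hq]; nlinarith [Nat.zero_le (q * B)]
  choose E hE hEd using fun i => lam_poly l (C i)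
  refine ⟨fun i => if i < d then E i else 0, ?_, ?_⟩
  · intro i
    dsimp only
    split_ifs with hi
    · have := (hEd i).trans (hC i hi)
      exact Nat.le_of_mul_le_mul_left this hp.out.pos
    · simp
  · rw [Finset.sum_range_succ]
    dsimp only
    rw [if_neg (lt_irrefl d), Polynomial.coe_zero, zero_mul, add_zero]
    rw [← lam_mul hl]
    have key : (A 0 : (ZMod p)⟦X⟧) ^ p * h =
        ∑ i ∈ Finset.range d, (f ^ p ^ i) ^ p * (C i : (ZMod p)⟦X⟧) := by
      rw [Finset.sum_range_succ'] at hA hD2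
      rw [pow_zero, pow_one] at hA hD2
      have e1 : (A 0 : (ZMod p)⟦X⟧) ^ p * h = (A 0 : (ZMod p)⟦X⟧) ^ (q + 1) * (A 0 * h) := by
        rw [← mul_assoc, ← pow_succ]
        congr 2
      rw [e1, hD2]
      have e2 : (A 0 : (ZMod p)⟦X⟧) * f = - ∑ i ∈ Finset.range d, (A (i+1) : (ZMod p)⟦X⟧) * f ^ p ^ (i+1) := by
        linear_combination hA
      have e3 : (A 0 : (ZMod p)⟦X⟧) ^ (q + 1) * (D 0 * f) = A 0 ^ q * D 0 * (A 0 * f) := by ring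
      rw [mul_add, e3, e2, mul_neg, Finset.mul_sum, Finset.mul_sum, ← sub_eq_add_neg, ← Finset.sum_sub_distrib]
      refine Finset.sum_congr rfl fun i _ => ?_
      have e4 : (C i : (ZMod p)⟦X⟧) = A 0 ^ (q + 1) * D (i + 1) - A 0 ^ q * D 0 * A (i + 1) := by
        simp [C]
      rw [e4, ← pow_mul, ← pow_succ]
      ring
    rw [key, lam_sum]
    refine Finset.sum_congr rfl fun i hi => ?_
    rw [lam_mul hl, if_pos (Finset.mem_range.1 hi), hE, mul_comm]

theorem christol (f : (ZMod p)⟦X⟧) (d : ℕ) (A : ℕ → Polynomial (ZMod p)) (h0 : A 0 ≠ 0)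
    (hA : ∑ i ∈ Finset.range (d + 1), (A i : (ZMod p)⟦X⟧) * f ^ p ^ i = 0) :
    IsKAutomatic p (fun n => PowerSeries.coeff n f) ∧
    ∀ l < p, ∃ D : ℕ → Polynomial (ZMod p),
    (A 0 : (ZMod p)⟦X⟧) * lam p l f = ∑ i ∈ Finset.range (d + 1), (D i : (ZMod p)⟦X⟧) * f ^ p ^ i := by
  classical
  obtain ⟨B, hB⟩ : ∃ B, ∀ i ≤ d, (A i).natDegree ≤ B :=
    ⟨(Finset.range (d+1)).sup fun i => (A i).natDegree, fun i hi =>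
      Finset.le_sup (f := fun i => (A i).natDegree) (Finset.mem_range.2 (by omega))⟩
  have hf : f ∈ TSet f d A (2 * B) := by
    refine ⟨fun i => if i = 0 then A 0 else 0, ?_, ?_⟩
    · intro i
      dsimp only
      split_ifs
      · have := hB 0 (by omega); omega
      · simp
    · rw [Finset.sum_eq_single 0]
      · simp
      · intro i _ hi; simp [hi]
      · simp
  constructor
  · have hker : ∀ i j, j < p ^ i → ∃ h ∈ TSet f d A (2 * B),
        ∀ n, PowerSeries.coeff (n * p ^ i + j) f = PowerSeries.coeff n h := by
      intro i
      induction i with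
      | zero =>
        intro j hj
        refine ⟨f, hf, fun n => ?_⟩
        have : j = 0 := by simpa using hj
        simp [this]
      | succ i ih =>
        intro j hj
        have hpi : 0 < p ^ i := pow_pos hp.out.pos _
        obtain ⟨h, hh, hc⟩ := ih (j % p ^ i) (Nat.mod_lt _ hpi)
        have hl : j / p ^ i < p := by
          rw [Nat.div_lt_iff_lt_mul hpi, mul_comm, ← pow_succ]; exact hj
        refine ⟨lam p (j / p ^ i) h, TSet_lam f d A B hB hA hl h hh, fun n => ?_⟩
        rw [lam, coeff_mk, ← hc]
        congr 2
        conv_lhs => rw [← Nat.div_add_mod j (p ^ i)]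
        ring
    refine ((TSet_finite f d A (2 * B) h0).image fun h n => PowerSeries.coeff n h).subset ?_
    rintro c ⟨i, j, hj, rfl⟩
    obtain ⟨h, hh, hc⟩ := hker i j hj
    exact ⟨h, hh, funext fun n => (hc n).symm⟩
  · intro l hl
    obtain ⟨D, -, hD⟩ := TSet_lam f d A B hB hA hl f hf
    exact ⟨D, hD⟩

end
end AutExp


namespace AutExp

lemma li_base {E F ι κ : Type*} [Field E] [Field F] [Algebra E F] [Fintype ι] (w : ι → κ → E)
    (hw : LinearIndependent E w) (g : ι → F) (hg : ∀ j, ∑ i, g i * algebraMap E F (w i j) = 0) :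
    ∀ i, g i = 0 := by
  classical
  let b := Module.Basis.ofVectorSpace E F
  have key : ∀ t i, b.repr (g i) t = 0 := by
    intro t
    have := Fintype.linearIndependent_iff.1 hw (fun i => b.repr (g i) t) ?_
    · exact this
    · ext j
      have h := congrArg (fun y => b.repr y t) (hg j)
      simp only [mul_comm (g _), ← Algebra.smul_def, map_sum, map_smul, map_zero] at h
      simp only [Finsupp.coe_finsetSum, Finset.sum_apply, Finsupp.smul_apply, smul_eq_mul, Finsupp.zero_apply] at h
      simp only [Finset.sum_apply, Pi.smul_apply, smul_eq_mul, Pi.zero_apply]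
      rw [← h]
      exact Finset.sum_congr rfl fun i _ => mul_comm _ _
  intro i
  apply b.repr.injective
  ext t
  simp [key t i]

/-- members of the E-span of an F-independent family, E-independent => F-independent -/
lemma li_span {E F Ω ι κ : Type*} [Field E] [Field F] [Field Ω] [Algebra E F] [Algebra F Ω]
    [Algebra E Ω] [IsScalarTower E F Ω] [Fintype ι] [Fintype κ] (s : κ → Ω)
    (hs : LinearIndependent F s) (l : ι → Ω) (hl : LinearIndependent E l)
    (e : ι → κ → E) (he : ∀ i, l i = ∑ j, e i j • s j) : LinearIndependent F l := by
  have hw : LinearIndependent E e := by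
    rw [Fintype.linearIndependent_iff]
    intro g hg
    apply Fintype.linearIndependent_iff.1 hl g
    simp only [he, Finset.smul_sum, smul_smul]
    rw [Finset.sum_comm]
    apply Finset.sum_eq_zero
    intro j _
    rw [← Finset.sum_smul]
    have := congrFun hg j
    simp only [Finset.sum_apply, Pi.smul_apply, smul_eq_mul, Pi.zero_apply] at this
    rw [this, zero_smul]
  rw [Fintype.linearIndependent_iff]
  intro g hg
  apply li_base e hw g
  apply Fintype.linearIndependent_iff.1 hs
  rw [← hg]
  simp only [he, Finset.smul_sum, Finset.sum_smul]
  rw [Finset.sum_comm]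
  refine Finset.sum_congr rfl fun i _ => Finset.sum_congr rfl fun j _ => ?_
  rw [mul_smul, algebraMap_smul]

lemma ld_sep {E F Ω ι : Type*} [Field E] [Field F] [Field Ω] [Algebra E F] [Algebra F Ω]
    [Algebra E Ω] [IsScalarTower E F Ω] [Fintype ι]
    (hac : ∀ f : F, IsIntegral E f → ∃ e, algebraMap E F e = f)
    (l : ι → Ω) (hl : LinearIndependent E l) (hsep : ∀ i, IsSeparable E (l i)) :
    LinearIndependent F l := by
  classical
  let L : IntermediateField E Ω := IntermediateField.adjoin E (Set.range l)
  have hfd : FiniteDimensional E L := by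
    apply IntermediateField.finiteDimensional_adjoin
    rintro _ ⟨i, rfl⟩
    exact (hsep i).isIntegral
  have hS : Algebra.IsSeparable E L := by
    rw [IntermediateField.isSeparable_adjoin_iff_isSeparable]
    rintro _ ⟨i, rfl⟩
    exact hsep i
  let pb := Field.powerBasisOfFiniteOfSeparable E L
  have hint : IsIntegral E (pb.gen : Ω) := (IsIntegral.of_finite E pb.gen).algebraMap
  have hmin : minpoly F (pb.gen : Ω) = (minpoly E (pb.gen : Ω)).map (algebraMap E F) := by
    have hd : minpoly F (pb.gen : Ω) ∣ (minpoly E (pb.gen : Ω)).map (algebraMap E F) :=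
      minpoly.dvd_map_of_isScalarTower E F _
    have hint' : IsIntegral F (pb.gen : Ω) := hint.tower_top
    obtain ⟨q, hq⟩ := integralClosure.mem_lifts_of_monic_of_dvd_map F (minpoly.monic hint)
      (minpoly.monic hint') hd
    have : minpoly F (pb.gen : Ω) ∈ Polynomial.lifts (algebraMap E F) := by
      rw [Polynomial.lifts_iff_coeff_lifts]
      intro n
      obtain ⟨e, he⟩ := hac ((minpoly F (pb.gen : Ω)).coeff n) (by
        rw [← hq]; simp only [Polynomial.coe_mapRingHom, Polynomial.coeff_map]
        exact (q.coeff n).2)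
      exact ⟨e, he⟩
    obtain ⟨r, hr, hrd, hrm⟩ := Polynomial.lifts_and_natDegree_eq_and_monic this (minpoly.monic hint')
    have h1 : minpoly E (pb.gen : Ω) ∣ r := by
      apply minpoly.dvd
      have : Polynomial.aeval (pb.gen : Ω) (r.map (algebraMap E F)) = 0 := by
        rw [hr]; exact minpoly.aeval _ _
      rwa [Polynomial.aeval_map_algebraMap] at this
    apply Polynomial.eq_of_monic_of_associated (minpoly.monic hint') ((minpoly.monic hint).map _)
    apply associated_of_dvd_dvd hd
    rw [← hr]
    exact Polynomial.map_dvd _ h1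
  have hs : LinearIndependent F (fun i : Fin pb.dim => (pb.gen : Ω) ^ (i : ℕ)) := by
    have h1 := linearIndependent_pow (K := F) (pb.gen : Ω)
    rw [hmin, Polynomial.natDegree_map] at h1
    have h2 : (minpoly E (pb.gen : Ω)).natDegree = pb.dim := by
      rw [← pb.natDegree_minpoly]
      congr 1
      exact (minpoly.algebraMap_eq (algebraMap L Ω).injective pb.gen)
    rwa [h2] at h1
  have hm : ∀ i, l i ∈ L := fun i => IntermediateField.subset_adjoin _ _ ⟨i, rfl⟩
  refine li_span _ hs l hl (fun i j => pb.basis.repr ⟨l i, hm i⟩ j) ?_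
  intro i
  have := congrArg (algebraMap L Ω) (pb.basis.sum_repr ⟨l i, hm i⟩)
  simp only [map_sum, PowerBasis.coe_basis] at this
  refine Eq.trans this.symm ?_
  refine Finset.sum_congr rfl fun j _ => ?_
  rw [Algebra.smul_def, Algebra.smul_def, map_mul, map_pow, ← IsScalarTower.algebraMap_apply]
  rfl

lemma ld_aux {E F Ω : Type*} [Field E] [Field F] [Field Ω] [Algebra E F] [Algebra F Ω]
    [Algebra E Ω] [IsScalarTower E F Ω] (p : ℕ) [Fact p.Prime] [CharP Ω p] [CharP F p] [CharP E p]
    (hac : ∀ f : F, IsIntegral E f → ∃ e, algebraMap E F e = f)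
    (t : E) (hpb : ∀ e : E, ∃ c : Fin p → E, e = ∑ k : Fin p, t ^ (k : ℕ) * c k ^ p)
    (hpi : ∀ c : Fin p → F, ∑ k : Fin p, algebraMap E F t ^ (k : ℕ) * c k ^ p = 0 → ∀ k, c k = 0)
    (n : ℕ) : ∀ (m : ℕ) (l : Fin m → Ω) (_ : LinearIndependent E l)
      (_ : ∀ i, IsSeparable E (l i ^ p ^ n)), LinearIndependent F l := by
  classical
  have hp0 : p ≠ 0 := (Fact.out : p.Prime).ne_zero
  induction n with
  | zero => intro m l hl hs; exact ld_sep hac l hl (by simpa using hs)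
  | succ n ih =>
    intro m l hl hsep
    obtain ⟨b, hb1, hb2, hb3⟩ := exists_linearIndependent E (Set.range fun i => l i ^ p)
    have hbf : b.Finite := (Set.finite_range _).subset hb1
    have : Fintype b := hbf.fintype
    let e := (Fintype.equivFin b).symm
    have hbF : LinearIndependent F (fun j : Fin (Fintype.card b) => (e j : Ω)) := by
      apply ih
      · exact hb3.comp e e.injective
      · intro j
        obtain ⟨i, hi⟩ := hb1 (e j).2
        rw [← hi, ← pow_mul, ← pow_succ']
        exact hsep i
    have hcoef : ∀ i, ∃ c : Fin (Fintype.card b) → E, l i ^ p = ∑ j, c j • (e j : Ω) := by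
      intro i
      have h1 : l i ^ p ∈ Submodule.span E (Set.range fun j : Fin (Fintype.card b) => (e j : Ω)) := by
        have : (Set.range fun j : Fin (Fintype.card b) => (e j : Ω)) = b := by
          ext y; constructor
          · rintro ⟨j, rfl⟩; exact (e j).2
          · intro hy; exact ⟨e.symm ⟨y, hy⟩, by simp⟩
        rw [this, hb2]
        exact Submodule.subset_span ⟨i, rfl⟩
      obtain ⟨c, hc⟩ := (Submodule.mem_span_range_iff_exists_fun E).1 h1
      exact ⟨c, hc.symm⟩
    choose c hc using hcoef
    choose d hd using fun i j => hpb (c i j)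
    have hinj : ∀ y : Ω, y ^ p = 0 → y = 0 := fun y hy => pow_eq_zero_iff hp0 |>.1 hy
    have hw : LinearIndependent E (fun i (jk : Fin (Fintype.card b) × Fin p) => d i jk.1 jk.2) := by
      rw [Fintype.linearIndependent_iff]
      intro g hg
      apply Fintype.linearIndependent_iff.1 hl g
      apply hinj
      rw [sum_pow_char]
      have : ∀ i, (g i • l i) ^ p = ∑ j, (g i ^ p * c i j) • (e j : Ω) := by
        intro i
        rw [smul_pow, hc, Finset.smul_sum]
        simp only [smul_smul]
      simp only [this]
      rw [Finset.sum_comm]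
      apply Finset.sum_eq_zero
      intro j _
      rw [← Finset.sum_smul]
      have : ∑ i, g i ^ p * c i j = 0 := by
        simp only [hd, Finset.mul_sum]
        rw [Finset.sum_comm]
        apply Finset.sum_eq_zero
        intro k _
        have h := congrFun hg (j, k)
        simp only [Finset.sum_apply, Pi.smul_apply, smul_eq_mul, Pi.zero_apply] at h
        have h2 : ∑ i, g i ^ p * (t ^ (k : ℕ) * d i j k ^ p) = t ^ (k : ℕ) * (∑ i, g i * d i j k) ^ p := by
          rw [sum_pow_char, Finset.mul_sum]
          refine Finset.sum_congr rfl fun i _ => ?_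
          ring
        rw [h2, h, zero_pow hp0, mul_zero]
      rw [this, zero_smul]
    rw [Fintype.linearIndependent_iff]
    intro g hg
    apply li_base _ hw g
    rintro ⟨j, k⟩
    have h1 : ∑ j, (∑ i, g i ^ p * algebraMap E F (c i j)) • (e j : Ω) = 0 := by
      have h := congrArg (· ^ p) hg
      simp only [sum_pow_char, zero_pow hp0, smul_pow, hc, Finset.smul_sum] at h
      rw [← h]
      simp only [Finset.sum_smul]
      rw [Finset.sum_comm]
      refine Finset.sum_congr rfl fun i _ => Finset.sum_congr rfl fun j _ => ?_
      rw [mul_smul, algebraMap_smul]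
    have h2 := Fintype.linearIndependent_iff.1 hbF _ h1 j
    apply hpi (fun k => ∑ i, g i * algebraMap E F (d i j k)) _ k
    rw [← h2]
    simp only [hd, map_sum, sum_pow_char, Finset.mul_sum]
    rw [Finset.sum_comm]
    refine Finset.sum_congr rfl fun i _ => Finset.sum_congr rfl fun k _ => ?_
    simp only [map_mul, map_pow]
    ring

lemma exists_sep_pow {E Ω : Type*} [Field E] [Field Ω] [Algebra E Ω] (p : ℕ) [Fact p.Prime]
    [CharP E p] (y : Ω) (hy : IsIntegral E y) : ∃ n, IsSeparable E (y ^ p ^ n) := by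
  have : ExpChar E p := ExpChar.prime Fact.out
  obtain ⟨g, hg, n, hgy⟩ := (minpoly.irreducible hy).hasSeparableContraction p
  refine ⟨n, ?_⟩
  apply hg.of_dvd
  apply minpoly.dvd
  have := minpoly.aeval E y
  rw [← hgy, Polynomial.expand_aeval] at this
  exact this

theorem ld {E F Ω : Type*} [Field E] [Field F] [Field Ω] [Algebra E F] [Algebra F Ω]
    [Algebra E Ω] [IsScalarTower E F Ω] (p : ℕ) [Fact p.Prime] [CharP Ω p] [CharP F p] [CharP E p]
    (hac : ∀ f : F, IsIntegral E f → ∃ e, algebraMap E F e = f)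
    (t : E) (hpb : ∀ e : E, ∃ c : Fin p → E, e = ∑ k : Fin p, t ^ (k : ℕ) * c k ^ p)
    (hpi : ∀ c : Fin p → F, ∑ k : Fin p, algebraMap E F t ^ (k : ℕ) * c k ^ p = 0 → ∀ k, c k = 0)
    (m : ℕ) (l : Fin m → Ω) (hl : LinearIndependent E l)
    (hint : ∀ i, IsIntegral E (l i)) : LinearIndependent F l := by
  choose n hn using fun i => exists_sep_pow p (l i) (hint i)
  obtain ⟨N, hN⟩ : ∃ N, ∀ i, n i ≤ N := ⟨Finset.univ.sup n, fun i => Finset.le_sup (Finset.mem_univ i)⟩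
  refine ld_aux p hac t hpb hpi N m l hl fun i => ?_
  obtain ⟨k, hk⟩ := Nat.exists_eq_add_of_le (hN i)
  rw [hk, pow_add, pow_mul, ← mem_separableClosure_iff]
  exact pow_mem (mem_separableClosure_iff.2 (hn i)) _

/-- the coefficients of an algebraic element in an algebraic F-basis lie in E -/
theorem coef_mem {E F Ω : Type*} [Field E] [Field F] [Field Ω] [Algebra E F] [Algebra F Ω]
    [Algebra E Ω] [IsScalarTower E F Ω] (p : ℕ) [Fact p.Prime] [CharP Ω p] [CharP F p] [CharP E p]
    (hac : ∀ f : F, IsIntegral E f → ∃ e, algebraMap E F e = f)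
    (t : E) (hpb : ∀ e : E, ∃ c : Fin p → E, e = ∑ k : Fin p, t ^ (k : ℕ) * c k ^ p)
    (hpi : ∀ c : Fin p → F, ∑ k : Fin p, algebraMap E F t ^ (k : ℕ) * c k ^ p = 0 → ∀ k, c k = 0)
    (m : ℕ) (l : Fin m → Ω) (hl : LinearIndependent F l)
    (hint : ∀ i, IsIntegral E (l i)) (x : Ω) (hx : IsIntegral E x)
    (f : Fin m → F) (hf : x = ∑ i, f i • l i) (i : Fin m) : ∃ e, algebraMap E F e = f i := by
  by_cases hxs : x ∈ Submodule.span E (Set.range l)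
  · obtain ⟨c, hc⟩ := (Submodule.mem_span_range_iff_exists_fun E).1 hxs
    refine ⟨c i, ?_⟩
    have : ∑ i, (algebraMap E F (c i) - f i) • l i = 0 := by
      simp only [sub_smul, Finset.sum_sub_distrib, algebraMap_smul, hc]
      rw [← hf, sub_self]
    exact sub_eq_zero.1 (Fintype.linearIndependent_iff.1 hl _ this i)
  · exfalso
    have hlE : LinearIndependent E l := LinearIndependent.restrict_scalars (R := E)
      (by intro a b h; simpa [Algebra.smul_def] using h) hl
    have h1 := linearIndependent_finCons.2 ⟨hlE, hxs⟩
    have h2 := ld p hac t hpb hpi _ _ h1 (by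
      intro i; refine Fin.cases ?_ ?_ i
      · simpa using hx
      · intro i; simpa using hint i)
    apply (linearIndependent_finCons.1 h2).2
    rw [hf]
    exact Submodule.sum_mem _ fun i _ => Submodule.smul_mem _ _ (Submodule.subset_span ⟨i, rfl⟩)

end AutExp


namespace AutExp
section
variable {p : ℕ} [hp : Fact p.Prime]
open scoped LaurentSeries PowerSeries RatFunc

lemma laurent_shift (e : (ZMod p)⸨X⸩) : ∃ N : ℕ, ∀ n ≥ N, ∃ g : (ZMod p)⟦X⟧,
    algebraMap (ZMod p)⟦X⟧ (ZMod p)⸨X⸩ PowerSeries.X ^ n * e = algebraMap _ _ g := by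
  obtain ⟨⟨g, s⟩, h⟩ := IsLocalization.surj (Submonoid.powers (PowerSeries.X : (ZMod p)⟦X⟧)) e
  obtain ⟨N, hN⟩ := s.2
  refine ⟨N, fun n hn => ⟨PowerSeries.X ^ (n - N) * g, ?_⟩⟩
  dsimp only at h hN
  rw [map_mul, ← h, ← hN, map_pow, map_pow, mul_comm e, ← mul_assoc, ← pow_add, Nat.sub_add_cancel hn]

lemma algX_ne : algebraMap (ZMod p)⟦X⟧ (ZMod p)⸨X⸩ PowerSeries.X ≠ 0 := by
  rw [Ne, map_eq_zero_iff _ (IsFractionRing.injective _ _)]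
  exact PowerSeries.X_ne_zero

lemma laurent_indep (c : Fin p → (ZMod p)⸨X⸩)
    (hc : ∑ k : Fin p, algebraMap (ZMod p)⟦X⟧ (ZMod p)⸨X⸩ PowerSeries.X ^ (k : ℕ) * c k ^ p = 0) (k : Fin p) :
    c k = 0 := by
  choose N hN using fun k => laurent_shift (c k)
  let n := Finset.univ.sup N
  choose g hg using fun k => hN k n (Finset.le_sup (Finset.mem_univ k))
  have h1 : ∑ k : Fin p, PowerSeries.X ^ (k : ℕ) * g k ^ p = 0 := by
    apply IsFractionRing.injective (ZMod p)⟦X⟧ (ZMod p)⸨X⸩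
    rw [map_zero, map_sum, ← mul_zero ((algebraMap (ZMod p)⟦X⟧ (ZMod p)⸨X⸩ PowerSeries.X ^ n) ^ p), ← hc, Finset.mul_sum]
    refine Finset.sum_congr rfl fun k _ => ?_
    rw [map_mul, map_pow, map_pow, ← hg]
    ring
  have h2 := congrArg (lam p k) h1
  rw [lam_sum, lam_zero] at h2
  simp only [lam_X_pow k.2 (Fin.is_lt _)] at h2
  rw [Finset.sum_eq_single k] at h2
  · rw [if_pos rfl] at h2
    have := hg k
    rw [h2, map_zero] at this
    exact (mul_eq_zero.1 this).resolve_left (pow_ne_zero _ algX_ne)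
  · intro m _ hm
    rw [if_neg]
    intro h; exact hm (Fin.ext h.symm)
  · simp

section
variable {F k : Type*} [Field k] [Field F] [Algebra (Polynomial (ZMod p)) k]
    [IsFractionRing (Polynomial (ZMod p)) k]
    [Algebra k F] [Algebra (Polynomial (ZMod p)) F] [IsScalarTower (Polynomial (ZMod p)) k F]
    [Algebra (ZMod p)⟦X⟧ F] [IsScalarTower (Polynomial (ZMod p)) (ZMod p)⟦X⟧ F]

lemma algX_alg : IsAlgebraic k (algebraMap (ZMod p)⟦X⟧ F PowerSeries.X) := by
  have : algebraMap (ZMod p)⟦X⟧ F PowerSeries.X =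
      algebraMap k F (algebraMap (Polynomial (ZMod p)) _ Polynomial.X) := by
    rw [← IsScalarTower.algebraMap_apply, IsScalarTower.algebraMap_apply (Polynomial (ZMod p)) (ZMod p)⟦X⟧]
    congr 1
    exact Polynomial.coe_X.symm
  rw [this]
  exact isAlgebraic_algebraMap _

lemma lam_alg (hinj : Function.Injective (algebraMap (ZMod p)⟦X⟧ F)) (f : (ZMod p)⟦X⟧) (hf : IsAlgebraic k (algebraMap _ F f)) (l : ℕ)
    (hl : l < p) : IsAlgebraic k (algebraMap _ F (lam p l f)) := by
  obtain ⟨d, A, h0, hA⟩ := exists_ore hinj f hf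
  obtain ⟨D, hD⟩ := (christol f d A h0 hA).2 l hl
  have hpoly : ∀ P : Polynomial (ZMod p), algebraMap (ZMod p)⟦X⟧ F P ∈
      algebraicClosure k F := by
    intro P
    have : algebraMap (ZMod p)⟦X⟧ F P =
        algebraMap k F (algebraMap (Polynomial (ZMod p)) _ P) := by
      rw [← IsScalarTower.algebraMap_apply, IsScalarTower.algebraMap_apply (Polynomial (ZMod p)) (ZMod p)⟦X⟧]
      rfl
    rw [this]
    exact IntermediateField.algebraMap_mem _ _
  rw [← mem_algebraicClosure_iff]
  have hne : algebraMap (ZMod p)⟦X⟧ F (A 0) ≠ 0 := by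
    rw [Ne, map_eq_zero_iff _ hinj]
    simpa using h0
  have h1 := congrArg (algebraMap (ZMod p)⟦X⟧ F) hD
  rw [map_mul, map_sum] at h1
  rw [eq_div_of_mul_eq hne ((mul_comm _ _).trans h1)]
  refine div_mem (sum_mem fun i _ => ?_) (hpoly _)
  rw [map_mul, map_pow]
  exact mul_mem (hpoly _) (pow_mem (mem_algebraicClosure_iff.2 hf) _)

theorem coef_automatic_abs {Ω : Type*} [Field Ω] [CharP Ω p] [CharP F p] [Algebra F Ω]
    [Algebra k Ω] [IsScalarTower k F Ω]
    (hinj : Function.Injective (algebraMap (ZMod p)⟦X⟧ F))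
    (shift : ∀ e : F, ∃ N : ℕ, ∀ n ≥ N, ∃ g : (ZMod p)⟦X⟧,
      algebraMap (ZMod p)⟦X⟧ F PowerSeries.X ^ n * e = algebraMap _ _ g)
    (indep : ∀ c : Fin p → F,
      ∑ k : Fin p, algebraMap (ZMod p)⟦X⟧ F PowerSeries.X ^ (k : ℕ) * c k ^ p = 0 → ∀ k, c k = 0)
    (m : ℕ) (γ : Fin m → Ω) (hγ : LinearIndependent F γ)
    (hγa : ∀ i, IsAlgebraic k (γ i)) (x : Ω) (hx : IsAlgebraic k x)
    (f : Fin m → (ZMod p)⟦X⟧) (hf : x = ∑ i, (algebraMap _ F (f i)) • γ i) (i : Fin m) :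
    IsKAutomatic p (fun n => PowerSeries.coeff n (f i)) := by
  let E := algebraicClosure k F
  have : IsScalarTower k E Ω := by
    apply IsScalarTower.of_algebraMap_eq'
    rw [IsScalarTower.algebraMap_eq E F Ω, RingHom.comp_assoc,
      ← IsScalarTower.algebraMap_eq k E F,
      ← IsScalarTower.algebraMap_eq]
  have hc' : CharP E p := (RingHom.charP_iff (algebraMap E F) (algebraMap E F).injective p).2 inferInstance
  have hXne : algebraMap (ZMod p)⟦X⟧ F PowerSeries.X ≠ 0 := by
    rw [Ne, map_eq_zero_iff _ hinj]
    exact PowerSeries.X_ne_zero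
  obtain ⟨e, he⟩ := coef_mem (E := E) (F := F) (Ω := Ω) p
    (by
      intro g hg
      have : IsAlgebraic k g := by
        have hE : Algebra.IsAlgebraic k E := algebraicClosure.isAlgebraic _ _
        exact hg.isAlgebraic.restrictScalars _
      exact ⟨⟨g, mem_algebraicClosure_iff.2 this⟩, rfl⟩)
    ⟨_, mem_algebraicClosure_iff.2 (algX_alg (k := k) (F := F))⟩
    (by
      rintro ⟨e, he⟩
      rw [mem_algebraicClosure_iff] at he
      obtain ⟨N, hN⟩ := shift e
      obtain ⟨g, hg⟩ := hN (N * p) (Nat.le_mul_of_pos_right _ hp.out.pos)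
      have hga : IsAlgebraic k (algebraMap _ F g) := by
        rw [← hg]; exact ((algX_alg (k := k) (F := F)).pow _).mul he
      refine ⟨fun j => ⟨algebraMap _ F (lam p j g) / algebraMap (ZMod p)⟦X⟧ F PowerSeries.X ^ N, ?_⟩, ?_⟩
      · exact div_mem (mem_algebraicClosure_iff.2 (lam_alg hinj g hga j j.2))
          (mem_algebraicClosure_iff.2 ((algX_alg (k := k) (F := F)).pow _))
      · apply Subtype.ext
        rw [show (⟨e, mem_algebraicClosure_iff.2 he⟩ : E).1 = e from rfl]
        have h1 := congrArg (algebraMap (ZMod p)⟦X⟧ F) (lam_decomp g)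
        rw [← hg, map_sum] at h1
        have hX : algebraMap (ZMod p)⟦X⟧ F PowerSeries.X ^ (N * p) ≠ 0 := pow_ne_zero _ hXne
        apply mul_left_cancel₀ hX
        rw [h1]
        change _ = _ * algebraMap E F _
        rw [map_sum, Finset.mul_sum]
        refine Finset.sum_congr rfl fun j _ => ?_
        rw [map_mul, map_mul, map_pow, map_pow, map_pow, map_pow]
        change _ = _ * (_ * (algebraMap _ F (lam p j g) / algebraMap (ZMod p)⟦X⟧ F PowerSeries.X ^ N) ^ p)
        rw [div_pow, ← pow_mul]
        field_simp
        exact mul_comm _ _)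
    indep
    m γ hγ (fun i => ((hγa i).tower_top E).isIntegral) x (hx.tower_top E).isIntegral
    (fun i => algebraMap _ F (f i)) hf i
  have h1 : IsAlgebraic k (algebraMap _ F (f i)) := by
    rw [← he]; exact mem_algebraicClosure_iff.1 e.2
  obtain ⟨d, A, h0, hA⟩ := exists_ore hinj (f i) h1
  exact (christol (f i) d A h0 hA).1
end

instance : IsScalarTower (Polynomial (ZMod p)) (ZMod p)⟦X⟧ (ZMod p)⸨X⸩ :=
  IsScalarTower.of_algebraMap_eq fun P => by
    simp; rfl


lemma alg_of_subfield {k Ω : Type*} [Field k] [Field Ω] [Algebra k Ω] (L : Subfield Ω)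
    (hL : L ≤ (algebraMap k Ω).fieldRange) (y : Ω) (hy : IsAlgebraic L y) : IsAlgebraic k y := by
  rw [isAlgebraic_iff_isIntegral] at hy ⊢
  obtain ⟨P, hP, h⟩ := hy
  have hex : ∀ a : L, ∃ b : k, algebraMap k Ω b = a := fun a => hL a.2
  obtain ⟨Q, hQ, hd, hm⟩ := Polynomial.lifts_and_degree_eq_and_monic (f := algebraMap k Ω)
    (p := P.map L.subtype) (by
      rw [Polynomial.lifts_iff_coeff_lifts]
      intro n
      rw [Polynomial.coeff_map]
      exact hex _) (hP.map _)
  refine ⟨Q, hm, ?_⟩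
  rw [Polynomial.eval₂_eq_eval_map, hQ, Polynomial.eval_map]
  exact h

theorem coef_automatic {Ω : Type*} [Field Ω] [CharP Ω p] (ev : (ZMod p)⟦X⟧ →+* Ω)
    (hev : Function.Injective ev) (m : ℕ) (γ : Fin m → Ω)
    (hγ : ∀ g : Fin m → (ZMod p)⟦X⟧, ∑ i, ev (g i) * γ i = 0 → ∀ i, g i = 0)
    (hγa : ∀ i, IsAlgebraic (Subfield.closure {ev PowerSeries.X}) (γ i)) (x : Ω)
    (hx : IsAlgebraic (Subfield.closure {ev PowerSeries.X}) x)
    (f : Fin m → (ZMod p)⟦X⟧) (hf : x = ∑ i, ev (f i) * γ i) (i : Fin m) :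
    IsKAutomatic p (fun n => PowerSeries.coeff n (f i)) := by
  let φ : (ZMod p)⸨X⸩ →+* Ω := IsFractionRing.lift (A := (ZMod p)⟦X⟧) hev
  have hφ : ∀ g, φ (algebraMap _ _ g) = ev g := fun g => IsFractionRing.lift_algebraMap hev g
  letI : Algebra (ZMod p)⸨X⸩ Ω := φ.toAlgebra
  letI : Algebra (RatFunc (ZMod p)) Ω := (φ.comp (algebraMap (RatFunc (ZMod p)) (ZMod p)⸨X⸩)).toAlgebra
  haveI : IsScalarTower (RatFunc (ZMod p)) (ZMod p)⸨X⸩ Ω := IsScalarTower.of_algebraMap_eq' rfl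
  haveI : CharP (ZMod p)⸨X⸩ p := (RingHom.charP_iff φ φ.injective p).2 inferInstance
  have hL : Subfield.closure {ev PowerSeries.X} ≤ (algebraMap (RatFunc (ZMod p)) Ω).fieldRange := by
    rw [Subfield.closure_le, Set.singleton_subset_iff]
    refine ⟨algebraMap (Polynomial (ZMod p)) _ Polynomial.X, ?_⟩
    change φ (algebraMap (RatFunc (ZMod p)) (ZMod p)⸨X⸩ _) = _
    rw [← IsScalarTower.algebraMap_apply, IsScalarTower.algebraMap_apply (Polynomial (ZMod p)) (ZMod p)⟦X⟧, hφ]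
    congr 1
    exact Polynomial.coe_X
  refine coef_automatic_abs (F := (ZMod p)⸨X⸩) (k := RatFunc (ZMod p)) (IsFractionRing.injective _ _)
    laurent_shift laurent_indep m γ ?_ (fun i => alg_of_subfield _ hL _ (hγa i)) x
    (alg_of_subfield _ hL _ hx) f ?_ i
  · rw [Fintype.linearIndependent_iff]
    intro c hc
    choose N hN using fun k => laurent_shift (c k)
    let n := Finset.univ.sup N
    choose g hg using fun k => hN k n (Finset.le_sup (Finset.mem_univ k))
    have h1 := hγ g (by
      have h2 := congrArg (fun z => φ (algebraMap (ZMod p)⟦X⟧ (ZMod p)⸨X⸩ PowerSeries.X ^ n) * z) hc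
      simp only [Finset.mul_sum, mul_zero] at h2
      rw [← h2]
      refine Finset.sum_congr rfl fun k _ => ?_
      rw [← hφ, ← hg, map_mul, Algebra.smul_def, ← mul_assoc]
      rfl)
    intro j
    have h3 := hg j
    rw [h1 j, map_zero] at h3
    exact (mul_eq_zero.1 h3).resolve_left (pow_ne_zero _ algX_ne)
  · rw [hf]
    refine Finset.sum_congr rfl fun k _ => ?_
    rw [← hφ, Algebra.smul_def]
    rfl
end
end AutExp

namespace AutExp
section
variable {p : ℕ} [hp : Fact p.Prime] {Kv : Type*} [Field Kv] [Valued Kv ZM0]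
open scoped PowerSeries Topology
open Filter

lemma nonarch : NonarchimedeanRing Kv where
  is_nonarchimedean := by
    intro U hU
    obtain ⟨γ, hγ⟩ := Valued.mem_nhds_zero.1 hU
    exact ⟨⟨Valuation.ltAddSubgroup Valued.v.restrict γ, Valued.isOpen_ball Kv γ.1⟩, hγ⟩

lemma approx (K : Subfield Kv) (hd : Dense (K : Set Kv)) (π : Kv) (hπ0 : π ≠ 0) (y : Kv) :
    ∃ c ∈ K, (Valued.v (y - c) : ZM0) ≤ Valued.v π := by
  have hcont : Continuous (fun z : Kv => (y - z) / π) := (continuous_const.sub continuous_id).div_const π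
  have ho : IsOpen ((fun z : Kv => (y - z) / π) ⁻¹' ((Valued.v : Valuation Kv ZM0).integer : Set Kv)) :=
    (Valued.isOpen_integer Kv).preimage (hcont)
  obtain ⟨c, hc, hcK⟩ := hd.inter_open_nonempty _ ho ⟨y, by
    change Valued.v ((y - y) / π) ≤ (1 : ZM0)
    simp⟩
  refine ⟨c, hcK, ?_⟩
  have h : Valued.v ((y - c) / π) ≤ (1 : ZM0) := hc
  rw [map_div₀] at h
  exact (div_le_one₀ (zero_lt_iff.2 ((Valuation.ne_zero_iff _).2 hπ0))).1 h

variable [CharP Kv p]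

lemma v_const_le (c : ZMod p) : (Valued.v (ZMod.castHom (dvd_refl p) Kv c) : ZM0) ≤ 1 := by
  obtain ⟨n, rfl⟩ := ZMod.natCast_zmod_surjective c
  rw [map_natCast]
  exact (natCast_mem (Valued.v : Valuation Kv ZM0).integer n : _)

lemma v_const (c : ZMod p) (hc : c ≠ 0) : (Valued.v (ZMod.castHom (dvd_refl p) Kv c) : ZM0) = 1 := by
  apply le_antisymm (v_const_le c)
  have h : (Valued.v (ZMod.castHom (dvd_refl p) Kv c) : ZM0) * Valued.v (ZMod.castHom (dvd_refl p) Kv c⁻¹) = 1 := by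
    rw [← map_mul, ← map_mul, mul_inv_cancel₀ hc, map_one, map_one]
  rw [← h]
  exact mul_le_of_le_one_right' (v_const_le _)

omit [CharP Kv p] in
lemma tsum_mul_aux (f g : ℕ → Kv) (hf : Summable f) (hg : Summable g) :
    ((∑' n, f n) * ∑' n, g n) = ∑' n, ∑ kl ∈ Finset.HasAntidiagonal.antidiagonal n, f kl.1 * g kl.2 := by
  have := nonarch (Kv := Kv)
  have h := Summable.mul_of_nonarchimedean hf hg
  exact hf.tsum_mul_tsum_eq_tsum_sum_antidiagonal hg h

theorem exists_ev (hcomp : CompleteSpace Kv) (π : Kv) (hπ : (Valued.v π : ZM0) < 1) :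
    ∃ ev : (ZMod p)⟦X⟧ →+* Kv, ∀ f, HasSum
      (fun n => ZMod.castHom (dvd_refl p) Kv (PowerSeries.coeff n f) * π ^ n) (ev f) := by
  have := nonarch (Kv := Kv)
  set φ := ZMod.castHom (dvd_refl p) Kv
  have hs : ∀ f : (ZMod p)⟦X⟧, Summable (fun n => φ (PowerSeries.coeff n f) * π ^ n) := by
    intro f
    apply NonarchimedeanAddGroup.summable_of_tendsto_cofinite_zero
    rw [Nat.cofinite_eq_atTop]
    have h0 := Valued.tendsto_zero_pow_of_v_lt_one hπ
    intro U hU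
    obtain ⟨γ, hγ⟩ := Valued.mem_nhds_zero.1 hU
    have h1 := h0 ((Valued.isOpen_ball Kv γ.1).mem_nhds (by simp))
    change ∀ᶠ n in atTop, _ ∈ U
    change ∀ᶠ n in atTop, π ^ n ∈ _ at h1
    filter_upwards [h1] with n hn
    apply hγ
    change Valued.v.restrict (π ^ n) < γ.1 at hn
    change Valued.v.restrict _ < γ.1
    refine lt_of_le_of_lt ?_ hn
    rw [map_mul]
    refine mul_le_of_le_one_left' ?_
    rw [Valuation.restrict_le_one_iff]
    exact v_const_le _
  refine ⟨RingHom.mk' ⟨⟨fun f => ∑' n, φ (PowerSeries.coeff n f) * π ^ n, ?_⟩, ?_⟩ ?_, fun f => (hs f).hasSum⟩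
  · rw [tsum_eq_single 0]
    · simp
    · intro n hn
      simp [PowerSeries.coeff_one, hn]
  · intro f g
    dsimp only
    rw [tsum_mul_aux _ _ (hs f) (hs g)]
    congr 1
    ext n
    rw [PowerSeries.coeff_mul, map_sum, Finset.sum_mul]
    refine Finset.sum_congr rfl fun ij hij => ?_
    rw [← Finset.HasAntidiagonal.mem_antidiagonal.1 hij, map_mul, pow_add]
    ring
  · intro f g
    simp only [MonoidHom.coe_mk, OneHom.coe_mk]
    rw [← (hs f).tsum_add (hs g)]
    congr 1
    ext n
    rw [map_add, map_add, add_mul]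

variable (π : Kv) (hπ : (Valued.v π : ZM0) < 1) (ev : (ZMod p)⟦X⟧ →+* Kv)
    (hev : ∀ f, HasSum
      (fun n => ZMod.castHom (dvd_refl p) Kv (PowerSeries.coeff n f) * π ^ n) (ev f))
include hev

lemma ev_X : ev PowerSeries.X = π := by
  refine (hev _).unique ?_
  convert hasSum_single (f := fun n => ZMod.castHom (dvd_refl p) Kv (PowerSeries.coeff n PowerSeries.X) * π ^ n) 1 ?_ using 1
  · simp
  · intro n hn
    simp [PowerSeries.coeff_X, hn]

lemma ev_C (c : ZMod p) : ev (PowerSeries.C c) = ZMod.castHom (dvd_refl p) Kv c := by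
  rw [← RingHom.comp_apply]
  congr 1
  exact Subsingleton.elim _ _

include hπ in
lemma ev_le (f : (ZMod p)⟦X⟧) : (Valued.v (ev f) : ZM0) ≤ 1 := by
  refine (Valued.isClosed_integer Kv).mem_of_tendsto (hev f) (Eventually.of_forall fun s => ?_)
  refine sum_mem fun n _ => mul_mem (v_const_le _) (pow_mem ?_ _)
  exact hπ.le

lemma ev_decomp (f : (ZMod p)⟦X⟧) : ∃ g : (ZMod p)⟦X⟧, (∀ d, PowerSeries.coeff (d + 1) f = PowerSeries.coeff d g) ∧
    ev f = π * ev g + ZMod.castHom (dvd_refl p) Kv (PowerSeries.coeff 0 f) := by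
  refine ⟨PowerSeries.mk fun d => PowerSeries.coeff (d + 1) f, fun d => by simp, ?_⟩
  conv_lhs => rw [PowerSeries.eq_X_mul_shift_add_const f]
  rw [map_add, map_mul, ev_X π ev hev, ev_C π ev hev]
  simp

include hπ in
lemma ev_indep (hπ0 : π ≠ 0) (n : ℕ) (c : Fin n → Kv) (hc1 : ∀ i, (Valued.v (c i) : ZM0) ≤ 1)
    (hc : ∀ a : Fin n → ZMod p, (Valued.v (∑ i, ZMod.castHom (dvd_refl p) Kv (a i) * c i) : ZM0) ≤ Valued.v π → ∀ i, a i = 0)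
    (g : Fin n → (ZMod p)⟦X⟧) (hg : ∑ i, ev (g i) * c i = 0) (i : Fin n) : g i = 0 := by
  ext d
  rw [map_zero]
  induction d generalizing g i with
  | zero =>
    choose g' hg' h using fun i => ev_decomp π ev hev (g i)
    refine hc (fun i => PowerSeries.coeff 0 (g i)) ?_ i
    have h2 : ∑ i, ZMod.castHom (dvd_refl p) Kv (PowerSeries.coeff 0 (g i)) * c i = - (π * ∑ i, ev (g' i) * c i) := by
      rw [eq_neg_iff_add_eq_zero, ← hg, Finset.mul_sum, ← Finset.sum_add_distrib]
      refine Finset.sum_congr rfl fun i _ => ?_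
      rw [h i]; ring
    rw [h2, Valuation.map_neg, map_mul]
    refine mul_le_of_le_one_right' ?_
    exact Valuation.map_sum_le _ fun i _ => (map_mul _ _ _).trans_le (mul_le_one' (ev_le π hπ ev hev _) (hc1 i))
  | succ d ih =>
    choose g' hg' h using fun i => ev_decomp π ev hev (g i)
    rw [hg']
    refine ih g' ?_ i
    have h0 : ∀ i, PowerSeries.coeff 0 (g i) = 0 := by
      refine hc (fun i => PowerSeries.coeff 0 (g i)) ?_
      have h2 : ∑ i, ZMod.castHom (dvd_refl p) Kv (PowerSeries.coeff 0 (g i)) * c i = - (π * ∑ i, ev (g' i) * c i) := by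
        rw [eq_neg_iff_add_eq_zero, ← hg, Finset.mul_sum, ← Finset.sum_add_distrib]
        refine Finset.sum_congr rfl fun i _ => ?_
        rw [h i]; ring
      rw [h2, Valuation.map_neg, map_mul]
      refine mul_le_of_le_one_right' ?_
      exact Valuation.map_sum_le _ fun i _ => (map_mul _ _ _).trans_le (mul_le_one' (ev_le π hπ ev hev _) (hc1 i))
    have h3 : π * ∑ i, ev (g' i) * c i = 0 := by
      rw [← hg, Finset.mul_sum]
      refine Finset.sum_congr rfl fun i _ => ?_
      rw [h i, h0 i, map_zero]; ring
    exact (mul_eq_zero.1 h3).resolve_left hπ0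

include hπ in
lemma ev_inj (hπ0 : π ≠ 0) : Function.Injective ev := by
  rw [injective_iff_map_eq_zero]
  intro g hg
  refine ev_indep π hπ ev hev hπ0 1 (fun _ => 1) (fun _ => by simp) ?_ (fun _ => g) (by simpa using hg) 0
  intro a ha i
  by_contra h
  rw [Fin.eq_zero i] at h
  rw [Fin.sum_univ_one, mul_one, v_const _ h] at ha
  exact absurd ha (not_le.2 hπ)
end
end AutExp

namespace AutExp
section
variable {p : ℕ} [hp : Fact p.Prime] {Ω : Type*} [Field Ω]
open scoped PowerSeries

lemma alg_trans (L₁ L₂ : Subfield Ω) (h : ∀ z ∈ L₁, IsAlgebraic L₂ z) (y : Ω) (hy : IsAlgebraic L₁ y) :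
    IsAlgebraic L₂ y := by
  have h1 : IsAlgebraic (algebraicClosure L₂ Ω) y := by
    refine alg_of_subfield L₁ ?_ y hy
    intro z hz
    exact ⟨⟨z, mem_algebraicClosure_iff.2 (h z hz)⟩, rfl⟩
  have : Algebra.IsAlgebraic L₂ (algebraicClosure L₂ Ω) := algebraicClosure.isAlgebraic _ _
  exact h1.restrictScalars _

lemma alg_closure (L : Subfield Ω) (x₀ : Ω) (h : IsAlgebraic L x₀) :
    ∀ z ∈ Subfield.closure {x₀}, IsAlgebraic L z := by
  intro z hz
  have h2 : Subfield.closure {x₀} ≤ (algebraicClosure L Ω).toSubfield := by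
    rw [Subfield.closure_le, Set.singleton_subset_iff]
    exact mem_algebraicClosure_iff.2 h
  exact mem_algebraicClosure_iff.1 (h2 hz)

lemma alg_K (K : Subfield Ω) (x₀ : Ω)
    (hdeg : degOver (Subfield.closure {x₀}) (K : Set Ω) < Cardinal.aleph0) :
    ∀ z ∈ K, IsAlgebraic (Subfield.closure {x₀}) z := by
  intro z hz
  by_contra htr
  have hli : LinearIndependent (Subfield.closure {x₀}) (fun n : ℕ => z ^ n) := by
    have h1 := (Polynomial.basisMonomials (Subfield.closure {x₀})).linearIndependent.map'
      (Polynomial.aeval z).toLinearMap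
      (LinearMap.ker_eq_bot.2 (transcendental_iff_injective.1 htr))
    have heq : (fun n : ℕ => z ^ n) = (Polynomial.aeval z).toLinearMap ∘
        (Polynomial.basisMonomials (Subfield.closure {x₀})) := by
      ext n
      simp
    rw [heq]
    exact h1
  have hfin : Module.Finite (Subfield.closure {x₀}) (Submodule.span (Subfield.closure {x₀}) (K : Set Ω)) :=
    Module.rank_lt_aleph0_iff.1 hdeg
  let w : ℕ → Submodule.span (Subfield.closure {x₀}) (K : Set Ω) := fun n =>
    ⟨z ^ n, Submodule.subset_span (pow_mem hz n)⟩
  have hw : LinearIndependent (Subfield.closure {x₀}) w := by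
    refine LinearIndependent.of_comp (Submodule.subtype _) ?_
    exact hli
  have := hw.finite
  exact not_finite ℕ

lemma exchange [CharP Ω p] (x₀ π : Ω) (hx₀ : Transcendental (⊥ : Subfield Ω) x₀)
    (hπt : ∀ P : Polynomial (ZMod p), P.eval₂ (ZMod.castHom (dvd_refl p) Ω) π = 0 → P = 0)
    (h : IsAlgebraic (Subfield.closure {x₀}) π) : IsAlgebraic (Subfield.closure {π}) x₀ := by
  let : Algebra (ZMod p) Ω := ZMod.algebra Ω p
  have : CharP (⊥ : Subfield Ω) p :=
    (RingHom.charP_iff (algebraMap (⊥ : Subfield Ω) Ω) (RingHom.injective (algebraMap (⊥ : Subfield Ω) Ω)) p).2 inferInstance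
  have h1 : Transcendental (ZMod p) x₀ := by
    rintro ⟨P, hP, h⟩
    refine hx₀ ⟨P.map (ZMod.castHom (dvd_refl p) (⊥ : Subfield Ω)), ?_, ?_⟩
    · rwa [Ne, Polynomial.map_eq_zero]
    · rw [Polynomial.aeval_def, Polynomial.eval₂_map, ← h, Polynomial.aeval_def]
      congr 1
      exact Subsingleton.elim _ _
  have h2 : Transcendental (ZMod p) π := by
    rintro ⟨P, hP, h⟩
    exact hP (hπt P h)
  have h3 : IsAlgebraic (IntermediateField.adjoin (ZMod p) {x₀}) π := by
    refine alg_of_subfield _ ?_ _ h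
    rw [Subfield.closure_le, Set.singleton_subset_iff]
    exact ⟨⟨x₀, IntermediateField.mem_adjoin_simple_self _ _⟩, rfl⟩
  have h4 : IsAlgebraic (IntermediateField.adjoin (ZMod p) {π}) x₀ :=
    IntermediateField.isAlgebraic_adjoin_iff.mpr (.adjoin_singleton h1 h2
      (IntermediateField.isAlgebraic_adjoin_iff.mp h3))
  refine alg_of_subfield (IntermediateField.adjoin (ZMod p) {π}).toSubfield ?_ _ h4
  rw [IntermediateField.adjoin_toSubfield, Subfield.closure_le]
  rintro z (⟨c, rfl⟩ | hz)
  · obtain ⟨n, rfl⟩ := ZMod.natCast_zmod_surjective c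
    exact ⟨n, by simp⟩
  · exact ⟨⟨z, Subfield.subset_closure hz⟩, rfl⟩

lemma fin_bound (L K : Subfield Ω) (x₀ : Ω) (hx₀ : IsAlgebraic L x₀)
    (hdeg : degOver (Subfield.closure {x₀}) (K : Set Ω) < Cardinal.aleph0) :
    ∃ N : ℕ, ∀ n (c : Fin n → Ω), (∀ i, c i ∈ K) → LinearIndependent L c → n ≤ N := by
  have hfin : Module.Finite (Subfield.closure {x₀}) (Submodule.span (Subfield.closure {x₀}) (K : Set Ω)) :=
    Module.rank_lt_aleph0_iff.1 hdeg
  obtain ⟨S, hS⟩ := (Module.Finite.iff_fg.1 hfin : (Submodule.span (Subfield.closure {x₀}) (K : Set Ω)).FG)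
  have hfd : FiniteDimensional L (IntermediateField.adjoin L {x₀}) :=
    IntermediateField.adjoin.finiteDimensional hx₀.isIntegral
  let W : Submodule (IntermediateField.adjoin L {x₀}) Ω := Submodule.span _ (S : Set Ω)
  have hW : Module.Finite (IntermediateField.adjoin L {x₀}) W :=
    Module.Finite.span_of_finite _ S.finite_toSet
  have hWL : Module.Finite L W := Module.Finite.trans (IntermediateField.adjoin L {x₀}) W
  have hKW : ∀ z ∈ K, z ∈ W := by
    intro z hz
    have h1 : z ∈ Submodule.span (Subfield.closure {x₀}) (S : Set Ω) := by
      rw [hS]; exact Submodule.subset_span hz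
    clear hz
    have hle : Subfield.closure {x₀} ≤ (IntermediateField.adjoin L {x₀}).toSubfield := by
      rw [Subfield.closure_le, Set.singleton_subset_iff]
      exact IntermediateField.mem_adjoin_simple_self _ _
    induction h1 using Submodule.span_induction with
    | mem x h => exact Submodule.subset_span h
    | zero => exact zero_mem _
    | add x y _ _ hx hy => exact add_mem hx hy
    | smul a x _ hx => exact W.smul_mem ⟨a.1, hle a.2⟩ hx
  refine ⟨Module.finrank L W, fun n c hc hli => ?_⟩
  let w : Fin n → W := fun i => ⟨c i, hKW _ (hc i)⟩
  have hw : LinearIndependent L w :=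
    LinearIndependent.of_comp ((Submodule.subtype W).restrictScalars L) hli
  simpa using hw.fintype_card_le_finrank

lemma li_subfield (ev : (ZMod p)⟦X⟧ →+* Ω) (hev : Function.Injective ev) (n : ℕ) (γ : Fin n → Ω)
    (hγ : ∀ g : Fin n → (ZMod p)⟦X⟧, ∑ i, ev (g i) * γ i = 0 → ∀ i, g i = 0) :
    LinearIndependent (Subfield.closure {ev PowerSeries.X}) γ := by
  have hsub : ∀ y ∈ Subring.closure {ev PowerSeries.X}, ∃ Y, ev Y = y := by
    intro y hy
    have : Subring.closure {ev PowerSeries.X} ≤ ev.range := by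
      rw [Subring.closure_le, Set.singleton_subset_iff]
      exact ⟨_, rfl⟩
    exact this hy
  have hfr : ∀ l : Subfield.closure {ev PowerSeries.X}, ∃ Y Z, Z ≠ 0 ∧ ev Z * l.1 = ev Y := by
    intro l
    obtain ⟨y, hy, z, hz, h⟩ := Subfield.mem_closure_iff.1 l.2
    obtain ⟨Y, rfl⟩ := hsub y hy
    obtain ⟨Z, rfl⟩ := hsub z hz
    by_cases h0 : Z = 0
    · refine ⟨0, 1, one_ne_zero, ?_⟩
      rw [h0, map_zero, div_zero] at h
      rw [← h]; simp
    · refine ⟨Y, Z, h0, ?_⟩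
      rw [← h, mul_div_cancel₀]
      rwa [Ne, map_eq_zero_iff _ hev]
  choose Y Z hZ hYZ using hfr
  rw [Fintype.linearIndependent_iff]
  intro l hl i
  have h1 := hγ (fun i => (∏ j ∈ Finset.univ.erase i, Z (l j)) * Y (l i)) (by
    have h2 := congrArg (fun t => ev (∏ j, Z (l j)) * t) hl
    simp only [Finset.mul_sum, mul_zero] at h2
    rw [← h2]
    refine Finset.sum_congr rfl fun i _ => ?_
    rw [← Finset.mul_prod_erase _ _ (Finset.mem_univ i), map_mul, map_mul, ← hYZ]
    change _ = _ * ((l i).1 * γ i)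
    ring) i
  have h3 : Y (l i) = 0 := (mul_eq_zero.1 h1).resolve_left
    (Finset.prod_ne_zero_iff.2 fun j _ => hZ _)
  have h4 := hYZ (l i)
  rw [h3, map_zero] at h4
  refine Subtype.ext ((mul_eq_zero.1 h4).resolve_left ?_)
  exact fun h => hZ _ ((map_eq_zero_iff _ hev).1 h)
end
end AutExp

namespace AutExp
section
open scoped PowerSeries

lemma aut_comb {α β : Type*} (k m : ℕ) (f : Fin m → ℕ → β) (hf : ∀ i, IsKAutomatic k (f i))
    (Φ : (Fin m → β) → α) : IsKAutomatic k (fun n => Φ (fun i => f i n)) := by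
  have h := Set.Finite.pi' (fun i => hf i)
  refine (h.image (fun (c : Fin m → ℕ → β) n => Φ (fun i => c i n))).subset ?_
  rintro c ⟨i, j, hij, rfl⟩
  exact ⟨fun l n => f l (n * k ^ i + j), fun l => ⟨i, j, hij, rfl⟩, rfl⟩

variable {p : ℕ} [hp : Fact p.Prime] {Kv : Type*} [Field Kv] [Valued Kv ZM0] [CharP Kv p]

lemma exists_sub (π : Kv) (Γ : Set Kv) (hΓ : IsCompleteSetOfReps π Γ)
    (hadd : ∀ μ ∈ Γ, ∀ ν ∈ Γ, μ + ν ∈ Γ) [Module (ZMod p) Kv] :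
    ∃ G : Submodule (ZMod p) Kv, (G : Set Kv) = Γ := by
  have hn : ∀ (n : ℕ), ∀ γ ∈ Γ, (n + 1) • γ ∈ Γ := by
    intro n γ hγ
    induction n with
    | zero => simpa using hγ
    | succ n ih => rw [succ_nsmul]; exact hadd _ ih _ hγ
  have h0 : (0 : Kv) ∈ Γ := by
    obtain ⟨γ, ⟨hγ, -⟩, -⟩ := hΓ.2 0 (by simp)
    have := hn (p - 1) γ hγ
    rwa [Nat.sub_add_cancel hp.out.one_le, nsmul_eq_mul, CharP.cast_eq_zero, zero_mul] at this
  refine ⟨{ carrier := Γ, add_mem' := fun {a b} ha hb => hadd a ha b hb, zero_mem' := h0,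
            smul_mem' := ?_ }, rfl⟩
  intro c γ hγ
  obtain ⟨n, rfl⟩ := ZMod.natCast_zmod_surjective c
  rw [Nat.cast_smul_eq_nsmul]
  cases n with
  | zero => simpa using h0
  | succ n => exact hn n γ hγ

lemma cond_of_li (π : Kv) (Γ : Set Kv) (hΓ : IsCompleteSetOfReps π Γ) [Algebra (ZMod p) Kv]
    (G : Submodule (ZMod p) Kv) (hG : (G : Set Kv) = Γ) (n : ℕ) (γ : Fin n → Kv) (hγ : ∀ i, γ i ∈ G)
    (hli : LinearIndependent (ZMod p) γ) (c : Fin n → Kv)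
    (hc : ∀ i, (Valued.v (γ i - c i) : ZM0) ≤ Valued.v π) (a : Fin n → ZMod p)
    (ha : (Valued.v (∑ i, ZMod.castHom (dvd_refl p) Kv (a i) * c i) : ZM0) ≤ Valued.v π) (i : Fin n) :
    a i = 0 := by
  have hal : algebraMap (ZMod p) Kv = ZMod.castHom (dvd_refl p) Kv := Subsingleton.elim _ _
  have hmem : ∑ i, a i • γ i ∈ G := sum_mem fun i _ => G.smul_mem _ (hγ i)
  have hmemΓ : ∑ i, a i • γ i ∈ Γ := by rw [← hG]; exact hmem
  have h0Γ : (0 : Kv) ∈ Γ := by rw [← hG]; exact G.zero_mem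
  have hv : (Valued.v (∑ i, a i • γ i) : ZM0) ≤ Valued.v π := by
    have : ∑ i, a i • γ i = ∑ i, ZMod.castHom (dvd_refl p) Kv (a i) * c i +
        ∑ i, ZMod.castHom (dvd_refl p) Kv (a i) * (γ i - c i) := by
      rw [← Finset.sum_add_distrib]
      refine Finset.sum_congr rfl fun i _ => ?_
      rw [Algebra.smul_def, hal]; ring
    rw [this]
    refine Valuation.map_add_le _ ha (Valuation.map_sum_le _ fun i _ => ?_)
    rw [map_mul]
    exact (mul_le_of_le_one_left' (v_const_le _)).trans (hc i)
  have heq := (hΓ.2 _ (hΓ.1 _ hmemΓ)).unique ⟨hmemΓ, by simp⟩ ⟨h0Γ, by simpa using hv⟩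
  exact Fintype.linearIndependent_iff.1 hli a heq i
end

theorem main {Kv : Type*} [Field Kv] [Valued Kv ZM0]
    (p : ℕ) [Fact p.Prime] (K : Subfield Kv)
    (hK : IsGlobalFunctionFieldCompletion p K)
    (π : Kv) (hπ0 : π ≠ 0) (hπ : Valued.v π < 1)
    (Γ : Set Kv) (hΓ : IsCompleteSetOfReps π Γ)
    (hadd : ∀ μ ∈ Γ, ∀ ν ∈ Γ, μ + ν ∈ Γ)
    (hπalg : IsAlgebraic ↥K π) (hΓalg : ∀ γ ∈ Γ, IsAlgebraic ↥K γ)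
    (x : Kv) (hx : IsAlgebraic ↥K x)
    (m : ℤ) (a : ℤ → Kv) (hexp : IsExpansion π Γ m a x) :
    IsKAutomatic p fun n : ℕ => a (m + n) := by
  have hchar := hK.charP
  obtain ⟨ev, hev⟩ := exists_ev (p := p) hK.complete π hπ
  obtain ⟨x₀, hx₀K, hx₀t, hdeg⟩ := hK.globalFunctionField
  have hevi := ev_inj π hπ ev hev hπ0
  have hX := ev_X π ev hev
  have hπt : ∀ P : Polynomial (ZMod p), P.eval₂ (ZMod.castHom (dvd_refl p) Kv) π = 0 → P = 0 := by
    intro P hP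
    have h1 : ev.comp (Polynomial.coeToPowerSeries.ringHom) =
        Polynomial.eval₂RingHom (ZMod.castHom (dvd_refl p) Kv) π := by
      apply Polynomial.ringHom_ext'
      · exact Subsingleton.elim _ _
      · simp [hX]
    have h2 := congrArg (fun g => g P) h1
    simp only [RingHom.comp_apply, Polynomial.coe_eval₂RingHom, hP] at h2
    have h3 := (map_eq_zero_iff _ hevi).1 h2
    simpa using h3
  have hKL := alg_K K x₀ hdeg
  have hx₀L : IsAlgebraic (Subfield.closure {π}) x₀ :=
    exchange x₀ π hx₀t hπt (alg_trans _ _ hKL π hπalg)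
  have algL : ∀ y, IsAlgebraic K y → IsAlgebraic (Subfield.closure {π}) y := fun y hy =>
    alg_trans _ _ (alg_closure _ x₀ hx₀L) y (alg_trans _ _ hKL y hy)
  let _ : Algebra (ZMod p) Kv := ZMod.algebra Kv p
  have hal : algebraMap (ZMod p) Kv = ZMod.castHom (dvd_refl p) Kv := Subsingleton.elim _ _
  obtain ⟨G, hG⟩ := exists_sub (p := p) π Γ hΓ hadd
  have hGmem : ∀ z, z ∈ G ↔ z ∈ Γ := fun z => by rw [← hG]; rfl
  have hfin : Module.Finite (ZMod p) G := by
    by_contra hinf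
    let b := Module.Basis.ofVectorSpace (ZMod p) G
    have hi : Infinite (Module.Basis.ofVectorSpaceIndex (ZMod p) G) := by
      by_contra hf
      rw [not_infinite_iff_finite] at hf
      exact hinf (Module.Finite.of_basis b)
    obtain ⟨N, hN⟩ := fin_bound _ K x₀ hx₀L hdeg
    let e := Infinite.natEmbedding (Module.Basis.ofVectorSpaceIndex (ZMod p) G)
    let γ : Fin (N + 1) → Kv := fun i => (b (e i) : Kv)
    have hli : LinearIndependent (ZMod p) γ :=
      ((b.linearIndependent.comp (fun i : Fin (N + 1) => e i)
        (e.injective.comp Fin.val_injective)).map' G.subtype (Submodule.ker_subtype G))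
    have hγm : ∀ i, γ i ∈ G := fun i => (b (e i)).2
    choose c hcK hc using fun i => approx K hK.dense π hπ0 (γ i)
    have h1 := hN (N + 1) c hcK (by
      rw [← hX]
      refine li_subfield ev hevi _ c ?_
      refine ev_indep π hπ ev hev hπ0 _ c ?_ (cond_of_li π Γ hΓ G hG _ γ hγm hli c hc)
      intro i
      have : c i = γ i - (γ i - c i) := by ring
      rw [this]
      exact Valuation.map_sub_le _ (hΓ.1 _ ((hGmem _).1 (hγm i))) ((hc i).trans hπ.le))
    omega
  let b := Module.finBasis (ZMod p) G
  set d := Module.finrank (ZMod p) G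
  let γ : Fin d → Kv := fun i => (b i : Kv)
  have hγm : ∀ i, γ i ∈ G := fun i => (b i).2
  have hli : LinearIndependent (ZMod p) γ :=
    b.linearIndependent.map' G.subtype (Submodule.ker_subtype G)
  have haG : ∀ n : ℕ, a (m + n) ∈ G := fun n => (hGmem _).2 (hexp.1 _ (by omega))
  let f : Fin d → PowerSeries (ZMod p) := fun i => PowerSeries.mk fun n => b.repr ⟨a (m + n), haG n⟩ i
  have haf : ∀ n : ℕ, a (m + n) = ∑ i, ZMod.castHom (dvd_refl p) Kv (PowerSeries.coeff n (f i)) * γ i := by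
    intro n
    have h1 := congrArg G.subtype (b.sum_repr ⟨a (m + n), haG n⟩)
    rw [map_sum] at h1
    change _ = a (m + n) at h1
    rw [← h1]
    refine Finset.sum_congr rfl fun i _ => ?_
    rw [map_smul, Algebra.smul_def, hal, PowerSeries.coeff_mk]
    rfl
  have hsum : x * π ^ (-m) = ∑ i, ev (f i) * γ i := by
    have h1 := hexp.2.mul_right (π ^ (-m))
    have h2 := hasSum_sum (s := Finset.univ) (fun i _ => (hev (f i)).mul_right (γ i))
    refine h1.unique ?_
    convert h2 using 1
    ext n
    rw [mul_assoc, ← zpow_add₀ hπ0, show m + (n : ℤ) + -m = n by ring, zpow_natCast, haf n, Finset.sum_mul]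
    refine Finset.sum_congr rfl fun i _ => ?_
    ring
  have hxalg : IsAlgebraic K (x * π ^ (-m)) := by
    have h1 : x * π ^ (-m) ∈ algebraicClosure K Kv :=
      mul_mem (mem_algebraicClosure_iff.2 hx) (zpow_mem (mem_algebraicClosure_iff.2 hπalg) _)
    exact mem_algebraicClosure_iff.1 h1
  have haut : ∀ i, IsKAutomatic p (fun n => PowerSeries.coeff n (f i)) := by
    refine coef_automatic ev hevi d γ ?_ ?_ _ ?_ f hsum
    · refine ev_indep π hπ ev hev hπ0 _ γ (fun i => hΓ.1 _ ((hGmem _).1 (hγm i))) ?_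
      exact cond_of_li π Γ hΓ G hG _ γ hγm hli γ (fun i => by simp)
    · rw [hX]; exact fun i => algL _ (hΓalg _ ((hGmem _).1 (hγm i)))
    · rw [hX]; exact algL _ hxalg
  have := aut_comb p d _ haut (fun t => ∑ i, ZMod.castHom (dvd_refl p) Kv (t i) * γ i)
  convert this using 2 with n
  exact haf n
end AutExp

/-- Suppose `Γ` is additively closed and `π` and all elements of `Γ` are
algebraic over `K`.  Then the digit sequence of the expansion of every algebraic
`x ∈ K_v` with respect to `(Γ, π)` is `p`-automatic. -/
theorem automatic_expansion_of_algebraic_of_addClosed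
    {Kv : Type*} [Field Kv] [Valued Kv ZM0]
    (p : ℕ) [Fact p.Prime] (K : Subfield Kv)
    (hK : IsGlobalFunctionFieldCompletion p K)
    (π : Kv) (hπ0 : π ≠ 0) (hπ : Valued.v π < 1)
    (Γ : Set Kv) (hΓ : IsCompleteSetOfReps π Γ)
    (hadd : ∀ μ ∈ Γ, ∀ ν ∈ Γ, μ + ν ∈ Γ)
    (hπalg : IsAlgebraic ↥K π) (hΓalg : ∀ γ ∈ Γ, IsAlgebraic ↥K γ)
    (x : Kv) (hx : IsAlgebraic ↥K x)
    (m : ℤ) (a : ℤ → Kv) (hexp : IsExpansion π Γ m a x) :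
    IsKAutomatic p fun n : ℕ => a (m + n) := by
  exact AutExp.main p K hK π hπ0 hπ Γ hΓ hadd hπalg hΓalg x hx m a hexp
end

section
/- Let Γ = {f₁, f₂} ⊆ 𝔽_2[[z]] be a complete residue system of 𝔽_2[[z]] modulo z (equivalently, f₁ and f₂ have distinct constant terms). Then the following are equivalent: (a) f₁ and f₂ are algebraic over 𝔽_2(z); (b) for every x ∈ 𝔽_2((z)), x is algebraic over 𝔽_2(z) if and only if the digit sequence {a_n}_{n≥m} of the expansion x = ∑_{n≥m} a_n zⁿ with a_n ∈ Γ is 2-automatic. -/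
/-!
**Theorem 3.8.**  Expansions in `𝔽₂[[z]]`-digit systems: for a complete residue
system `Γ = {f₁, f₂} ⊆ 𝔽₂[[z]]` modulo `z`, property B holds for `(Γ, z)` iff
`f₁` and `f₂` are algebraic over `𝔽₂(z)`.  Here `𝔽₂((z))` is the field of formal
Laurent series over `𝔽₂` (with its `z`-adic valued topology), `z` is the
variable, and power series are coerced into Laurent series.
-/

open scoped RatFunc

noncomputable section

abbrev PS := PowerSeries (ZMod 2)
abbrev LS := LaurentSeries (ZMod 2)
abbrev KK := RatFunc (ZMod 2)

lemma ps_coeff_sq (f : PS) (n : ℕ) :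
    PowerSeries.coeff n (f ^ 2) = if 2 ∣ n then PowerSeries.coeff (n / 2) f else 0 := by
  rw [pow_two, PowerSeries.coeff_mul_eq_coeff_trunc_mul_trunc (d := n) f f (Nat.lt_succ_self n),
    ← pow_two]
  rw [← Polynomial.coe_pow, Polynomial.coeff_coe, ← ZMod.expand_card,
    Polynomial.coeff_expand (by norm_num)]
  split_ifs with h
  · rw [PowerSeries.coeff_trunc, if_pos]
    omega
  · rfl

instance : CharP PS 2 := charP_of_injective_algebraMap (algebraMap (ZMod 2) PS).injective 2

instance : CharP LS 2 :=
  charP_of_injective_ringHom (f := HahnSeries.ofPowerSeries ℤ (ZMod 2))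
    HahnSeries.ofPowerSeries_injective 2

def Lam (s : ℕ) (f : PS) : PS := PowerSeries.mk fun n => PowerSeries.coeff (2 * n + s) f

lemma Lam_add (s : ℕ) (f g : PS) : Lam s (f + g) = Lam s f + Lam s g := by
  ext n; simp [Lam]

lemma Lam_zero (s : ℕ) : Lam s 0 = 0 := by
  ext n; simp [Lam]

lemma Lam_sum (s : ℕ) {ι : Type*} (t : Finset ι) (f : ι → PS) :
    Lam s (∑ i ∈ t, f i) = ∑ i ∈ t, Lam s (f i) :=
  map_sum (⟨⟨Lam s, Lam_zero s⟩, Lam_add s⟩ : PS →+ PS) f t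

lemma Lam_decomp (f : PS) : f = (Lam 0 f) ^ 2 + PowerSeries.X * (Lam 1 f) ^ 2 := by
  ext n
  rw [map_add, ps_coeff_sq]
  rcases n with _ | n
  · simp [Lam]
  · rw [PowerSeries.coeff_succ_X_mul, ps_coeff_sq]
    rcases Nat.even_or_odd' n with ⟨k, rfl | rfl⟩
    · rw [if_neg (by omega), if_pos (by omega)]
      simp [Lam]
    · rw [if_pos (by omega), if_neg (by omega)]
      simp only [Lam, PowerSeries.coeff_mk, add_zero]
      congr 2; omega

lemma Lam_zero_sq (f : PS) : Lam 0 (f ^ 2) = f := by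
  ext n; simp [Lam, ps_coeff_sq]

lemma Lam_one_sq (f : PS) : Lam 1 (f ^ 2) = 0 := by
  ext n; simp [Lam, ps_coeff_sq]

lemma Lam_zero_X_sq (f : PS) : Lam 0 (PowerSeries.X * f ^ 2) = 0 := by
  ext n
  rcases n with _ | n
  · simp [Lam]
  · simp only [Lam, PowerSeries.coeff_mk]
    rw [show 2 * (n + 1) + 0 = (2 * n + 1) + 1 by ring, PowerSeries.coeff_succ_X_mul, ps_coeff_sq,
      if_neg (by omega)]
    simp

lemma Lam_one_X_sq (f : PS) : Lam 1 (PowerSeries.X * f ^ 2) = f := by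
  ext n
  simp [Lam, PowerSeries.coeff_succ_X_mul, ps_coeff_sq]

lemma Lam_sq_mul (s : ℕ) (hs : s < 2) (g h : PS) : Lam s (g ^ 2 * h) = g * Lam s h := by
  have e : g ^ 2 * h = (g * Lam 0 h) ^ 2 + PowerSeries.X * (g * Lam 1 h) ^ 2 := by
    conv_lhs => rw [Lam_decomp h]
    ring
  rw [e, Lam_add]
  interval_cases s
  · rw [Lam_zero_sq, Lam_zero_X_sq, add_zero]
  · rw [Lam_one_sq, Lam_one_X_sq, zero_add]

def PolyN (N : ℕ) : Set PS := {P | ∀ n, N < n → PowerSeries.coeff n P = 0}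

lemma PolyN_finite (N : ℕ) : (PolyN N).Finite := by
  apply Set.Finite.of_injOn (f := fun P : PS => fun i : Fin (N + 1) => PowerSeries.coeff (i : ℕ) P)
    (t := Set.univ) (fun _ _ => Set.mem_univ _) _ Set.finite_univ
  intro P hP Q hQ h
  ext n
  by_cases hn : N < n
  · rw [hP n hn, hQ n hn]
  · exact congrFun h ⟨n, by omega⟩

lemma PolyN_add {N : ℕ} {P Q : PS} (hP : P ∈ PolyN N) (hQ : Q ∈ PolyN N) : P + Q ∈ PolyN N := by
  intro n hn
  rw [map_add, hP n hn, hQ n hn, add_zero]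

lemma PolyN_mul {N M : ℕ} {P Q : PS} (hP : P ∈ PolyN N) (hQ : Q ∈ PolyN M) :
    P * Q ∈ PolyN (N + M) := by
  intro n hn
  rw [PowerSeries.coeff_mul]
  apply Finset.sum_eq_zero
  rintro ⟨i, j⟩ hij
  rw [Finset.HasAntidiagonal.mem_antidiagonal] at hij
  dsimp only at hij ⊢
  by_cases hi : N < i
  · rw [hP i hi, zero_mul]
  · rw [hQ j (by omega), mul_zero]

lemma PolyN_mono {N M : ℕ} (h : N ≤ M) : PolyN N ⊆ PolyN M :=
  fun _ hP n hn => hP n (by omega)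

lemma PolyN_Lam {N : ℕ} {P : PS} (s : ℕ) (hP : P ∈ PolyN (2 * N)) : Lam s P ∈ PolyN N := by
  intro n hn
  simp only [Lam, PowerSeries.coeff_mk]
  exact hP _ (by omega)

def FrobRel (f : PS) (j : ℕ) : Prop :=
  ∃ (r N : ℕ) (B : ℕ → PS), B 0 ≠ 0 ∧ (∀ i, B i ∈ PolyN N) ∧
    ∑ i ∈ Finset.range (r + 1), B i * f ^ (2 ^ (i + j)) = 0

lemma Rel_pred (f : PS) (j : ℕ) (h : FrobRel f (j + 1)) : FrobRel f j := by
  obtain ⟨r, N, B, hB, hN, hsum⟩ := h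
  have : ∃ s < 2, Lam s (B 0) ≠ 0 := by
    by_contra! hc
    apply hB
    rw [Lam_decomp (B 0), hc 0 (by norm_num), hc 1 (by norm_num)]
    simp
  obtain ⟨s, hs, hs0⟩ := this
  refine ⟨r, N, fun i => Lam s (B i), hs0,
    fun i => PolyN_Lam s (PolyN_mono (by omega) (hN i)), ?_⟩
  have := congrArg (Lam s) hsum
  rw [Lam_sum, Lam_zero] at this
  rw [← this]
  refine Finset.sum_congr rfl fun i _ => ?_
  rw [show f ^ 2 ^ (i + (j + 1)) = (f ^ 2 ^ (i + j)) ^ 2 by rw [← pow_mul]; ring_nf,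
    mul_comm (B i), Lam_sq_mul s hs, mul_comm]

lemma Rel_zero (f : PS) (j : ℕ) (h : FrobRel f j) : FrobRel f 0 := by
  induction j with
  | zero => exact h
  | succ j ih => exact ih (Rel_pred f j h)

/-- From a relation to a finite set stable under the Cartier operators. -/
lemma exists_stable (f : PS) (h : FrobRel f 0) :
    ∃ H : Set PS, H.Finite ∧ f ∈ H ∧ ∀ g ∈ H, ∀ s < 2, Lam s g ∈ H := by
  obtain ⟨r, N, B, hB, hN, hsum⟩ := h
  simp only [add_zero] at hsum
  rw [Finset.sum_range_succ'] at hsum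
  simp only [pow_zero, pow_one] at hsum
  have hbf : B 0 * f = ∑ i ∈ Finset.range r, B (i + 1) * f ^ 2 ^ (i + 1) := by
    have h2 := hsum
    rw [add_eq_zero_iff_eq_neg] at h2
    rw [h2, CharTwo.neg_eq]
  let H : Set PS := {g | ∃ D : ℕ → PS, (∀ i, D i ∈ PolyN N) ∧
    B 0 * g = ∑ i ∈ Finset.range (r + 1), D i * f ^ 2 ^ i}
  refine ⟨H, ?_, ?_, ?_⟩
  · let T : Set (Fin (r + 1) → PS) := Set.univ.pi fun _ => PolyN N
    have hT : T.Finite := Set.Finite.pi fun _ => PolyN_finite N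
    have hI := hT.image fun D => ∑ i : Fin (r + 1), D i * f ^ 2 ^ (i : ℕ)
    refine Set.Finite.of_injOn (f := fun g => B 0 * g) ?_ ?_ hI
    · rintro g ⟨D, hD, hg⟩
      refine ⟨fun i => D i, fun i _ => hD i, ?_⟩
      simp only [hg]
      rw [Finset.sum_range]
    · intro g _ g' _ hgg
      exact mul_left_cancel₀ hB hgg
  · refine ⟨fun i => if i = 0 then B 0 else 0, fun i => ?_, ?_⟩
    · dsimp only
      split_ifs
      · exact hN 0
      · intro n _; simp
    · simp
  · rintro g ⟨D, hD, hg⟩ s hs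
    have key : (B 0) ^ 2 * g =
        ∑ i ∈ Finset.range r, (B 0 * D (i + 1) + D 0 * B (i + 1)) * f ^ 2 ^ (i + 1) := by
      rw [pow_two, mul_assoc, hg, Finset.sum_range_succ']
      simp only [pow_zero, pow_one]
      rw [mul_add, show B 0 * (D 0 * f) = D 0 * (B 0 * f) by ring, hbf, Finset.mul_sum,
        Finset.mul_sum, ← Finset.sum_add_distrib]
      exact Finset.sum_congr rfl fun i _ => by ring
    refine ⟨fun i => if i < r then Lam s (B 0 * D (i + 1) + D 0 * B (i + 1)) else 0,
      fun i => ?_, ?_⟩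
    · dsimp only
      split_ifs
      · apply PolyN_Lam
        rw [two_mul]
        exact PolyN_add (PolyN_mul (hN _) (hD _)) (PolyN_mul (hD _) (hN _))
      · intro n _; simp
    · rw [← Lam_sq_mul s hs, key, Lam_sum, Finset.sum_range_succ]
      simp only [lt_irrefl, if_false, zero_mul, add_zero]
      refine Finset.sum_congr rfl fun i hi => ?_
      rw [if_pos (Finset.mem_range.1 hi), show f ^ 2 ^ (i + 1) = (f ^ 2 ^ i) ^ 2 by
        rw [← pow_mul]; ring_nf, mul_comm _ ((f ^ 2 ^ i) ^ 2), Lam_sq_mul s hs, mul_comm]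

/-- `2`-automaticity, local copy. -/
def Ker (e : ℕ → ZMod 2) : Set (ℕ → ZMod 2) :=
  {c | ∃ i j : ℕ, j < 2 ^ i ∧ c = fun n => e (n * 2 ^ i + j)}

lemma ker_finite_of_stable (e : ℕ → ZMod 2) (H : Set PS) (hH : H.Finite)
    (he : PowerSeries.mk e ∈ H) (hst : ∀ g ∈ H, ∀ s < 2, Lam s g ∈ H) : (Ker e).Finite := by
  refine Set.Finite.of_injOn (f := fun c => (PowerSeries.mk c : PS)) ?_ ?_ hH
  · rintro c ⟨i, j, hj, rfl⟩
    induction i generalizing j with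
    | zero =>
      obtain rfl : j = 0 := by simpa using hj
      simpa using he
    | succ i ih =>
      have h2 : 0 < 2 ^ i := by positivity
      have hs : j / 2 ^ i < 2 := by
        rw [Nat.div_lt_iff_lt_mul h2]; rw [pow_succ] at hj; omega
      have := hst _ (ih (j % 2 ^ i) (Nat.mod_lt _ h2)) _ hs
      convert this using 1
      ext n
      simp only [Lam, PowerSeries.coeff_mk]
      congr 1
      have := Nat.div_add_mod j (2 ^ i)
      generalize j / 2 ^ i = q at *
      generalize j % 2 ^ i = t at *
      rw [← this]; ring
  · intro c _ c' _ h
    funext n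
    simpa using congrArg (PowerSeries.coeff n) h

lemma ker_stable (e c : ℕ → ZMod 2) (hc : c ∈ Ker e) (s : ℕ) (hs : s < 2) :
    (fun n => c (2 * n + s)) ∈ Ker e := by
  obtain ⟨i, j, hj, rfl⟩ := hc
  refine ⟨i + 1, s * 2 ^ i + j, ?_, ?_⟩
  · rw [pow_succ]; interval_cases s <;> omega
  · funext n
    have : (2 * n + s) * 2 ^ i + j = n * 2 ^ (i + 1) + (s * 2 ^ i + j) := by ring
    simp only [this]

lemma li_pow_of_transcendental {x : LS} (hx : Transcendental KK x) :
    LinearIndependent KK (fun i : ℕ => x ^ (2 ^ i)) := by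
  have h1 := (Polynomial.basisMonomials KK).linearIndependent.comp (fun i : ℕ => 2 ^ i)
    (Nat.pow_right_injective le_rfl)
  have h2 := h1.map' (Polynomial.aeval x : Polynomial KK →ₐ[KK] LS).toLinearMap
    (LinearMap.ker_eq_bot.2 (transcendental_iff_injective.1 hx))
  have e : (fun i : ℕ => x ^ (2 ^ i)) =
      (Polynomial.aeval x : Polynomial KK →ₐ[KK] LS).toLinearMap ∘
        (Polynomial.basisMonomials KK) ∘ fun i : ℕ => 2 ^ i := by
    funext i
    simp [Polynomial.aeval_monomial]
  rw [e]
  exact h2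

lemma not_li_pow_of_algebraic {x : LS} (hx : IsAlgebraic KK x) :
    ¬ LinearIndependent KK (fun i : ℕ => x ^ (2 ^ i)) := by
  intro h
  have hfin : Module.Finite KK (Algebra.adjoin KK {x}) :=
    Algebra.finite_adjoin_simple_of_isIntegral hx.isIntegral
  let y : Algebra.adjoin KK {x} := ⟨x, Algebra.self_mem_adjoin_singleton KK x⟩
  have h2 : LinearIndependent KK (fun i : ℕ => y ^ (2 ^ i)) :=
    LinearIndependent.of_comp (Algebra.adjoin KK {x}).val.toLinearMap
      h
  have := h2.finite
  exact not_finite ℕ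

lemma algebraic_of_stable (H : Set PS) (hH : H.Finite)
    (hst : ∀ g ∈ H, ∀ s < 2, Lam s g ∈ H) (g : PS) (hg : g ∈ H) :
    IsAlgebraic KK (g : LS) := by
  by_contra hx
  have hli := li_pow_of_transcendental hx
  let V : ℕ → Submodule KK LS := fun i =>
    Submodule.span KK ((fun h : PS => (h : LS) ^ 2 ^ i) '' H)
  have hmono : Monotone V := by
    apply monotone_nat_of_le_succ
    intro i
    refine Submodule.span_le.2 ?_
    rintro _ ⟨h, hh, rfl⟩
    have e : (h : LS) ^ 2 ^ i = (Lam 0 h : LS) ^ 2 ^ (i + 1) +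
        (RatFunc.X ^ 2 ^ i : KK) • (Lam 1 h : LS) ^ 2 ^ (i + 1) := by
      conv_lhs => rw [Lam_decomp h]
      rw [Algebra.smul_def, map_pow]
      have hX : algebraMap KK LS RatFunc.X = ((PowerSeries.X : PS) : LS) := by
        rw [PowerSeries.coe_X, ← RatFunc.coe_X]
      rw [hX, map_add, add_pow_char_pow, map_mul, mul_pow, map_pow, map_pow, ← pow_mul, ← pow_mul,
        ← pow_succ']
    dsimp only
    rw [e]
    refine Submodule.add_mem _ (Submodule.subset_span ⟨_, hst h hh 0 (by norm_num), rfl⟩)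
      (Submodule.smul_mem _ _ (Submodule.subset_span ⟨_, hst h hh 1 (by norm_num), rfl⟩))
  obtain ⟨d, hd⟩ : ∃ d : ℕ, d = hH.toFinset.card := ⟨_, rfl⟩
  have hVfin : Module.Finite KK (V d) := Module.Finite.span_of_finite KK (hH.image _)
  have hrank : Module.finrank KK (V d) ≤ d := by
    classical
    have : V d = Submodule.span KK
        ((hH.toFinset.image (fun h : PS => (h : LS) ^ 2 ^ d) : Finset LS) : Set LS) := by
      simp [V]
    rw [this]
    refine (finrank_span_finset_le_card _).trans ?_
    rw [hd]
    exact Finset.card_image_le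
  let w : Fin (d + 1) → V d := fun i =>
    ⟨(g : LS) ^ 2 ^ (i : ℕ), hmono (by omega : (i : ℕ) ≤ d) (Submodule.subset_span ⟨g, hg, rfl⟩)⟩
  have hw : LinearIndependent KK w :=
    LinearIndependent.of_comp (V d).subtype (hli.comp (fun i : Fin (d + 1) => (i : ℕ))
      Fin.val_injective)
  have := hw.fintype_card_le_finrank
  simp at this
  omega

lemma poly_mem (P : Polynomial (ZMod 2)) {N : ℕ} (h : P.natDegree ≤ N) : (P : PS) ∈ PolyN N := by
  intro n hn
  rw [Polynomial.coeff_coe]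
  exact Polynomial.coeff_eq_zero_of_natDegree_lt (by omega)

lemma rel_of_algebraic (f : PS) (hf : IsAlgebraic KK (f : LS)) : ∃ j, FrobRel f j := by
  have h := not_li_pow_of_algebraic hf
  rw [← LinearIndependent.iff_fractionRing (Polynomial (ZMod 2))] at h
  rw [linearIndependent_iff] at h
  push Not at h
  obtain ⟨l, hl, hl0⟩ := h
  have hex : ∃ j, l j ≠ 0 := by
    by_contra! hc
    exact hl0 (Finsupp.ext hc)
  classical
  let j := Nat.find hex
  have hmin : ∀ i < j, l i = 0 := fun i hi => by
    simpa using Nat.find_min hex hi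
  obtain ⟨r, hr⟩ : ∃ r, ∀ i ∈ l.support, i < j + (r + 1) :=
    ⟨l.support.sup id, fun i hi => by
      have := Finset.le_sup (f := id) hi
      simp only [id] at this
      omega⟩
  refine ⟨j, r, l.support.sup fun i => (l i).natDegree, fun i => (l (j + i) : PS), ?_, ?_, ?_⟩
  · simpa using Nat.find_spec hex
  · intro i
    apply poly_mem
    by_cases hi : j + i ∈ l.support
    · exact Finset.le_sup (f := fun i => (l i).natDegree) hi
    · simp [Finsupp.notMem_support_iff.1 hi]
  · apply HahnSeries.ofPowerSeries_injective (Γ := ℤ)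
    rw [map_zero, ← hl, Finsupp.linearCombination_apply,
      Finsupp.sum_of_support_subset (s := Finset.range (j + (r + 1))) _
        (fun i hi => Finset.mem_range.2 (hr i hi)) _ (by simp), Finset.sum_range_add _ j (r + 1),
      Finset.sum_eq_zero (s := Finset.range j), zero_add, map_sum]
    · refine Finset.sum_congr rfl fun i _ => ?_
      rw [map_mul, map_pow, add_comm i j, Algebra.smul_def]
      rfl
    · intro i hi
      rw [hmin i (Finset.mem_range.1 hi), zero_smul]

/-- Christol's theorem over the field with two elements. -/
lemma christol (e : ℕ → ZMod 2) :
    IsAlgebraic KK ((PowerSeries.mk e : PS) : LS) ↔ (Ker e).Finite := by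
  constructor
  · intro h
    obtain ⟨j, hj⟩ := rel_of_algebraic _ h
    obtain ⟨H, hH, heH, hst⟩ := exists_stable _ (Rel_zero _ _ hj)
    exact ker_finite_of_stable e H hH heH hst
  · intro h
    refine algebraic_of_stable ((fun c => (PowerSeries.mk c : PS)) '' Ker e) (h.image _) ?_ _
      ⟨e, ⟨0, 0, by simp, by simp⟩, rfl⟩
    rintro _ ⟨c, hc, rfl⟩ s hs
    refine ⟨_, ker_stable e c hc s hs, ?_⟩
    ext n
    simp [Lam]

lemma hasSum_ps (e : ℕ → ZMod 2) :
    HasSum (fun n : ℕ => (HahnSeries.single (n : ℤ) (e n) : LS))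
      ((PowerSeries.mk e : PS) : LS) := by
  rw [HasSum, SummationFilter.unconditional_filter]
  intro U hU
  obtain ⟨γ, hU₁⟩ := Valued.mem_nhds.mp hU
  set D := -(WithZero.log (MonoidWithZeroHom.ValueGroup₀.embedding γ.1) - 1) with hD₀
  have hD : WithZero.exp (-D) < MonoidWithZeroHom.ValueGroup₀.embedding γ.1 := by
    rw [← WithZero.lt_log_iff_exp_lt (by simp), hD₀]
    simp
  rw [Filter.mem_map, Filter.mem_atTop_sets]
  refine ⟨Finset.range D.toNat, fun t ht => hU₁ ?_⟩
  rw [Set.mem_ofPred_eq, Valued.v.restrict_lt_iff_lt_embedding]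
  refine lt_of_le_of_lt ((LaurentSeries.valuation_le_iff_coeff_lt_eq_zero _).mpr ?_) hD
  intro n hn
  rw [HahnSeries.coeff_sub, sub_eq_zero, HahnSeries.coeff_sum]
  rcases lt_or_ge n 0 with h0 | h0
  · rw [PowerSeries.coeff_coe, if_pos h0]
    apply Finset.sum_eq_zero
    intro i _
    exact HahnSeries.coeff_single_of_ne (by omega)
  · lift n to ℕ using h0
    rw [LaurentSeries.coeff_coe_powerSeries, PowerSeries.coeff_mk, Finset.sum_eq_single n]
    · simp
    · intro i _ hi
      exact HahnSeries.coeff_single_of_ne (by exact_mod_cast hi.symm)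
    · intro hnt
      exact absurd (ht (Finset.mem_range.2 (by omega))) hnt

lemma alg_mul_iff {u y : LS} (hu : IsAlgebraic KK u) (h0 : u ≠ 0) :
    IsAlgebraic KK (u * y) ↔ IsAlgebraic KK y := by
  refine ⟨fun h => ?_, fun h => hu.mul h⟩
  have := hu.inv.mul h
  rwa [inv_mul_cancel_left₀ h0] at this

lemma alg_add_iff {u y : LS} (hu : IsAlgebraic KK u) :
    IsAlgebraic KK (u + y) ↔ IsAlgebraic KK y := by
  refine ⟨fun h => ?_, fun h => hu.add h⟩
  have := h.sub hu
  rwa [add_sub_cancel_left] at this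

lemma alg_z : IsAlgebraic KK (HahnSeries.single (1 : ℤ) (1 : ZMod 2) : LS) := by
  have hX : algebraMap KK LS RatFunc.X = HahnSeries.single (1 : ℤ) (1 : ZMod 2) := by
    rw [← RatFunc.coe_X]
  rw [← hX]
  exact isAlgebraic_algebraMap _

lemma z_ne : (HahnSeries.single (1 : ℤ) (1 : ZMod 2) : LS) ≠ 0 :=
  HahnSeries.single_ne_zero one_ne_zero

lemma alg_zpow (m : ℤ) : IsAlgebraic KK ((HahnSeries.single (1 : ℤ) (1 : ZMod 2) : LS) ^ m) := by
  rcases m with n | n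
  · simpa using alg_z.pow n
  · rw [zpow_negSucc]
    exact (alg_z.pow _).inv

lemma alg_ones : IsAlgebraic KK ((PowerSeries.mk (fun _ => 1) : PS) : LS) := by
  rw [christol]
  refine (Set.finite_singleton (fun _ => (1 : ZMod 2))).subset ?_
  rintro c ⟨i, j, _, rfl⟩
  rfl

lemma ones_ne : ((PowerSeries.mk (fun _ => 1) : PS) : LS) ≠ 0 := by
  intro h
  have := congrArg (fun y : LS => y.coeff ((0 : ℕ) : ℤ)) h
  simp only [LaurentSeries.coeff_coe_powerSeries, PowerSeries.coeff_mk,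
    HahnSeries.coeff_zero] at this
  exact one_ne_zero this

def psi (f₁ f₂ : PS) (t : ZMod 2) : PS := if t = 0 then f₁ else f₂

lemma psi_inj {f₁ f₂ : PS} (h : f₁ ≠ f₂) : Function.Injective (psi f₁ f₂) := by
  intro s t hst
  have : ∀ u : ZMod 2, u = 0 ∨ u = 1 := by decide
  rcases this s with rfl | rfl <;> rcases this t with rfl | rfl <;> simp_all [psi, eq_comm]

lemma HasSum.congr_fun_aux {u v : ℕ → LS} {x : LS} (h : HasSum v x) (e : ∀ n, u n = v n) :
    HasSum u x := by
  rw [funext e]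
  exact h

lemma hasSum_digits (f₁ f₂ : PS) (m : ℤ) (e : ℕ → ZMod 2) :
    HasSum (fun n : ℕ => (psi f₁ f₂ (e n) : LS) *
      (HahnSeries.single (1 : ℤ) (1 : ZMod 2)) ^ (m + (n : ℤ)))
      ((HahnSeries.single (1 : ℤ) (1 : ZMod 2) : LS) ^ m *
        ((f₁ : LS) * ((PowerSeries.mk (fun _ => 1) : PS) : LS) +
          ((f₂ : LS) - f₁) * ((PowerSeries.mk e : PS) : LS))) := by
  have h := (((hasSum_ps fun _ => 1).mul_left (f₁ : LS)).add
    ((hasSum_ps e).mul_left ((f₂ : LS) - f₁))).mul_left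
      ((HahnSeries.single (1 : ℤ) (1 : ZMod 2) : LS) ^ m)
  refine HasSum.congr_fun_aux h ?_
  intro n
  have hn : (HahnSeries.single (n : ℤ) (1 : ZMod 2) : LS) = (HahnSeries.single 1 1) ^ n := by
    rw [HahnSeries.single_pow]; simp
  rw [zpow_add₀ z_ne, zpow_natCast]
  have : ∀ u : ZMod 2, u = 0 ∨ u = 1 := by decide
  rcases this (e n) with h | h
  · rw [h, psi, if_pos rfl, hn, HahnSeries.single_eq_zero]; ring
  · rw [h, psi, if_neg one_ne_zero, hn]; ring

lemma auto_iff {f₁ f₂ : PS} (h : f₁ ≠ f₂) (e : ℕ → ZMod 2) :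
    IsKAutomatic 2 (fun n => psi f₁ f₂ (e n)) ↔ (Ker e).Finite := by
  have hinj : Function.Injective (fun c : ℕ → ZMod 2 => psi f₁ f₂ ∘ c) :=
    (psi_inj h).comp_left
  rw [← Set.finite_image_iff (s := Ker e) hinj.injOn, IsKAutomatic]
  have : {c : ℕ → PS | ∃ i j : ℕ, j < 2 ^ i ∧ c = fun n => psi f₁ f₂ (e (n * 2 ^ i + j))} =
      (fun c : ℕ → ZMod 2 => psi f₁ f₂ ∘ c) '' Ker e := by
    ext c
    constructor
    · rintro ⟨i, j, hj, rfl⟩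
      exact ⟨_, ⟨i, j, hj, rfl⟩, rfl⟩
    · rintro ⟨_, ⟨i, j, hj, rfl⟩, rfl⟩
      exact ⟨i, j, hj, rfl⟩
  rw [this]

lemma alg_of_B (f₁ f₂ f : PS) (hf : f = f₁ ∨ f = f₂)
    (H : ∀ (x : LaurentSeries (ZMod 2)) (m : ℤ) (a : ℤ → PowerSeries (ZMod 2)),
        (∀ n : ℤ, m ≤ n → a n = f₁ ∨ a n = f₂) →
        HasSum (fun n : ℕ =>
          (a (m + n) : LaurentSeries (ZMod 2)) *
            (HahnSeries.single (1 : ℤ) (1 : ZMod 2)) ^ (m + (n : ℤ))) x →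
        (IsAlgebraic (RatFunc (ZMod 2)) x ↔ IsKAutomatic 2 fun n : ℕ => a (m + n))) :
    IsAlgebraic KK (f : LS) := by
  have h := (H _ 0 (fun _ => f) (fun _ _ => hf) (hasSum_digits f f 0 (fun _ => 0) |> fun h => by
    simpa only [psi, if_true] using h)).2 (by
      refine (Set.finite_singleton (fun _ => f)).subset ?_
      rintro c ⟨i, j, _, rfl⟩
      rfl)
  rw [zpow_zero, one_mul, sub_self, zero_mul, add_zero, mul_comm, alg_mul_iff alg_ones ones_ne] at h
  exact h

end

/-- **Theorem 3.8.** Let `Γ = {f₁, f₂} ⊆ 𝔽₂[[z]]` be a complete residue system of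
`𝔽₂[[z]]` modulo `z` (i.e. `f₁, f₂` have distinct constant terms).  Then `f₁`
and `f₂` are algebraic over `𝔽₂(z)` if and only if: for every `x ∈ 𝔽₂((z))`
with expansion `x = ∑_{n ≥ m} a_n zⁿ`, `a_n ∈ Γ`, `x` is algebraic over `𝔽₂(z)`
iff the digit sequence `{a_n}_{n ≥ m}` is `2`-automatic. -/
theorem propertyB_for_two_element_digit_sets
    (f₁ f₂ : PowerSeries (ZMod 2))
    (hres : PowerSeries.constantCoeff (R := ZMod 2) f₁ ≠ PowerSeries.constantCoeff (R := ZMod 2) f₂) :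
    (IsAlgebraic (RatFunc (ZMod 2)) (f₁ : LaurentSeries (ZMod 2)) ∧
        IsAlgebraic (RatFunc (ZMod 2)) (f₂ : LaurentSeries (ZMod 2))) ↔
      ∀ (x : LaurentSeries (ZMod 2)) (m : ℤ) (a : ℤ → PowerSeries (ZMod 2)),
        (∀ n : ℤ, m ≤ n → a n = f₁ ∨ a n = f₂) →
        HasSum (fun n : ℕ =>
          (a (m + n) : LaurentSeries (ZMod 2)) *
            (HahnSeries.single (1 : ℤ) (1 : ZMod 2)) ^ (m + (n : ℤ))) x →
        (IsAlgebraic (RatFunc (ZMod 2)) x ↔ IsKAutomatic 2 fun n : ℕ => a (m + n)) := by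
  have hne : f₁ ≠ f₂ := fun h => hres (by rw [h])
  constructor
  · rintro ⟨h1, h2⟩ x m a ha hx
    classical
    let e : ℕ → ZMod 2 := fun n => if a (m + n) = f₁ then 0 else 1
    have hae : ∀ n : ℕ, a (m + n) = psi f₁ f₂ (e n) := by
      intro n
      by_cases h : a (m + n) = f₁
      · simp [e, psi, h]
      · simp only [e, psi, h, if_false, one_ne_zero]
        exact (ha _ (by omega)).resolve_left h
    simp only [hae] at hx ⊢
    have hd : (f₂ : LS) - f₁ ≠ 0 := by
      rw [sub_ne_zero]
      exact fun h => hne (HahnSeries.ofPowerSeries_injective h).symm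
    rw [hx.unique (hasSum_digits f₁ f₂ m e), alg_mul_iff (alg_zpow m) (zpow_ne_zero m z_ne),
      alg_add_iff (h1.mul alg_ones), alg_mul_iff (h2.sub h1) hd, christol, auto_iff hne]
  · intro H
    exact ⟨alg_of_B f₁ f₂ f₁ (Or.inl rfl) H, alg_of_B f₁ f₂ f₂ (Or.inr rfl) H⟩
end

section
/- Let β ∈ 𝔽_q((1/z)) be a formal Laurent series of positive degree. Then the following statements are equivalent: (i) β is algebraic over 𝔽_q(z); (ii) the β-expansion d_β(1) of 1 is p-automatic; (iii) for every x ∈ 𝔽_q[[1/z]], the β-expansion d_β(x) is p-automatic if and only if x is algebraic over 𝔽_q(z). -/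
/-- The integer part `[x]` of a Laurent series in `𝔽_q((1/z))`: the sum of the
terms involving nonnegative powers of `z` (i.e. nonpositive powers of the
variable `X = 1/z`); it corresponds to a polynomial in `z`. -/
noncomputable def intPart {F : Type*} [Field F] (x : LaurentSeries F) : LaurentSeries F where
  coeff n := if n ≤ 0 then x.coeff n else 0
  isPWO_support' := x.isPWO_support'.mono (by
    intro n hn
    simp only [Function.mem_support, ne_eq] at hn ⊢
    intro h
    apply hn
    simp [h])

/-- The `β`-transformation `T(x) = βx - [βx]` on `𝔽_q[[1/z]]`. -/
noncomputable def betaT {F : Type*} [Field F] (β : LaurentSeries F) (x : LaurentSeries F) :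
    LaurentSeries F :=
  β * x - intPart (β * x)

/-- The digit sequence `d_β(x) = {a_n}_{n ≥ 1}` of the `β`-expansion of `x`
(reindexed from `0`):  `betaDigits β x n = a_{n+1} = [β ⬝ Tⁿ(x)]`. -/
noncomputable def betaDigits {F : Type*} [Field F] (β x : LaurentSeries F) :
    ℕ → LaurentSeries F :=
  fun n => intPart (β * (betaT β)^[n] x)

open scoped RatFunc

open Polynomial in
theorem bx_alg_of_poly {K M : Type*} [CommRing K] [IsDomain K] [CommRing M] [IsDomain M]
    [Algebra K M] (Q : M[X]) (hQ : Q ≠ 0) (hc : ∀ i, IsAlgebraic K (Q.coeff i)) (a : M)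
    (ha : Q.eval a = 0) : IsAlgebraic K a := by
  let B := Subalgebra.algebraicClosure K M
  have hl : Q ∈ Polynomial.lifts (algebraMap B M) := by
    rw [Polynomial.lifts_iff_coeff_lifts]
    intro n
    exact ⟨⟨Q.coeff n, hc n⟩, rfl⟩
  obtain ⟨P, hP⟩ := (Polynomial.mem_lifts _).1 hl
  have h1 : IsAlgebraic B a := by
    refine ⟨P, ?_, ?_⟩
    · rintro rfl
      simp at hP
      exact hQ hP.symm
    · rw [aeval_def, ← eval_map, hP, ha]
  have : Algebra.IsAlgebraic K B := ⟨fun x => by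
    rw [← isAlgebraic_algebraMap_iff (A := M) (Subtype.val_injective)]
    exact x.2⟩
  exact h1.restrictScalars K

theorem bx_lemA {E L ι : Type*} [Field E] [Field L] [Algebra E L] [Fintype ι] (p s : ℕ)
    [ExpChar L p] (hq : 1 < p ^ s) (u : ι → L)
    (hu : ∀ i, u i ∈ Submodule.span E (Set.range fun j => u j ^ (p ^ s))) (i : ι) :
    IsAlgebraic E (u i) := by
  set q := p ^ s with hqdef
  let W : ℕ → Submodule E L := fun k => Submodule.span E (Set.range fun j => u j ^ (q ^ k))
  have hmem : ∀ k j, u j ^ q ^ k ∈ W (k + 1) := by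
    intro k j
    obtain ⟨c, hc⟩ := (Submodule.mem_span_range_iff_exists_fun E).1 (hu j)
    rw [← hc]
    have : q ^ k = p ^ (s * k) := by rw [hqdef, ← pow_mul]
    rw [this, sum_pow_char_pow]
    refine Submodule.sum_mem _ fun l _ => ?_
    have e : (u l ^ q) ^ q ^ k = u l ^ q ^ (k + 1) := by rw [pow_succ' q k, pow_mul]
    rw [smul_pow, ← this, e]
    exact Submodule.smul_mem _ _ (Submodule.subset_span ⟨l, rfl⟩)
  have hmono : Monotone W := by
    refine monotone_nat_of_le_succ fun k => ?_
    refine Submodule.span_le.2 ?_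
    rintro _ ⟨j, rfl⟩
    exact hmem k j
  by_contra htr
  have htr : Transcendental E (u i) := htr
  let N := Fintype.card ι
  have hli : LinearIndependent E (fun k : Fin (N + 1) => u i ^ (q ^ (k : ℕ))) := by
    have : LinearIndependent E (fun n : ℕ => u i ^ n) := by
      have h := (Polynomial.basisMonomials E).linearIndependent.map'
        (Polynomial.aeval (u i)).toLinearMap
        (LinearMap.ker_eq_bot.2 (transcendental_iff_injective.1 htr))
      have e : (fun n : ℕ => u i ^ n) =
          ((Polynomial.aeval (u i)).toLinearMap ∘ (Polynomial.basisMonomials E)) := by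
        ext n
        simp
      rw [e]
      exact h
    refine this.comp (fun k : Fin (N + 1) => q ^ (k : ℕ)) ?_
    intro a b hab
    exact Fin.ext (Nat.pow_right_injective hq hab)
  have hW : ∀ k : Fin (N + 1), u i ^ (q ^ (k : ℕ)) ∈ W (N + 1) := fun k =>
    hmono (show (k : ℕ) ≤ N + 1 by omega) (Submodule.subset_span ⟨i, rfl⟩)
  let v : Fin (N + 1) → W (N + 1) := fun k => ⟨_, hW k⟩
  have hv : LinearIndependent E v := by
    apply LinearIndependent.of_comp (W (N + 1)).subtype
    exact hli
  have : FiniteDimensional E (W (N + 1)) := FiniteDimensional.span_of_finite E (Set.finite_range _)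
  have h1 := hv.fintype_card_le_finrank
  have h2 : Module.finrank E (W (N + 1)) ≤ N := finrank_range_le_card (R := E) _
  simp at h1
  omega

/-! ### Cartier operators -/

open PowerSeries in
noncomputable def bxLam {F : Type*} [Field F] (q r : ℕ) (f : PowerSeries F) : PowerSeries F :=
  PowerSeries.mk fun n => PowerSeries.coeff (q * n + r) f

section
open PowerSeries
variable {F : Type*} [Field F]

@[simp] theorem bxLam_coeff (q r n : ℕ) (f : PowerSeries F) :
    coeff n (bxLam q r f) = coeff (q * n + r) f := by simp [bxLam]

theorem bxLam_sum {ι : Type*} (q r : ℕ) (t : Finset ι) (f : ι → PowerSeries F) :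
    bxLam q r (∑ i ∈ t, f i) = ∑ i ∈ t, bxLam q r (f i) := by
  ext n; simp

theorem bx_pow_card [Fintype F] (g : PowerSeries F) :
    g ^ Fintype.card F = expand (Fintype.card F) Fintype.card_ne_zero g := by
  obtain ⟨p, hp⟩ := CharP.exists F
  obtain ⟨s, hprime, hs⟩ := FiniteField.card F p
  have : Fact p.Prime := ⟨hprime⟩
  have : ExpChar F p := ExpChar.prime hprime
  have := MvPowerSeries.map_iterateFrobenius_expand p hprime.ne_zero g s
  have h2 : iterateFrobenius F p s = RingHom.id F := by
    ext x
    simp [iterateFrobenius_def, ← hs, FiniteField.pow_card]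
  rw [h2] at this
  simp only [MvPowerSeries.map_id, RingHom.id_apply] at this
  simp only [hs, PowerSeries.expand, this]

theorem bxLam_pow_mul [Fintype F] (g f : PowerSeries F) (r : ℕ) (hr : r < Fintype.card F) :
    bxLam (Fintype.card F) r (g ^ Fintype.card F * f) = g * bxLam (Fintype.card F) r f := by
  rw [bx_pow_card]
  generalize_proofs hq
  generalize Fintype.card F = q at *
  ext n
  rw [bxLam_coeff, coeff_mul, coeff_mul]
  symm
  refine Finset.sum_of_injOn (fun ij => (q * ij.1, q * ij.2 + r)) ?_ ?_ ?_ ?_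
  · rintro ⟨a, b⟩ _ ⟨c, d⟩ _ h
    simp at h
    ext <;> simp <;> tauto
  · rintro ⟨a, b⟩ h
    simp only [Finset.mem_coe, Finset.HasAntidiagonal.mem_antidiagonal] at h ⊢
    rw [← h]; ring
  · rintro ⟨a, b⟩ h h'
    simp only [Finset.HasAntidiagonal.mem_antidiagonal] at h
    rw [coeff_expand]
    split_ifs with hd
    · exfalso
      obtain ⟨c, rfl⟩ := hd
      apply h'
      have hcn : c ≤ n := by
        by_contra hcn
        have : q * (n + 1) ≤ q * c := Nat.mul_le_mul_left _ (by omega)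
        rw [mul_add] at this; omega
      obtain ⟨e, rfl⟩ := Nat.exists_eq_add_of_le hcn
      refine ⟨(c, e), by simp, ?_⟩
      simp; rw [mul_add] at h; omega
    · simp
  · rintro ⟨a, b⟩ _
    simp [coeff_expand, Nat.mul_div_cancel_left _ (Nat.pos_of_ne_zero hq)]

theorem bxLam_decomp [Fintype F] (f : PowerSeries F) :
    f = ∑ r ∈ Finset.range (Fintype.card F),
      (X : PowerSeries F) ^ r * (bxLam (Fintype.card F) r f) ^ Fintype.card F := by
  simp_rw [bx_pow_card]
  generalize_proofs hq
  generalize Fintype.card F = q at *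
  ext m
  rw [map_sum, Finset.sum_eq_single (m % q)]
  · have h1 : m % q ≤ m := Nat.mod_le _ _
    have h2 : m - m % q = q * (m / q) := by
      have := Nat.mod_add_div m q; omega
    rw [coeff_X_pow_mul', if_pos h1, h2, coeff_expand_mul, bxLam_coeff, Nat.div_add_mod]
  · intro r hr hne
    rw [coeff_X_pow_mul']
    split_ifs with h1
    · rw [coeff_expand, if_neg]
      rintro ⟨c, hc⟩
      apply hne
      have : m = q * c + r := by omega
      rw [this, Nat.mul_add_mod, Nat.mod_eq_of_lt (by simpa using hr)]
    · rfl
  · intro h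
    exact absurd (Finset.mem_range.2 (Nat.mod_lt _ (Nat.pos_of_ne_zero hq))) h

end

theorem bx_auto_pow {α : Type*} (p s : ℕ) (b : ℕ → α) (h : IsKAutomatic p b) :
    IsKAutomatic (p ^ s) b := by
  refine h.subset ?_
  rintro c ⟨i, j, hj, rfl⟩
  exact ⟨s * i, j, by rwa [pow_mul], by simp [pow_mul]⟩

theorem bx_auto_of_pow {α : Type*} (p s : ℕ) (hp : 0 < p) (hs : 0 < s) (b : ℕ → α)
    (h : IsKAutomatic (p ^ s) b) : IsKAutomatic p b := by
  have hfin : (⋃ t ∈ Finset.range s, ⋃ j ∈ Finset.range (p ^ t),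
      (fun c : ℕ → α => fun n => c (n * p ^ t + j)) ''
        {c : ℕ → α | ∃ i j : ℕ, j < (p ^ s) ^ i ∧ c = fun n => b (n * (p ^ s) ^ i + j)}).Finite := by
    refine Set.Finite.biUnion (Finset.finite_toSet _) fun t _ => ?_
    refine Set.Finite.biUnion (Finset.finite_toSet _) fun j _ => ?_
    exact h.image _
  refine hfin.subset ?_
  rintro c ⟨i, j, hj, rfl⟩
  have hi : p ^ i = p ^ (i % s) * (p ^ s) ^ (i / s) := by
    rw [← pow_mul, ← pow_add, Nat.mod_add_div]
  have hQ : 0 < (p ^ s) ^ (i / s) := by positivity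
  simp only [Set.mem_iUnion, Set.mem_image, Set.mem_ofPred_eq, Finset.mem_range]
  refine ⟨i % s, Nat.mod_lt _ hs, j / (p ^ s) ^ (i / s), ?_, _,
    ⟨i / s, j % (p ^ s) ^ (i / s), Nat.mod_lt _ hQ, rfl⟩, ?_⟩
  · rw [Nat.div_lt_iff_lt_mul hQ, ← hi]; exact hj
  · ext n
    congr 1
    have := Nat.div_add_mod j ((p ^ s) ^ (i / s))
    rw [hi, add_mul, add_assoc, mul_assoc]
    congr 1
    rw [mul_comm (j / _)]
    exact this

theorem bx_auto_shift {α : Type*} (k : ℕ) (hk : 0 < k) (b : ℕ → α) :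
    IsKAutomatic k (fun n => b (n + 1)) ↔ IsKAutomatic k b := by
  constructor
  · intro h
    have h2 : ((fun c : ℕ → α => fun n : ℕ => Nat.casesOn n (b 0) c : (ℕ → α) → (ℕ → α)) ''
      {c : ℕ → α | ∃ i j : ℕ, j < k ^ i ∧ c = fun n => b (n * k ^ i + j + 1)}).Finite := h.image _
    refine (Set.Finite.union h h2).subset ?_
    rintro c ⟨i, j, hj, rfl⟩
    rcases Nat.eq_zero_or_pos j with rfl | hj0
    · right
      refine ⟨_, ⟨i, k ^ i - 1, by omega, rfl⟩, ?_⟩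
      ext n
      cases n with
      | zero => simp
      | succ n =>
        simp only
        congr 1
        rw [add_mul]; omega
    · left
      refine ⟨i, j - 1, by omega, ?_⟩
      ext n; simp only; congr 1; omega
  · intro h
    have h2 := h.image (fun c : ℕ → α => fun n => c (n + 1))
    refine (Set.Finite.union h h2).subset ?_
    rintro c ⟨i, j, hj, rfl⟩
    rcases Nat.lt_or_ge (j + 1) (k ^ i) with h1 | h1
    · left
      exact ⟨i, j + 1, h1, rfl⟩
    · right
      refine ⟨_, ⟨i, 0, by omega, rfl⟩, ?_⟩
      ext n; simp only; congr 1; rw [add_mul]; omega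

theorem bx_auto_comp {α γ : Type*} (k : ℕ) (b : ℕ → α) (g : α → γ) (h : IsKAutomatic k b) :
    IsKAutomatic k (fun n => g (b n)) := by
  refine (h.image (fun c => fun n => g (c n))).subset ?_
  rintro c ⟨i, j, hj, rfl⟩
  exact ⟨_, ⟨i, j, hj, rfl⟩, rfl⟩

theorem bx_auto_pi {α ι : Type*} [Finite ι] (k : ℕ) (b : ℕ → ι → α)
    (h : ∀ l, IsKAutomatic k (fun n => b n l)) : IsKAutomatic k b := by
  have h2 := (Set.Finite.pi' h).image (fun (c : ι → ℕ → α) => fun n l => c l n)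
  refine h2.subset ?_
  rintro c ⟨i, j, hj, rfl⟩
  exact ⟨fun l n => b (n * k ^ i + j) l, fun l => ⟨i, j, hj, rfl⟩, rfl⟩

section
open PowerSeries
variable {F : Type*} [Field F]

theorem bx_tower : (algebraMap (Polynomial F) (LaurentSeries F)) =
    (HahnSeries.ofPowerSeries ℤ F).comp (algebraMap (Polynomial F) (PowerSeries F)) := by
  refine Polynomial.ringHom_ext ?_ ?_
  · intro a
    simp [PowerSeries.algebraMap_apply']
  · simp [PowerSeries.algebraMap_apply']

theorem bx_bridge' (x : LaurentSeries F) :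
    IsAlgebraic (RatFunc F) x ↔ IsAlgebraic (Polynomial F) x :=
  (IsFractionRing.isAlgebraic_iff (Polynomial F) (RatFunc F) (LaurentSeries F)).symm

theorem bx_bridge (f : PowerSeries F) :
    IsAlgebraic (RatFunc F) (HahnSeries.ofPowerSeries ℤ F f) ↔ IsAlgebraic (Polynomial F) f := by
  rw [bx_bridge']
  exact isAlgebraic_ringHom_iff_of_comp_eq (RingEquiv.refl (Polynomial F))
    (HahnSeries.ofPowerSeries ℤ F) HahnSeries.ofPowerSeries_injective
    bx_tower

theorem bx_christol_easy [Fintype F] (p : ℕ) [Fact p.Prime] [CharP F p] (f : PowerSeries F)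
    (h : IsKAutomatic p (fun n => coeff n f)) : IsAlgebraic (Polynomial F) f := by
  obtain ⟨s, hprime, hs⟩ := FiniteField.card F p
  have h := bx_auto_pow p s _ h
  rw [← hs] at h
  unfold IsKAutomatic at h
  set K := {c : ℕ → F | ∃ i j : ℕ, j < Fintype.card F ^ i ∧
    c = fun n => coeff (n * Fintype.card F ^ i + j) f} with hK
  have : Finite K := h
  have : Fintype K := Fintype.ofFinite K
  have : ExpChar (LaurentSeries F) p := by
    have : ExpChar F p := ExpChar.prime hprime
    exact expChar_of_injective_algebraMap (algebraMap F (LaurentSeries F)).injective p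
  have hA := bx_lemA (E := RatFunc F) (L := LaurentSeries F) p s
    (by rw [← hs]; exact Fintype.one_lt_card)
    (fun c : K => HahnSeries.ofPowerSeries ℤ F (PowerSeries.mk c.1)) (by
      rintro ⟨c, hc⟩
      rw [← hs]
      have hdec := bxLam_decomp (PowerSeries.mk c)
      simp only
      rw [hdec, map_sum]
      refine Submodule.sum_mem _ fun r hr => ?_
      have e : HahnSeries.ofPowerSeries ℤ F ((X : PowerSeries F) ^ r *
          bxLam (Fintype.card F) r (PowerSeries.mk c) ^ Fintype.card F) =
          (RatFunc.X ^ r : RatFunc F) • (HahnSeries.ofPowerSeries ℤ F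
            (bxLam (Fintype.card F) r (PowerSeries.mk c))) ^ Fintype.card F := by
        rw [Algebra.smul_def, map_mul, map_pow, map_pow, map_pow, RatFunc.coe_X,
          PowerSeries.coe_X]
      rw [e]
      refine Submodule.smul_mem _ _ (Submodule.subset_span ?_)
      refine ⟨⟨fun n => c (Fintype.card F * n + r), ?_⟩, ?_⟩
      · obtain ⟨i, j, hj, rfl⟩ := hc
        refine ⟨i + 1, r * Fintype.card F ^ i + j, ?_, ?_⟩
        · have hr' : r + 1 ≤ Fintype.card F := Finset.mem_range.1 hr
          have := Nat.mul_le_mul_right (Fintype.card F ^ i) hr'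
          rw [pow_succ']
          linarith
        · ext n
          simp only
          congr 1
          ring_nf
      · simp only [bxLam]
        congr 3
        ext n
        simp) ⟨fun n => coeff n f, 0, 0, by simp, by simp⟩
  rw [bx_bridge] at hA
  convert hA
  ext n; simp

theorem bx_finite_kernel (q : ℕ) (hq : 0 < q) (U : Set (PowerSeries F)) (hU : U.Finite)
    (hst : ∀ y ∈ U, ∀ r < q, bxLam q r y ∈ U) (f : PowerSeries F) (hf : f ∈ U) :
    IsKAutomatic q (fun n => coeff n f) := by
  refine (hU.image (fun g n => coeff n g)).subset ?_
  rintro c ⟨i, j, hj, rfl⟩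
  have key : ∀ i j : ℕ, j < q ^ i → (PowerSeries.mk fun n => coeff (n * q ^ i + j) f) ∈ U := by
    intro i
    induction i with
    | zero =>
      intro j hj
      convert hf
      ext n
      have : j = 0 := by simpa using hj
      simp [this]
    | succ i ih =>
      intro j hj
      have hQ : 0 < q ^ i := by positivity
      have h1 := hst _ (ih (j % q ^ i) (Nat.mod_lt _ hQ)) (j / q ^ i) (by
        rw [Nat.div_lt_iff_lt_mul hQ, ← pow_succ']; exact hj)
      convert h1 using 1
      ext n
      simp only [coeff_mk, bxLam_coeff]
      congr 2
      have := Nat.div_add_mod j (q ^ i)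
      rw [pow_succ']
      calc n * (q * q ^ i) + j = n * (q * q ^ i) + (q ^ i * (j / q ^ i) + j % q ^ i) := by rw [this]
        _ = _ := by ring
  exact ⟨_, key i j hj, by ext n; simp⟩

end

section
open PowerSeries
variable {F : Type*} [Field F]

theorem bx_lamP (q r : ℕ) (hq : 0 < q) (c : Polynomial F) :
    ∃ c' : Polynomial F, ∀ n, c'.coeff n = c.coeff (q * n + r) := by
  refine ⟨(bxLam q r (c : PowerSeries F)).trunc (c.natDegree + 1), fun n => ?_⟩
  rw [coeff_trunc]
  split_ifs with h
  · simp
  · symm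
    apply Polynomial.coeff_eq_zero_of_natDegree_lt
    have : 1 * n ≤ q * n := Nat.mul_le_mul_right _ hq
    omega

theorem bx_lamP_coe {q r : ℕ} {c c' : Polynomial F} (h : ∀ n, c'.coeff n = c.coeff (q * n + r)) :
    bxLam q r (c : PowerSeries F) = c' := by
  ext n; simp [h]

theorem bx_nli_sub {K L : Type*} [Field K] [AddCommGroup L] [Module K L] (A : Submodule K L)
    (hA : A.FG) (v : ℕ → L) (hv : ∀ k, v k ∈ A) : ¬ LinearIndependent K v := by
  intro hli
  have : Module.Finite K A := Module.Finite.of_fg hA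
  have hv : LinearIndependent K (fun k => (⟨v k, hv k⟩ : A)) := by
    apply LinearIndependent.of_comp A.subtype
    exact hli
  exact Module.Finite.not_linearIndependent_of_infinite _ hv

theorem bx_nli_gen {K L : Type*} [Field K] [Field L] [Algebra K L] (y : L) (h : IsAlgebraic K y)
    (g : ℕ → ℕ) : ¬ LinearIndependent K (fun k : ℕ => y ^ g k) := by
  refine bx_nli_sub _ h.isIntegral.fg_adjoin_singleton _ fun k => ?_
  rw [Subalgebra.mem_toSubmodule]
  exact pow_mem (Algebra.self_mem_adjoin_singleton K y) _

theorem bx_not_li [Fintype F] (f : PowerSeries F) (h : IsAlgebraic (Polynomial F) f) :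
    ∃ n, ∃ c : ℕ → Polynomial F, (∃ i < n, c i ≠ 0) ∧
      ∑ i ∈ Finset.range n, (c i : PowerSeries F) * f ^ (Fintype.card F ^ i) = 0 := by
  set q := Fintype.card F
  rw [← bx_bridge] at h
  set y : LaurentSeries F := HahnSeries.ofPowerSeries ℤ F f with hy
  have h1 : ¬ LinearIndependent (RatFunc F) (fun k : ℕ => y ^ (q ^ k)) := bx_nli_gen y h _
  rw [← LinearIndependent.iff_fractionRing (R := Polynomial F)] at h1
  rw [linearIndependent_iff'] at h1
  push Not at h1
  obtain ⟨s, g, hsum, i0, hi0, hne⟩ := h1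
  refine ⟨s.sup id + 1, fun i => if i ∈ s then g i else 0, ⟨i0, ?_, by simpa [hi0] using hne⟩, ?_⟩
  · have := Finset.le_sup (f := id) hi0
    simp at this
    simp
    omega
  · apply HahnSeries.ofPowerSeries_injective (Γ := ℤ)
    rw [map_zero, ← hsum, map_sum]
    have hsub : s ⊆ Finset.range (s.sup id + 1) := by
      intro i hi
      have := Finset.le_sup (f := id) hi
      simp at this
      simp
      omega
    rw [← Finset.sum_subset hsub]
    · refine Finset.sum_congr rfl fun i hi => ?_
      simp only []
      rw [if_pos hi, map_mul, map_pow, Algebra.smul_def, bx_tower]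
      simp [PowerSeries.algebraMap_apply', hy]
    · intro i _ hi
      simp [hi]

theorem bx_ore [Fintype F] (f : PowerSeries F) (h : IsAlgebraic (Polynomial F) f) :
    ∃ n, ∃ c : ℕ → Polynomial F, c 0 ≠ 0 ∧
      ∑ i ∈ Finset.range (n + 2), (c i : PowerSeries F) * f ^ (Fintype.card F ^ i) = 0 := by
  obtain ⟨n, c, hne, hsum⟩ := bx_not_li f h
  have hq : 0 < Fintype.card F := Fintype.card_pos
  induction n generalizing c with
  | zero => obtain ⟨i, hi, _⟩ := hne; omega
  | succ n ih =>
    by_cases h0 : c 0 = 0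
    · rw [Finset.sum_range_succ'] at hsum
      simp only [h0, Polynomial.coe_zero, zero_mul, add_zero] at hsum
      obtain ⟨i0, hi0, hne⟩ := hne
      obtain ⟨i0, rfl⟩ : ∃ k, i0 = k + 1 := by
        cases i0 with
        | zero => exact absurd h0 hne
        | succ k => exact ⟨k, rfl⟩
      obtain ⟨m, hm⟩ : ∃ m, (c (i0 + 1)).coeff m ≠ 0 := by
        by_contra hcon
        push Not at hcon
        exact hne (Polynomial.ext (by simpa using hcon))
      have hr : m % Fintype.card F < Fintype.card F := Nat.mod_lt _ hq
      choose c' hc' using fun i => bx_lamP (Fintype.card F) (m % Fintype.card F) hq (c (i + 1))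
      refine ih c' ⟨i0, by omega, ?_⟩ ?_
      · intro hz
        apply hm
        have := hc' i0 (m / Fintype.card F)
        rw [hz, Nat.div_add_mod] at this
        simpa using this.symm
      · have := congrArg (bxLam (Fintype.card F) (m % Fintype.card F)) hsum
        rw [bxLam_sum] at this
        have hz : bxLam (Fintype.card F) (m % Fintype.card F) (0 : PowerSeries F) = 0 := by
          ext; simp
        rw [hz] at this
        rw [← this]
        refine Finset.sum_congr rfl fun i _ => ?_
        rw [pow_succ, pow_mul, mul_comm (c (i + 1) : PowerSeries F), bxLam_pow_mul _ _ _ hr,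
          bx_lamP_coe (hc' i), mul_comm]
    · refine ⟨n, fun i => if i ≤ n then c i else 0, by simpa using h0, ?_⟩
      rw [Finset.sum_range_succ]
      simp only [Nat.not_succ_le_self, if_false, Polynomial.coe_zero, zero_mul, add_zero]
      rw [← hsum]
      refine Finset.sum_congr rfl fun i hi => ?_
      rw [if_pos (by simp at hi; omega)]

theorem bx_christol_hard_q [Fintype F] (f : PowerSeries F) (h : IsAlgebraic (Polynomial F) f) :
    IsKAutomatic (Fintype.card F) (fun n => coeff n f) := by
  obtain ⟨n, c, h0, hsum⟩ := bx_ore f h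
  have hq1 : 1 < Fintype.card F := Fintype.one_lt_card
  set q := Fintype.card F with hqd
  let c0 : PowerSeries F := (c 0 : PowerSeries F)
  have hc0 : c0 ≠ 0 := by simpa [c0] using h0
  let e : ℕ → Polynomial F := fun i => - c (i + 1) * (c 0) ^ (q ^ (i + 1) - 2)
  obtain ⟨D, hD0, hDe⟩ : ∃ D, (c 0).natDegree ≤ D ∧ ∀ i ∈ Finset.range (n + 1),
      (e i).natDegree ≤ D := by
    refine ⟨(c 0).natDegree + (Finset.range (n + 1)).sup (fun i => (e i).natDegree), by omega, ?_⟩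
    intro i hi
    have := Finset.le_sup (f := fun i => (e i).natDegree) hi
    omega
  -- the finite set of coefficient vectors
  let V' : Set (ℕ → Polynomial F) := {d | ∀ i, (d i).natDegree ≤ D}
  let S : (ℕ → Polynomial F) → PowerSeries F := fun d =>
    ∑ i ∈ Finset.range (n + 2), (d i : PowerSeries F) * (c0 ^ (q ^ (n + 1) - q ^ i) * f ^ q ^ i)
  let U : Set (PowerSeries F) := {y | ∃ d ∈ V', c0 ^ q ^ (n + 1) * y = S d}
  have hfinD : {d : Polynomial F | d.natDegree ≤ D}.Finite := by
    have : Finite (Polynomial.degreeLT F (D + 1)) :=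
      Finite.of_equiv _ (Polynomial.degreeLTEquiv F (D + 1)).toEquiv.symm
    refine (Set.toFinite (Polynomial.degreeLT F (D + 1) : Set (Polynomial F))).subset ?_
    intro d hd
    simp only [SetLike.mem_coe, Polynomial.mem_degreeLT]
    refine lt_of_le_of_lt Polynomial.degree_le_natDegree ?_
    have : d.natDegree ≤ D := hd
    exact_mod_cast Nat.lt_succ_of_le this
  have hUfin : U.Finite := by
    have hfinS : (S '' V').Finite := by
      have hpi : {d : Fin (n + 2) → Polynomial F | ∀ i, d i ∈ {d : Polynomial F | d.natDegree ≤ D}}.Finite :=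
        Set.Finite.pi' (fun _ => hfinD)
      refine (hpi.image (fun d => ∑ i : Fin (n + 2), (d i : PowerSeries F) *
        (c0 ^ (q ^ (n + 1) - q ^ (i : ℕ)) * f ^ q ^ (i : ℕ)))).subset ?_
      rintro _ ⟨d, hd, rfl⟩
      refine ⟨fun i => d i, fun i => hd i, ?_⟩
      simp only [S]
      rw [Finset.sum_range]
    refine Set.Finite.of_finite_image (f := fun y => c0 ^ q ^ (n + 1) * y) (hfinS.subset ?_) ?_
    · rintro _ ⟨y, ⟨d, hd, hy⟩, rfl⟩
      exact ⟨d, hd, hy.symm⟩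
    · intro a _ b _ hab
      exact mul_left_cancel₀ (pow_ne_zero _ hc0) hab
  have hqpos : ∀ i, 1 ≤ q ^ i := fun i => Nat.one_le_pow _ _ (by omega)
  have hqmono : ∀ i, i ≤ n + 1 → q ^ i ≤ q ^ (n + 1) := fun i hi =>
    Nat.pow_le_pow_right (by omega) hi
  have hq2 : ∀ i, 2 ≤ q ^ (i + 1) := fun i => by
    calc 2 ≤ q := hq1
      _ = q ^ 1 := (pow_one _).symm
      _ ≤ q ^ (i + 1) := Nat.pow_le_pow_right (by omega) (by omega)
  refine bx_finite_kernel q (by omega) U hUfin ?_ f ?_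
  · rintro y ⟨d, hd, hy⟩ r hr
    have hy2 : c0 ^ q ^ (n + 1) * y = ∑ i ∈ Finset.range (n + 1),
        (c0 ^ (q ^ n - q ^ i) * f ^ q ^ i) ^ q * ((d (i + 1) + d 0 * e i : Polynomial F) : PowerSeries F) := by
      rw [hy]
      simp only [S]
      rw [Finset.sum_range_succ']
      have hrel : c0 * f = - ∑ i ∈ Finset.range (n + 1), (c (i + 1) : PowerSeries F) * f ^ q ^ (i + 1) := by
        rw [Finset.sum_range_succ'] at hsum
        simp only [pow_zero, pow_one] at hsum
        linear_combination hsum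
      have hzero : c0 ^ (q ^ (n + 1) - q ^ 0) * f ^ q ^ 0 = ∑ i ∈ Finset.range (n + 1),
          (e i : PowerSeries F) * (c0 ^ (q ^ (n + 1) - q ^ (i + 1)) * f ^ q ^ (i + 1)) := by
        have e1 : q ^ (n + 1) - q ^ 0 = (q ^ (n + 1) - 2) + 1 := by have := hq2 n; simp; omega
        rw [e1, pow_succ, pow_zero, pow_one, mul_assoc, hrel, mul_neg, Finset.mul_sum,
          ← Finset.sum_neg_distrib]
        refine Finset.sum_congr rfl fun i hi => ?_
        have e2 : q ^ (n + 1) - 2 = (q ^ (i + 1) - 2) + (q ^ (n + 1) - q ^ (i + 1)) := by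
          have := hq2 i
          have := hqmono (i + 1) (by simp at hi; omega)
          omega
        rw [e2, pow_add]
        simp only [e, Polynomial.coe_mul, Polynomial.coe_neg, Polynomial.coe_pow]
        ring
      rw [hzero, Finset.mul_sum, ← Finset.sum_add_distrib]
      refine Finset.sum_congr rfl fun i hi => ?_
      have e3 : (q ^ n - q ^ i) * q = q ^ (n + 1) - q ^ (i + 1) := by
        rw [Nat.sub_mul, pow_succ, pow_succ]
      rw [mul_pow, ← pow_mul, ← pow_mul, e3, ← pow_succ]
      simp only [Polynomial.coe_add, Polynomial.coe_mul]
      ring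
    choose d' hd' using fun i => bx_lamP q r (by omega) (d (i + 1) + d 0 * e i)
    refine ⟨fun i => if i < n + 1 then d' i else 0, ?_, ?_⟩
    · intro i
      simp only
      split_ifs with hi
      · rw [Polynomial.natDegree_le_iff_coeff_eq_zero]
        intro N hN
        rw [hd' i N]
        apply Polynomial.coeff_eq_zero_of_natDegree_lt
        have h1 : (d (i + 1) + d 0 * e i).natDegree ≤ 2 * D := by
          refine (Polynomial.natDegree_add_le _ _).trans (max_le ?_ ?_)
          · exact (hd _).trans (by omega)
          · refine Polynomial.natDegree_mul_le.trans ?_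
            have := hd 0
            have := hDe i (by simpa using hi)
            omega
        have : 2 * N ≤ q * N := Nat.mul_le_mul_right _ hq1
        omega
      · simp
    · have hl := congrArg (bxLam q r) hy2
      rw [pow_succ, pow_mul, bxLam_pow_mul _ _ _ hr, bxLam_sum] at hl
      have e4 : q ^ (n + 1) = (q ^ (n + 1) - q ^ n) + q ^ n := by
        have := hqmono n (by omega)
        omega
      rw [e4, pow_add, mul_assoc, hl]
      simp only [S]
      rw [Finset.sum_range_succ _ (n + 1), if_neg (by omega)]
      simp only [Polynomial.coe_zero, zero_mul, add_zero]
      rw [Finset.mul_sum]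
      refine Finset.sum_congr rfl fun i hi => ?_
      have hi' : i < n + 1 := by simpa using hi
      rw [if_pos hi', bxLam_pow_mul _ _ _ hr, bx_lamP_coe (hd' i)]
      have e5 : q ^ (n + 1) - q ^ i = (q ^ (n + 1) - q ^ n) + (q ^ n - q ^ i) := by
        have := hqmono n (by omega)
        have : q ^ i ≤ q ^ n := Nat.pow_le_pow_right (by omega) (by omega)
        omega
      rw [e5, pow_add]
      ring
  · refine ⟨fun i => if i = 0 then c 0 else 0, ?_, ?_⟩
    · intro i
      simp only
      split_ifs
      · exact hD0
      · simp
    · simp only [S]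
      rw [Finset.sum_eq_single 0]
      · have e1 : q ^ (n + 1) = 1 + (q ^ (n + 1) - q ^ 0) := by have := hqpos (n + 1); simp; omega
        conv_lhs => rw [e1, pow_add, pow_one]
        simp only [if_true, pow_zero, pow_one]
        ring
      · intro i _ hi
        simp [hi]
      · simp

theorem bx_christol_hard [Fintype F] (p : ℕ) [Fact p.Prime] [CharP F p] (f : PowerSeries F)
    (h : IsAlgebraic (Polynomial F) f) : IsKAutomatic p (fun n => coeff n f) := by
  obtain ⟨s, hprime, hs⟩ := FiniteField.card F p
  have h := bx_christol_hard_q f h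
  rw [hs] at h
  exact bx_auto_of_pow p s hprime.pos s.pos _ h

end

section
open PowerSeries
variable {F : Type*} [Field F]

noncomputable def bxStep (d : ℕ) (w' f : PowerSeries F) : PowerSeries F :=
  w' * PowerSeries.mk (fun n => coeff (n + d) f)

noncomputable def bxH (d : ℕ) (w' : PowerSeries F) (j : ℕ) (f : PowerSeries F) : PowerSeries F :=
  PowerSeries.mk (fun n => coeff j ((bxStep d w')^[n] f))

theorem bxStep_eq (d : ℕ) (w w' : PowerSeries F) (hw : w * w' = 1) (f : PowerSeries F) :
    f = (∑ j : Fin d, X ^ (j : ℕ) * C (coeff (j : ℕ) f)) + X ^ d * w * bxStep d w' f := by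
  have h := eq_X_pow_mul_shift_add_trunc d f
  have h2 : (f.trunc d : PowerSeries F) = ∑ j : Fin d, X ^ (j : ℕ) * C (coeff (j : ℕ) f) := by
    ext n
    rw [map_sum, Polynomial.coeff_coe, coeff_trunc]
    simp only [coeff_X_pow_mul', coeff_C]
    split_ifs with hn
    · rw [Finset.sum_eq_single (⟨n, hn⟩ : Fin d)]
      · simp
      · intro b _ hb
        have : (b : ℕ) ≠ n := fun h => hb (Fin.ext h)
        split_ifs <;> first | rfl | (exfalso; omega)
      · simp
    · symm
      apply Finset.sum_eq_zero
      intro b _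
      have := b.2
      split_ifs <;> first | rfl | (exfalso; omega)
  rw [bxStep, ← h2]
  conv_lhs => rw [h]
  linear_combination (- X ^ d * (PowerSeries.mk fun i ↦ coeff (i + d) f)) * hw

theorem bxH_step (d : ℕ) (w' : PowerSeries F) (j : ℕ) (f : PowerSeries F) :
    bxH d w' j f = C (coeff j f) + X * bxH d w' j (bxStep d w' f) := by
  ext n
  cases n with
  | zero => simp [bxH]
  | succ n => simp [bxH, coeff_C, coeff_succ_X_mul]

variable (d : ℕ) (hd : 0 < d) (w w' : PowerSeries F) (hw : w * w' = 1)
  (s : PowerSeries F →ₐ[F] PowerSeries F) (hs : s X = X ^ d * w)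

theorem bx_sC (s : PowerSeries F →ₐ[F] PowerSeries F) (c : F) : s (C c) = C c := by
  have := s.commutes c
  simpa [PowerSeries.algebraMap_apply] using this

include hd hw hs in
theorem bx_exist (f : PowerSeries F) :
    f = ∑ j : Fin d, X ^ (j : ℕ) * s (bxH d w' j f) := by
  have hD : ∀ f : PowerSeries F, f - ∑ j : Fin d, X ^ (j : ℕ) * s (bxH d w' j f) =
      (X ^ d * w) * (bxStep d w' f -
        ∑ j : Fin d, X ^ (j : ℕ) * s (bxH d w' j (bxStep d w' f))) := by
    intro f
    have h1 : ∑ j : Fin d, X ^ (j : ℕ) * s (bxH d w' j f) =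
        (∑ j : Fin d, X ^ (j : ℕ) * C (coeff (j : ℕ) f)) +
        (X ^ d * w) * ∑ j : Fin d, X ^ (j : ℕ) * s (bxH d w' j (bxStep d w' f)) := by
      rw [Finset.mul_sum, ← Finset.sum_add_distrib]
      refine Finset.sum_congr rfl fun j _ => ?_
      rw [bxH_step, map_add, map_mul, bx_sC, hs]
      ring
    rw [h1]
    linear_combination bxStep_eq d w w' hw f
  have hdvd : ∀ n, ∀ f : PowerSeries F,
      (X : PowerSeries F) ^ n ∣ f - ∑ j : Fin d, X ^ (j : ℕ) * s (bxH d w' j f) := by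
    intro n
    induction n with
    | zero => simp
    | succ n ih =>
      intro f
      rw [hD f, pow_succ']
      refine mul_dvd_mul ?_ (ih _)
      exact Dvd.dvd.mul_right (dvd_pow_self _ (by omega)) _
  rw [← sub_eq_zero]
  ext n
  exact X_pow_dvd_iff.1 (hdvd (n + 1) f) n (by omega)

include hw hs in
theorem bx_uniq (h : Fin d → PowerSeries F)
    (h0 : ∑ j : Fin d, X ^ (j : ℕ) * s (h j) = 0) (j : Fin d) : h j = 0 := by
  have hw0 : w ≠ 0 := left_ne_zero_of_mul_eq_one hw
  have main : ∀ n, ∀ h : Fin d → PowerSeries F,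
      ∑ j : Fin d, X ^ (j : ℕ) * s (h j) = 0 → ∀ j, coeff n (h j) = 0 := by
    have key : ∀ h : Fin d → PowerSeries F,
      ∑ j : Fin d, X ^ (j : ℕ) * s (h j) = 0 → (∀ j, coeff 0 (h j) = 0) ∧
        ∑ j : Fin d, X ^ (j : ℕ) * s (PowerSeries.mk fun n => coeff (n + 1) (h j)) = 0 := by
      intro h h0
      have e : ∑ j : Fin d, X ^ (j : ℕ) * s (h j) =
          (∑ j : Fin d, X ^ (j : ℕ) * C (coeff 0 (h j))) + X ^ d * (w *
          ∑ j : Fin d, X ^ (j : ℕ) * s (PowerSeries.mk fun n => coeff (n + 1) (h j))) := by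
        rw [Finset.mul_sum, Finset.mul_sum, ← Finset.sum_add_distrib]
        refine Finset.sum_congr rfl fun j _ => ?_
        conv_lhs => rw [eq_X_mul_shift_add_const (h j)]
        rw [map_add, map_mul, bx_sC, hs]
        simp
        ring
      rw [e] at h0
      have hc : ∀ j, coeff 0 (h j) = 0 := by
        intro j
        have := congrArg (coeff (j : ℕ)) h0
        rw [map_add, coeff_X_pow_mul', if_neg (by have := j.2; omega), map_sum,
          Finset.sum_eq_single j] at this
        · simpa [coeff_X_pow_mul'] using this
        · intro b _ hb
          have : (b : ℕ) ≠ j := fun h => hb (Fin.ext h)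
          rw [coeff_X_pow_mul', coeff_C]
          split_ifs <;> first | rfl | (exfalso; omega)
        · simp
      refine ⟨hc, ?_⟩
      simp only [hc, map_zero, mul_zero, Finset.sum_const_zero, zero_add] at h0
      have h1 := (mul_eq_zero.1 h0).resolve_left (pow_ne_zero _ X_ne_zero)
      exact (mul_eq_zero.1 h1).resolve_left hw0
    intro n
    induction n with
    | zero => exact fun h h0 => (key h h0).1
    | succ n ih =>
      intro h h0 j
      simpa using ih _ (key h h0).2 j
  ext n
  simpa using main n h h0 j

include hd hw hs

theorem bxH_eq (f : PowerSeries F) (h : Fin d → PowerSeries F)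
    (h0 : f = ∑ j : Fin d, X ^ (j : ℕ) * s (h j)) (j : Fin d) : bxH d w' j f = h j := by
  rw [← sub_eq_zero]
  refine bx_uniq d w w' hw s hs (fun j => bxH d w' j f - h j) ?_ j
  simp only [map_sub, mul_sub, Finset.sum_sub_distrib]
  rw [← h0, ← bx_exist d hd w w' hw s hs, sub_self]

theorem bxH_sum {ι : Type*} (t : Finset ι) (u y : ι → PowerSeries F) (j : Fin d) :
    bxH d w' j (∑ i ∈ t, s (u i) * y i) = ∑ i ∈ t, u i * bxH d w' j (y i) := by
  refine bxH_eq d hd w w' hw s hs _ (fun j => ∑ i ∈ t, u i * bxH d w' j (y i)) ?_ j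
  simp only [map_sum, Finset.mul_sum]
  rw [Finset.sum_comm]
  refine Finset.sum_congr rfl fun i _ => ?_
  conv_lhs => rw [bx_exist d hd w w' hw s hs (y i)]
  rw [Finset.mul_sum]
  refine Finset.sum_congr rfl fun j _ => ?_
  rw [map_mul]
  ring

theorem bx_s_inj : Function.Injective s := by
  rw [injective_iff_map_eq_zero]
  intro a ha
  refine bx_uniq d w w' hw s hs (fun _ => a) ?_ ⟨0, hd⟩
  simp [ha]

end

section
open Polynomial

theorem bx_eval2_aa {F A : Type*} [Field F] [CommRing A] [Algebra F A] (x y : A) (P : F[X][X]) :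
    eval₂ (aeval x : F[X] →ₐ[F] A).toRingHom y P = aevalAeval x y P := by
  have : eval₂RingHom (aeval x : F[X] →ₐ[F] A).toRingHom y =
      (aevalAeval x y : F[X][X] →ₐ[F] A).toRingHom := by
    apply Polynomial.ringHom_ext'
    · apply Polynomial.ringHom_ext <;> simp
    · simp
  exact RingHom.congr_fun this P

theorem bx_exch {F A : Type*} [Field F] [CommRing A] [Algebra F A] (x y : A) :
    (∃ P : F[X][X], P ≠ 0 ∧ eval₂ (aeval x : F[X] →ₐ[F] A).toRingHom y P = 0) ↔
    (∃ P : F[X][X], P ≠ 0 ∧ eval₂ (aeval y : F[X] →ₐ[F] A).toRingHom x P = 0) := by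
  simp only [bx_eval2_aa]
  constructor
  · rintro ⟨P, h1, h2⟩
    exact ⟨Bivariate.swap P, by simpa using h1, by rw [Bivariate.aevalAeval_swap, h2]⟩
  · rintro ⟨P, h1, h2⟩
    exact ⟨Bivariate.swap P, by simpa using h1, by rw [Bivariate.aevalAeval_swap, h2]⟩

theorem bx_coe_aeval {F : Type*} [Field F] :
    (aeval (PowerSeries.X : PowerSeries F) : F[X] →ₐ[F] PowerSeries F).toRingHom =
      algebraMap F[X] (PowerSeries F) := by
  apply Polynomial.ringHom_ext
  · intro a; simp [PowerSeries.algebraMap_apply', PowerSeries.algebraMap_apply]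
  · simp [PowerSeries.algebraMap_apply']

theorem bx_s_coe {F : Type*} [Field F] (s : PowerSeries F →ₐ[F] PowerSeries F) :
    s.toRingHom.comp (algebraMap F[X] (PowerSeries F)) =
    (aeval (s PowerSeries.X) : F[X] →ₐ[F] PowerSeries F).toRingHom := by
  rw [← bx_coe_aeval]
  apply Polynomial.ringHom_ext
  · intro a; simp [bx_sC]
  · simp

theorem bx_exch' {F : Type*} [Field F] (s : PowerSeries F →ₐ[F] PowerSeries F) :
    IsAlgebraic F[X] (s PowerSeries.X) ↔ ∃ P : F[X][X], P ≠ 0 ∧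
      eval₂ (s.toRingHom.comp (algebraMap F[X] (PowerSeries F))) PowerSeries.X P = 0 := by
  rw [bx_s_coe, ← bx_exch, bx_coe_aeval]
  rfl

end

section
open PowerSeries
variable {F : Type*} [Field F]
variable (d : ℕ) (hd : 0 < d) (w w' : PowerSeries F) (hw : w * w' = 1)
  (s : PowerSeries F →ₐ[F] PowerSeries F) (hs : s X = X ^ d * w)

theorem bx_dvd_alg {K L : Type*} [Field K] [Field L] [Algebra K L] (P : Polynomial K) (hP : P ≠ 0)
    (Q : Polynomial L) (hQ : Q.Monic) (h : Q ∣ P.map (algebraMap K L)) (i : ℕ) :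
    IsAlgebraic K (Q.coeff i) := by
  have hm := Polynomial.monic_mul_leadingCoeff_inv hP
  refine (Polynomial.isIntegral_coeff_of_dvd _ Q hm hQ ?_ i).isAlgebraic
  rw [Polynomial.map_mul]
  exact h.mul_right _

include hd hw hs

theorem bx_m_alg (hγ : IsAlgebraic (Polynomial F) (X ^ d * w)) (j : Fin d) :
    IsAlgebraic (Polynomial F) (bxH d w' j (X ^ d)) := by
  rw [← hs, bx_exch'] at hγ
  obtain ⟨P, hP0, hP⟩ := hγ
  let R : Polynomial (PowerSeries F) :=
    ∑ j : Fin d, Polynomial.C (bxH d w' j (X ^ d)) * Polynomial.X ^ (j : ℕ)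
  have hRdeg : R.degree < d := by
    refine (Polynomial.degree_sum_le _ _).trans_lt ?_
    rw [Finset.sup_lt_iff (by exact WithBot.bot_lt_coe d)]
    intro j _
    exact (Polynomial.degree_C_mul_X_pow_le _ _).trans_lt (by exact_mod_cast j.2)
  let Q : Polynomial (PowerSeries F) := Polynomial.X ^ d - R
  have hQm : Q.Monic := Polynomial.monic_X_pow_sub hRdeg
  have hQd : Q.degree = d := by
    simp only [Q]
    rw [Polynomial.degree_sub_eq_left_of_degree_lt] <;> simp [hRdeg]
  have hQX : Q.eval₂ s.toRingHom X = 0 := by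
    simp only [Q, R, Polynomial.eval₂_sub, Polynomial.eval₂_finsetSum, Polynomial.eval₂_mul,
      Polynomial.eval₂_C, Polynomial.eval₂_X_pow, AlgHom.toRingHom_eq_coe, RingHom.coe_coe]
    rw [sub_eq_zero]
    conv_lhs => rw [bx_exist d hd w w' hw s hs (X ^ d)]
    refine Finset.sum_congr rfl fun j _ => mul_comm _ _
  let P' := P.map (algebraMap (Polynomial F) (PowerSeries F))
  have hP'X : P'.eval₂ s.toRingHom X = 0 := by
    simp only [P', Polynomial.eval₂_map]
    exact hP
  have hrem : P' %ₘ Q = 0 := by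
    have h1 : (P' %ₘ Q).eval₂ s.toRingHom X = 0 := by
      have h2 := congrArg (Polynomial.eval₂ s.toRingHom X) (Polynomial.modByMonic_add_div P' Q)
      rw [Polynomial.eval₂_add, Polynomial.eval₂_mul, hQX, hP'X] at h2
      simpa using h2
    have h3 : (P' %ₘ Q).degree < d := hQd ▸ Polynomial.degree_modByMonic_lt P' hQm
    by_cases hz : P' %ₘ Q = 0
    · exact hz
    have h4 : (P' %ₘ Q).natDegree < d := (Polynomial.natDegree_lt_iff_degree_lt hz).2 h3
    rw [Polynomial.eval₂_eq_sum_range' _ h4, Finset.sum_range] at h1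
    ext1 i
    rw [Polynomial.coeff_zero]
    by_cases hi : i < d
    · refine bx_uniq d w w' hw s hs (fun j : Fin d => (P' %ₘ Q).coeff j) ?_ ⟨i, hi⟩
      rw [← h1]
      exact Finset.sum_congr rfl fun j _ => mul_comm _ _
    · exact Polynomial.coeff_eq_zero_of_natDegree_lt (by omega)
  have hdvd : Q ∣ P' := (Polynomial.modByMonic_eq_zero_iff_dvd hQm).1 hrem
  have hdvd2 := Polynomial.map_dvd (HahnSeries.ofPowerSeries ℤ F) hdvd
  simp only [P'] at hdvd2
  rw [Polynomial.map_map, ← bx_tower, IsScalarTower.algebraMap_eq (Polynomial F) (RatFunc F)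
    (LaurentSeries F), ← Polynomial.map_map] at hdvd2
  have hinj : Function.Injective (algebraMap (Polynomial F) (RatFunc F)) :=
    IsFractionRing.injective _ _
  have h5 := bx_dvd_alg _ ((Polynomial.map_ne_zero_iff hinj).2 hP0) _
    (hQm.map _) hdvd2 j
  rw [Polynomial.coeff_map, bx_bridge] at h5
  have h6 : Q.coeff j = - bxH d w' j (X ^ d) := by
    simp only [Q, R, Polynomial.coeff_sub, Polynomial.coeff_X_pow, Polynomial.finsetSum_coeff,
      Polynomial.coeff_C_mul]
    rw [if_neg (by have := j.2; omega), Finset.sum_eq_single j]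
    · simp
    · intro b _ hb
      have : (j : ℕ) ≠ b := fun h => hb (Fin.ext h.symm)
      simp [this]
    · simp
  rw [h6] at h5
  simpa using h5.neg

theorem bx_Xn_alg (hγ : IsAlgebraic (Polynomial F) (X ^ d * w)) (n : ℕ) (j : Fin d) :
    IsAlgebraic (Polynomial F) (bxH d w' j (X ^ n)) := by
  have hsmall : ∀ n ≤ d, ∀ j : Fin d, bxH d w' j (X ^ n) ∈
      Subalgebra.algebraicClosure (Polynomial F) (PowerSeries F) := by
    intro n hn j
    rcases hn.lt_or_eq with h | rfl
    · rw [bxH_eq d hd w w' hw s hs (X ^ n) (fun i => if (i : ℕ) = n then 1 else 0)]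
      · split_ifs
        · exact one_mem _
        · exact zero_mem _
      · rw [Finset.sum_eq_single (⟨n, h⟩ : Fin d)]
        · simp
        · intro b _ hb
          have : (b : ℕ) ≠ n := fun h => hb (Fin.ext h)
          simp [this]
        · simp
    · exact bx_m_alg n hd w w' hw s hs hγ j
  induction n generalizing j with
  | zero => exact hsmall 0 (by omega) j
  | succ n ih =>
    have : (X : PowerSeries F) ^ (n + 1) = ∑ l : Fin d, s (bxH d w' l (X ^ n)) * X ^ ((l : ℕ) + 1) := by
      conv_lhs => rw [pow_succ, bx_exist d hd w w' hw s hs (X ^ n)]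
      rw [Finset.sum_mul]
      refine Finset.sum_congr rfl fun l _ => ?_
      ring
    rw [this, bxH_sum d hd w w' hw s hs]
    refine Subalgebra.sum_mem (Subalgebra.algebraicClosure (Polynomial F) (PowerSeries F))
      fun l _ => ?_
    exact mul_mem (ih l) (hsmall _ (by have := l.2; omega) j)

theorem bx_cXn_alg (hγ : IsAlgebraic (Polynomial F) (X ^ d * w)) (c : Polynomial F) (n : ℕ)
    (j : Fin d) :
    IsAlgebraic (Polynomial F) (bxH d w' j ((c : PowerSeries F) * X ^ n)) := by
  have : (c : PowerSeries F) * X ^ n =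
      ∑ i ∈ Finset.range (c.natDegree + 1), s (C (c.coeff i)) * X ^ (i + n) := by
    conv_lhs => rw [Polynomial.as_sum_range_C_mul_X_pow c]
    rw [← Polynomial.coeToPowerSeries.ringHom_apply, map_sum, Finset.sum_mul]
    refine Finset.sum_congr rfl fun i _ => ?_
    rw [bx_sC]
    simp [pow_add, mul_assoc]
  rw [this, bxH_sum d hd w w' hw s hs]
  refine Subalgebra.sum_mem (Subalgebra.algebraicClosure (Polynomial F) (PowerSeries F))
      fun l _ => ?_
  refine mul_mem ?_ (bx_Xn_alg d hd w w' hw s hs hγ _ j)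
  have := isAlgebraic_algebraMap (R := Polynomial F) (A := PowerSeries F) (Polynomial.C (c.coeff l))
  rw [Subalgebra.mem_algebraicClosure]
  simpa [PowerSeries.algebraMap_apply'] using this

end

section
open PowerSeries

/-- abstract linear algebra: solving an invertible linear system over a subfield -/
theorem bx_solve {E L ι : Type*} [Field E] [Field L] [Algebra E L] [Fintype ι] [DecidableEq ι]
    (M : Matrix ι ι E) (hM : M.det ≠ 0) (h : ι → L) (V : Submodule E L)
    (hV : ∀ j, ∑ l, M j l • h l ∈ V) (i : ι) : h i ∈ V := by
  have e : h i = ∑ j, M⁻¹ i j • ∑ l, M j l • h l := by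
    simp only [Finset.smul_sum, smul_smul]
    rw [Finset.sum_comm]
    simp only [← Finset.sum_smul]
    have h1 : ∀ l, ∑ j, M⁻¹ i j * M j l = (1 : Matrix ι ι E) i l := by
      intro l
      rw [← Matrix.nonsing_inv_mul M (isUnit_iff_ne_zero.2 hM), Matrix.mul_apply]
    simp only [h1]
    rw [Finset.sum_eq_single i]
    · simp
    · intro b _ hb
      simp [Matrix.one_apply_ne hb.symm]
    · simp
  rw [e]
  exact Submodule.sum_mem _ fun j _ => V.smul_mem _ (hV j)

/-- abstract version of the main step -/
theorem bx_main_abs {K L : Type*} [Field K] [Field L] [Algebra K L] (p s : ℕ) [ExpChar L p]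
    (hq : 1 < p ^ s) (d n : ℕ) (h : Fin d → L) (a : Fin d → ℕ → Fin d → L)
    (ha : ∀ j i l, IsAlgebraic K (a j i l))
    (hdet : (Matrix.of fun j l => a j 0 l).det ≠ 0)
    (hsum : ∀ j, ∑ i ∈ Finset.range (n + 2), ∑ l, h l ^ ((p ^ s) ^ i) * a j i l = 0) (l : Fin d) :
    IsAlgebraic K (h l) := by
  set q := p ^ s with hqd
  let E := algebraicClosure K L
  have haE : ∀ j i l, a j i l ∈ E := fun j i l => mem_algebraicClosure_iff.2 (ha j i l)
  let M : Matrix (Fin d) (Fin d) E := Matrix.of fun j l => ⟨a j 0 l, haE j 0 l⟩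
  have hM : M.det ≠ 0 := by
    intro hz
    apply hdet
    have := congrArg (algebraMap E L) hz
    rw [RingHom.map_det, map_zero] at this
    exact this
  let u : Fin (n + 1) × Fin d → L := fun x => h x.2 ^ (q ^ (x.1 : ℕ))
  have hsol : ∀ l, h l ∈ Submodule.span E (Set.range fun x => u x ^ (p ^ s)) := by
    refine bx_solve M hM h _ fun j => ?_
    have h1 := hsum j
    rw [Finset.sum_range_succ'] at h1
    have h2 : ∑ l, M j l • h l = - ∑ i ∈ Finset.range (n + 1), ∑ l, h l ^ (q ^ (i + 1)) * a j (i + 1) l := by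
      have h3 : ∑ l, M j l • h l = ∑ l, h l ^ (q ^ 0) * a j 0 l := by
        refine Finset.sum_congr rfl fun l _ => ?_
        rw [Algebra.smul_def, mul_comm, pow_zero, pow_one]
        rfl
      rw [h3]
      linear_combination h1
    rw [h2]
    refine Submodule.neg_mem _ (Submodule.sum_mem _ fun i hi => Submodule.sum_mem _ fun l _ => ?_)
    have h4 : h l ^ (q ^ (i + 1)) * a j (i + 1) l =
        (⟨a j (i + 1) l, haE _ _ _⟩ : E) • (u (⟨i, by simpa using hi⟩, l) ^ (p ^ s)) := by
      rw [Algebra.smul_def, mul_comm]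
      simp only [u]
      rw [pow_succ q i, pow_mul]
      rfl
    rw [h4]
    exact Submodule.smul_mem _ _ (Submodule.subset_span ⟨_, rfl⟩)
  have halg : IsAlgebraic E (u (0, l)) := by
    refine bx_lemA (E := E) p s hq u ?_ (0, l)
    rintro ⟨i, l⟩
    induction i using Fin.cases with
    | zero => simpa [u] using hsol l
    | succ i =>
      refine Submodule.subset_span ⟨(i.castSucc, l), ?_⟩
      simp only [u]
      rw [← pow_mul, ← hqd, ← pow_succ]
      simp
  have h5 : IsAlgebraic E (h l) := by simpa [u] using halg
  exact h5.restrictScalars K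

variable {F : Type*} [Field F]
variable (d : ℕ) (hd : 0 < d) (w w' : PowerSeries F) (hw : w * w' = 1)
  (s : PowerSeries F →ₐ[F] PowerSeries F) (hs : s X = X ^ d * w)
include hd hw hs

theorem bx_main [Fintype F] (hγ : IsAlgebraic (Polynomial F) (X ^ d * w)) (f : PowerSeries F)
    (hf : IsAlgebraic (Polynomial F) f) (l : Fin d) :
    IsAlgebraic (Polynomial F) (bxH d w' l f) := by
  obtain ⟨n, c, hc0, hsum⟩ := bx_ore f hf
  obtain ⟨p, hp⟩ := CharP.exists F
  obtain ⟨t, hprime, ht⟩ := FiniteField.card F p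
  have : Fact p.Prime := ⟨hprime⟩
  have hcR : CharP (PowerSeries F) p :=
    charP_of_injective_ringHom (f := (PowerSeries.C : F →+* PowerSeries F)) PowerSeries.C_injective p
  have hcL : CharP (LaurentSeries F) p :=
    charP_of_injective_ringHom (HahnSeries.ofPowerSeries_injective (Γ := ℤ) (R := F)) p
  have hEL : ExpChar (LaurentSeries F) p := ExpChar.prime hprime
  let h : Fin d → PowerSeries F := fun l => bxH d w' l f
  let a : Fin d → ℕ → Fin d → PowerSeries F := fun j i l =>
    bxH d w' j ((c i : PowerSeries F) * X ^ ((l : ℕ) * (Fintype.card F) ^ i))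
  have hpow : ∀ i, f ^ (Fintype.card F ^ i) =
      ∑ l : Fin d, s (h l ^ (Fintype.card F ^ i)) * X ^ ((l : ℕ) * (Fintype.card F) ^ i) := by
    intro i
    conv_lhs => rw [bx_exist d hd w w' hw s hs f, ht, ← pow_mul, sum_pow_char_pow]
    refine Finset.sum_congr rfl fun l _ => ?_
    rw [ht, ← pow_mul, mul_pow, ← pow_mul, map_pow, mul_comm]
  have key : ∀ j : Fin d, ∑ i ∈ Finset.range (n + 2), ∑ l, h l ^ ((Fintype.card F) ^ i) * a j i l = 0 := by
    intro j
    have e : ∑ x ∈ Finset.range (n + 2) ×ˢ (Finset.univ : Finset (Fin d)),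
        s (h x.2 ^ ((Fintype.card F) ^ x.1)) *
          ((c x.1 : PowerSeries F) * X ^ ((x.2 : ℕ) * (Fintype.card F) ^ x.1)) = 0 := by
      rw [Finset.sum_product, ← hsum]
      refine Finset.sum_congr rfl fun i _ => ?_
      rw [hpow i, Finset.mul_sum]
      refine Finset.sum_congr rfl fun l _ => ?_
      ring
    have h1 := bxH_sum d hd w w' hw s hs (Finset.range (n + 2) ×ˢ (Finset.univ : Finset (Fin d)))
      (fun x => h x.2 ^ ((Fintype.card F) ^ x.1))
      (fun x => (c x.1 : PowerSeries F) * X ^ ((x.2 : ℕ) * (Fintype.card F) ^ x.1)) j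
    rw [e, Finset.sum_product] at h1
    rw [← h1]
    refine bxH_eq d hd w w' hw s hs 0 (fun _ => 0) (by simp) j
  have hdet : (Matrix.of fun j l => a j 0 l).det ≠ 0 := by
    intro hz
    obtain ⟨v, hv0, hv⟩ := Matrix.exists_mulVec_eq_zero_iff.2 hz
    apply hv0
    have h2 : ∀ j : Fin d, bxH d w' j (∑ l : Fin d, s (v l) * ((c 0 : PowerSeries F) * X ^ (l : ℕ))) = 0 := by
      intro j
      rw [bxH_sum d hd w w' hw s hs]
      have := congrFun hv j
      simp only [Matrix.mulVec, dotProduct, Matrix.of_apply, a, pow_zero, mul_one, Pi.zero_apply] at this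
      rw [← this]
      exact Finset.sum_congr rfl fun l _ => mul_comm _ _
    have h3 := bx_exist d hd w w' hw s hs (∑ l : Fin d, s (v l) * ((c 0 : PowerSeries F) * X ^ (l : ℕ)))
    simp only [h2, map_zero, mul_zero, Finset.sum_const_zero] at h3
    have h4 : (c 0 : PowerSeries F) * ∑ l : Fin d, X ^ (l : ℕ) * s (v l) = 0 := by
      rw [← h3, Finset.mul_sum]
      refine Finset.sum_congr rfl fun l _ => by ring
    have h5 := (mul_eq_zero.1 h4).resolve_left (by simpa using hc0)
    funext l
    exact bx_uniq d w w' hw s hs v h5 l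
  have hq : 1 < p ^ (t : ℕ) := by rw [← ht]; exact Fintype.one_lt_card
  rw [← bx_bridge]
  refine bx_main_abs (K := RatFunc F) p t hq d n (fun l => HahnSeries.ofPowerSeries ℤ F (h l))
    (fun j i l => HahnSeries.ofPowerSeries ℤ F (a j i l)) ?_ ?_ ?_ l
  · intro j i l
    rw [bx_bridge]
    exact bx_cXn_alg d hd w w' hw s hs hγ _ _ j
  · intro hz
    apply hdet
    apply HahnSeries.ofPowerSeries_injective (Γ := ℤ)
    rw [RingHom.map_det, map_zero]
    exact hz
  · intro j
    have := congrArg (HahnSeries.ofPowerSeries ℤ F) (key j)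
    simp only [map_sum, map_mul, map_pow, map_zero] at this
    rw [ht] at this
    exact this

theorem bx_forward (hγ : IsAlgebraic (Polynomial F) (X ^ d * w)) (u : PowerSeries F)
    (hu : IsAlgebraic (Polynomial F) u) : IsAlgebraic (Polynomial F) (s u) := by
  obtain ⟨P, hP0, hP⟩ := hu
  refine bx_alg_of_poly ((P.map (algebraMap (Polynomial F) (PowerSeries F))).map s.toRingHom) ?_ ?_ _ ?_
  · rw [Polynomial.map_ne_zero_iff (bx_s_inj d hd w w' hw s hs)]
    rw [Polynomial.map_ne_zero_iff]
    · exact hP0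
    · intro a b hab
      simpa [PowerSeries.algebraMap_apply'] using hab
  · intro i
    rw [Polynomial.coeff_map, Polynomial.coeff_map]
    have := RingHom.congr_fun (bx_s_coe s) (P.coeff i)
    rw [RingHom.comp_apply] at this
    rw [this, hs]
    have h2 : IsAlgebraic (Polynomial F) (Polynomial.aeval (X ^ d * w) (P.coeff i)) := by
      rw [Polynomial.aeval_eq_sum_range]
      refine Subalgebra.sum_mem (Subalgebra.algebraicClosure (Polynomial F) (PowerSeries F))
        fun l _ => ?_
      rw [PowerSeries.smul_eq_C_mul]
      refine mul_mem ?_ (pow_mem hγ _)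
      rw [Subalgebra.mem_algebraicClosure]
      have := isAlgebraic_algebraMap (R := Polynomial F) (A := PowerSeries F)
        (Polynomial.C ((P.coeff i).coeff l))
      simpa [PowerSeries.algebraMap_apply'] using this
    exact h2
  · rw [Polynomial.eval_map]
    have := Polynomial.eval₂_hom s.toRingHom (p := P.map (algebraMap (Polynomial F) (PowerSeries F))) u
    rw [AlgHom.toRingHom_eq_coe, RingHom.coe_coe] at *
    rw [this, Polynomial.eval_map]
    rw [Polynomial.aeval_def] at hP
    rw [hP, map_zero]

end

section
variable {F : Type*} [Field F]

theorem bx_mul_aux (β : LaurentSeries F) (d : ℕ) (hd : 0 < d)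
    (w' : PowerSeries F)
    (hβ : β * HahnSeries.ofPowerSeries ℤ F (PowerSeries.X ^ d) = HahnSeries.ofPowerSeries ℤ F w')
    (y0 : PowerSeries F) :
    (β * HahnSeries.ofPowerSeries ℤ F (PowerSeries.X * y0)) *
      HahnSeries.ofPowerSeries ℤ F (PowerSeries.X ^ (d - 1)) =
      HahnSeries.ofPowerSeries ℤ F (w' * y0) := by
  obtain ⟨e, rfl⟩ : ∃ e, d = e + 1 := ⟨d - 1, by omega⟩
  rw [pow_succ (PowerSeries.X : PowerSeries F) e, map_mul] at hβ
  rw [Nat.add_sub_cancel, map_mul, map_mul]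
  linear_combination (HahnSeries.ofPowerSeries ℤ F y0) * hβ

local notation "oP" => HahnSeries.ofPowerSeries ℤ F

theorem bx_oP_coeff (f : PowerSeries F) (i : ℤ) :
    (oP f).coeff i = if i < 0 then 0 else PowerSeries.coeff i.toNat f := by
  have := PowerSeries.coeff_coe f i
  rw [this]
  split_ifs with h
  · rfl
  · congr 2
    omega

theorem bx_setup (β : LaurentSeries F) (hβ : β.order < 0) :
    ∃ d : ℕ, 0 < d ∧ ∃ w w' : PowerSeries F, w * w' = 1 ∧ β * oP (PowerSeries.X ^ d) = oP w' := by
  refine ⟨(-β.order).toNat, by omega, (β.powerSeriesPart)⁻¹, β.powerSeriesPart, ?_, ?_⟩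
  · apply PowerSeries.inv_mul_cancel
    rw [← PowerSeries.coeff_zero_eq_constantCoeff_apply, LaurentSeries.powerSeriesPart_coeff]
    have h0 : β ≠ 0 := by rintro rfl; simp at hβ
    simpa using HahnSeries.coeff_order_eq_zero.not.2 h0
  · rw [LaurentSeries.ofPowerSeries_powerSeriesPart, HahnSeries.ofPowerSeries_X_pow, mul_comm]
    have e : (((-β.order).toNat : ℕ) : ℤ) = -β.order := by omega
    rw [e]

theorem bx_int_poly (z : LaurentSeries F) (N : ℕ) (g : PowerSeries F)
    (h : z * oP (PowerSeries.X ^ N) = oP g) :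
    ∃ b : Polynomial F, b.natDegree ≤ N ∧ intPart z * oP (PowerSeries.X ^ N) = oP (b : PowerSeries F) := by
  refine ⟨g.trunc (N + 1), ?_, ?_⟩
  · have := PowerSeries.natDegree_trunc_lt g N
    omega
  · ext k
    have hk := congrArg (fun u : LaurentSeries F => u.coeff k) h
    simp only [HahnSeries.ofPowerSeries_X_pow, HahnSeries.coeff_mul_single, bx_oP_coeff, mul_one,
      Polynomial.coeff_coe, PowerSeries.coeff_trunc, intPart] at hk ⊢
    rw [hk]
    split_ifs <;> first | rfl | (exfalso; omega)

theorem bx_exists_N (z : LaurentSeries F) :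
    ∃ N : ℕ, ∃ g : PowerSeries F, z * oP (PowerSeries.X ^ N) = oP g := by
  refine ⟨(-z.order).toNat, PowerSeries.X ^ (z.order.toNat) * z.powerSeriesPart, ?_⟩
  rw [map_mul, LaurentSeries.ofPowerSeries_powerSeriesPart, HahnSeries.ofPowerSeries_X_pow,
    HahnSeries.ofPowerSeries_X_pow, ← mul_assoc, HahnSeries.single_mul_single, mul_comm, mul_one]
  have e : (((-z.order).toNat : ℕ) : ℤ) = (z.order.toNat : ℤ) + -z.order := by omega
  rw [e]

theorem bx_poly_alg (b : Polynomial F) : IsAlgebraic (RatFunc F) (oP (b : PowerSeries F)) := by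
  rw [bx_bridge]
  exact isAlgebraic_algebraMap (R := Polynomial F) (A := PowerSeries F) b

theorem bx_Xpow_alg (N : ℕ) : IsAlgebraic (RatFunc F) (oP (PowerSeries.X ^ N)) := by
  have := bx_poly_alg (F := F) (Polynomial.X ^ N)
  simpa using this

theorem bx_oX_ne (N : ℕ) : oP (PowerSeries.X ^ N) ≠ 0 := by
  simp

theorem bx_int_alg (z : LaurentSeries F) : IsAlgebraic (RatFunc F) (intPart z) := by
  obtain ⟨N, g, h⟩ := bx_exists_N z
  obtain ⟨b, _, hb⟩ := bx_int_poly z N g h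
  have : intPart z = oP (b : PowerSeries F) * (oP (PowerSeries.X ^ N))⁻¹ := by
    rw [← hb, mul_inv_cancel_right₀ (bx_oX_ne N)]
  rw [this]
  exact (bx_poly_alg b).mul (bx_Xpow_alg N).inv

theorem bx_T_form (β x : LaurentSeries F) : ∃ y0 : PowerSeries F,
    betaT β x = oP (PowerSeries.X * y0) := by
  refine ⟨PowerSeries.mk fun m => (betaT β x).coeff (m + 1), ?_⟩
  ext k
  rw [bx_oP_coeff]
  split_ifs with hk
  · simp [betaT, intPart, hk.le]
  · obtain ⟨n, rfl⟩ : ∃ n : ℕ, k = n := ⟨k.toNat, by omega⟩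
    cases n with
    | zero => simp [betaT, intPart]
    | succ n => simp [PowerSeries.coeff_succ_X_mul]

section
variable (β : LaurentSeries F) (d : ℕ) (hd : 0 < d) (w' : PowerSeries F)
  (hβ : β * HahnSeries.ofPowerSeries ℤ F (PowerSeries.X ^ d) = HahnSeries.ofPowerSeries ℤ F w')
include hd hβ

theorem bx_mul_coeff (y0 : PowerSeries F) (k : ℤ) :
    (β * oP (PowerSeries.X * y0)).coeff k =
      if k + (d - 1) < 0 then 0 else PowerSeries.coeff (k + (d - 1)).toNat (w' * y0) := by
  have h : (β * oP (PowerSeries.X * y0)) * oP (PowerSeries.X ^ (d - 1)) = oP (w' * y0) := bx_mul_aux β d hd w' hβ y0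
  have hk := congrArg (fun u : LaurentSeries F => u.coeff (k + (d - 1))) h
  simp only [HahnSeries.ofPowerSeries_X_pow, HahnSeries.coeff_mul_single, mul_one, bx_oP_coeff] at hk
  rw [← hk]
  congr 1
  push_cast [Nat.cast_sub (show 1 ≤ d by omega)]
  ring

theorem bx_T_step (y0 : PowerSeries F) :
    betaT β (oP (PowerSeries.X * y0)) =
      oP (PowerSeries.X * PowerSeries.mk fun m => PowerSeries.coeff (m + d) (w' * y0)) := by
  ext k
  rw [bx_oP_coeff]
  simp only [betaT, intPart, HahnSeries.coeff_sub, bx_mul_coeff β d hd w' hβ]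
  by_cases h0 : k < 0
  · simp [h0, h0.le]
  · rw [if_neg h0]
    obtain ⟨n, rfl⟩ : ∃ n : ℕ, k = n := ⟨k.toNat, by omega⟩
    cases n with
    | zero => simp
    | succ n =>
      rw [if_neg (by omega), if_neg (by omega)]
      simp only [Int.toNat_natCast, PowerSeries.coeff_succ_X_mul, PowerSeries.coeff_mk, sub_zero]
      congr 2
      omega

theorem bx_T_iter (n : ℕ) (y0 : PowerSeries F) : ∃ y : PowerSeries F,
    (betaT β)^[n] (oP (PowerSeries.X * y0)) = oP (PowerSeries.X * y) ∧
      w' * y = (bxStep d w')^[n] (w' * y0) := by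
  induction n with
  | zero => exact ⟨y0, rfl, rfl⟩
  | succ n ih =>
    obtain ⟨y, h1, h2⟩ := ih
    refine ⟨PowerSeries.mk fun m => PowerSeries.coeff (m + d) (w' * y), ?_, ?_⟩
    · rw [Function.iterate_succ_apply', h1, bx_T_step β d hd w' hβ]
    · rw [Function.iterate_succ_apply', ← h2, bxStep]

theorem bx_digit_coeff (n : ℕ) (y0 : PowerSeries F) (k : ℤ) :
    (betaDigits β (oP (PowerSeries.X * y0)) n).coeff k =
      if k ≤ 0 then if k + (d - 1) < 0 then 0 else
        PowerSeries.coeff (k + (d - 1)).toNat ((bxStep d w')^[n] (w' * y0)) else 0 := by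
  obtain ⟨y, h1, h2⟩ := bx_T_iter β d hd w' hβ n y0
  simp only [betaDigits, intPart]
  rw [h1, bx_mul_coeff β d hd w' hβ, h2]

theorem bx_auto_iff [Fintype F] (p : ℕ) [Fact p.Prime] [CharP F p] (x : LaurentSeries F)
    (y0 : PowerSeries F) (hy : betaT β x = oP (PowerSeries.X * y0)) :
    IsKAutomatic p (betaDigits β x) ↔
      ∀ j : Fin d, IsAlgebraic (Polynomial F) (bxH d w' j (w' * y0)) := by
  have hp : 0 < p := (Fact.out : p.Prime).pos
  rw [← bx_auto_shift p hp]
  have e : (fun n => betaDigits β x (n + 1)) = betaDigits β (oP (PowerSeries.X * y0)) := by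
    funext n
    simp only [betaDigits, Function.iterate_succ_apply, hy]
  rw [e]
  constructor
  · intro h j
    apply bx_christol_easy p
    have h1 := bx_auto_comp p _ (fun u : LaurentSeries F => u.coeff ((j : ℤ) - (d - 1))) h
    have hj := j.2
    convert h1 using 2 with n
    rw [bx_digit_coeff β d hd w' hβ, if_pos (by omega), if_neg (by omega)]
    simp [bxH]
  · intro h
    have h1 : IsKAutomatic p (fun n => fun j : Fin d =>
        PowerSeries.coeff (j : ℕ) ((bxStep d w')^[n] (w' * y0))) := by
      apply bx_auto_pi
      intro j
      have := bx_christol_hard p _ (h j)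
      simpa [bxH] using this
    have h2 := bx_auto_comp p _ (fun v : Fin d → F =>
      (∑ j : Fin d, HahnSeries.single ((j : ℤ) - (d - 1)) (v j) : LaurentSeries F)) h1
    convert h2 using 1
    funext n
    ext k
    rw [bx_digit_coeff β d hd w' hβ, HahnSeries.coeff_sum]
    by_cases hk : k ≤ 0 ∧ ¬ (k + (d - 1) < 0)
    · rw [if_pos hk.1, if_neg hk.2]
      have hlt : (k + (d - 1)).toNat < d := by omega
      rw [Finset.sum_eq_single (⟨_, hlt⟩ : Fin d)]
      · simp only []
        rw [HahnSeries.coeff_single, if_pos (by omega)]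
      · intro b _ hb
        rw [HahnSeries.coeff_single_of_ne]
        intro hkb
        apply hb
        apply Fin.ext
        simp only []
        omega
      · simp
    · rw [Finset.sum_eq_zero]
      · split_ifs <;> first | rfl | (exfalso; omega)
      · intro b _
        have := b.2
        rw [HahnSeries.coeff_single_of_ne]
        omega

end
end

section
variable {F : Type*} [Field F]

theorem bx_alg_sub {K M : Type*} [CommRing K] [IsDomain K] [CommRing M] [IsDomain M]
    (φ : K →+* M) : ∃ B : Subring M, ∀ x, x ∈ B ↔ ∃ P : Polynomial K, P ≠ 0 ∧ P.eval₂ φ x = 0 := by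
  let _ := φ.toAlgebra
  exact ⟨(Subalgebra.algebraicClosure K M).toSubring, fun x => Iff.rfl⟩

theorem bx_alg_of_poly' {K M : Type*} [CommRing K] [IsDomain K] [CommRing M] [IsDomain M]
    (φ : K →+* M) (Q : Polynomial M) (hQ : Q ≠ 0)
    (hc : ∀ i, ∃ P : Polynomial K, P ≠ 0 ∧ P.eval₂ φ (Q.coeff i) = 0) (a : M)
    (ha : Q.eval a = 0) : ∃ P : Polynomial K, P ≠ 0 ∧ P.eval₂ φ a = 0 := by
  let _ := φ.toAlgebra
  exact bx_alg_of_poly (K := K) Q hQ hc a ha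

theorem bx_gamma (β : LaurentSeries F) (d : ℕ) (w w' : PowerSeries F) (hw : w * w' = 1)
    (hβ : β * HahnSeries.ofPowerSeries ℤ F (PowerSeries.X ^ d) = HahnSeries.ofPowerSeries ℤ F w') :
    IsAlgebraic (Polynomial F) (PowerSeries.X ^ d * w) ↔ IsAlgebraic (RatFunc F) β := by
  have h1 : β * HahnSeries.ofPowerSeries ℤ F (PowerSeries.X ^ d * w) = 1 := by
    rw [map_mul, ← mul_assoc, hβ, ← map_mul, mul_comm, hw, map_one]
  have h2 : HahnSeries.ofPowerSeries ℤ F (PowerSeries.X ^ d * w) = β⁻¹ :=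
    eq_inv_of_mul_eq_one_right h1
  rw [← bx_bridge, h2, IsAlgebraic.inv_iff]

/-- `f` is algebraic iff `x` is, when `β` is algebraic. -/
theorem bx_f_alg (β x : LaurentSeries F) (hβ0 : β ≠ 0) (hβa : IsAlgebraic (RatFunc F) β)
    (d : ℕ) (w' : PowerSeries F)
    (hβ : β * HahnSeries.ofPowerSeries ℤ F (PowerSeries.X ^ d) = HahnSeries.ofPowerSeries ℤ F w')
    (y0 : PowerSeries F) (hy : betaT β x = HahnSeries.ofPowerSeries ℤ F (PowerSeries.X * y0)) :
    IsAlgebraic (Polynomial F) (w' * y0) ↔ IsAlgebraic (RatFunc F) x := by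
  have hX := bx_Xpow_alg (F := F) 1
  have hXd := bx_Xpow_alg (F := F) d
  have hX0 := bx_oX_ne (F := F) 1
  have hXd0 := bx_oX_ne (F := F) d
  rw [pow_one] at hX hX0
  rw [map_mul] at hy
  rw [← bx_bridge, map_mul, ← hβ]
  rw [betaT] at hy
  have hI := bx_int_alg (β * x)
  set Xd := HahnSeries.ofPowerSeries ℤ F (PowerSeries.X ^ d)
  set X1 := HahnSeries.ofPowerSeries ℤ F PowerSeries.X
  set Y := HahnSeries.ofPowerSeries ℤ F y0
  set I := intPart (β * x)
  constructor
  · intro h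
    have e : x = β⁻¹ * (X1 * ((β * Xd * Y) * (β * Xd)⁻¹) + I) := by
      have e1 : (β * Xd * Y) * (β * Xd)⁻¹ = Y := by field_simp
      rw [e1, ← hy]
      field_simp
      ring
    rw [e]
    exact hβa.inv.mul ((hX.mul (h.mul (hβa.mul hXd).inv)).add hI)
  · intro h
    have e : β * Xd * Y = β * Xd * (X1⁻¹ * (β * x - I)) := by
      rw [hy]
      field_simp
    rw [e]
    exact (hβa.mul hXd).mul (hX.inv.mul ((hβa.mul h).sub hI))

theorem bx_subst (γ : PowerSeries F) (h : PowerSeries.constantCoeff γ = 0) :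
    ∃ s : PowerSeries F →ₐ[F] PowerSeries F, s PowerSeries.X = γ :=
  ⟨PowerSeries.substAlgHom (PowerSeries.HasSubst.of_constantCoeff_zero' h),
    PowerSeries.substAlgHom_X _⟩

theorem bx_back (d : ℕ) (hd : 0 < d) (w w' : PowerSeries F) (hw : w * w' = 1)
    (s : PowerSeries F →ₐ[F] PowerSeries F) (hs : s PowerSeries.X = PowerSeries.X ^ d * w)
    (b : Polynomial F) (y0 : PowerSeries F)
    (hb : w' = (b : PowerSeries F) + PowerSeries.X ^ (d + 1) * y0)
    (hh : ∀ j : Fin d, IsAlgebraic (Polynomial F) (bxH d w' j (w' * y0))) :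
    IsAlgebraic (Polynomial F) (PowerSeries.X ^ d * w) := by
  rw [← hs, bx_exch']
  set φ := s.toRingHom.comp (algebraMap (Polynomial F) (PowerSeries F)) with hφ
  have hinj := bx_s_inj d hd w w' hw s hs
  obtain ⟨B, hB⟩ := bx_alg_sub φ
  have hφB : ∀ c, φ c ∈ B := by
    intro c
    rw [hB]
    exact ⟨Polynomial.X - Polynomial.C c, Polynomial.X_sub_C_ne_zero c, by simp⟩
  have hγB : s PowerSeries.X ∈ B := by
    have := hφB Polynomial.X
    simpa [hφ, PowerSeries.algebraMap_apply'] using this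
  have hCB : ∀ c : F, PowerSeries.C c ∈ B := by
    intro c
    have := hφB (Polynomial.C c)
    simpa [hφ, PowerSeries.algebraMap_apply', bx_sC] using this
  have hsB : ∀ j : Fin d, s (bxH d w' j (w' * y0)) ∈ B := by
    intro j
    obtain ⟨P, hP0, hP⟩ := hh j
    rw [hB]
    refine ⟨P, hP0, ?_⟩
    have := Polynomial.hom_eval₂ P (algebraMap (Polynomial F) (PowerSeries F)) s.toRingHom
      (bxH d w' j (w' * y0))
    rw [Polynomial.aeval_def] at hP
    rw [hP, map_zero] at this
    exact this.symm
  set γ := s PowerSeries.X with hγ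
  let Z : Polynomial (PowerSeries F) := Polynomial.X ^ d - Polynomial.C γ * b.map PowerSeries.C -
    Polynomial.C (γ ^ 2) * ∑ j : Fin d,
      Polynomial.C (s (bxH d w' j (w' * y0))) * Polynomial.X ^ ((j : ℕ) + 1)
  have hγc : PowerSeries.constantCoeff γ = 0 := by
    rw [hs]
    simp [hd.ne']
  refine bx_alg_of_poly' φ Z ?_ ?_ PowerSeries.X ?_
  · intro hz
    have := congrArg (fun Z : Polynomial (PowerSeries F) => PowerSeries.constantCoeff (Z.coeff d)) hz
    simp only [Z, Polynomial.coeff_sub, Polynomial.coeff_C_mul, map_sub, map_mul, hγc,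
      Polynomial.coeff_X_pow] at this
    simp [hγc] at this
  · intro i
    rw [← hB]
    simp only [Z, Polynomial.coeff_sub, Polynomial.coeff_C_mul, Polynomial.coeff_X_pow,
      Polynomial.coeff_map, Polynomial.finsetSum_coeff]
    refine sub_mem (sub_mem ?_ (mul_mem hγB (hCB _))) (mul_mem (pow_mem hγB 2) (sum_mem fun j _ =>
      mul_mem (hsB j) ?_))
    · split_ifs
      · exact one_mem _
      · exact zero_mem _
    · split_ifs
      · exact one_mem _
      · exact zero_mem _
  · have hex := bx_exist d hd w w' hw s hs (w' * y0)
    have e1 : Polynomial.eval PowerSeries.X (b.map (PowerSeries.C : F →+* PowerSeries F)) =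
        (b : PowerSeries F) := by
      rw [Polynomial.eval_map]
      have := RingHom.congr_fun (bx_coe_aeval (F := F)) b
      rw [PowerSeries.algebraMap_apply'] at this
      exact this
    have e2 : ∑ j : Fin d, s (bxH d w' j (w' * y0)) * PowerSeries.X ^ ((j : ℕ) + 1) =
        PowerSeries.X * (w' * y0) := by
      conv_rhs => rw [hex]
      rw [Finset.mul_sum]
      exact Finset.sum_congr rfl fun j _ => by ring
    simp only [Z, Polynomial.eval_sub, Polynomial.eval_mul, Polynomial.eval_C, Polynomial.eval_pow,
      Polynomial.eval_X, Polynomial.eval_finsetSum, e1, e2]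
    rw [hs]
    linear_combination (PowerSeries.X ^ d * w) * hb + (- PowerSeries.X ^ d -
      PowerSeries.X ^ (2 * d + 1) * w * y0) * hw

end

/-- **Theorem 4.1.** Let `β ∈ 𝔽_q((1/z))` be a formal Laurent series of positive
degree (i.e. `β.order < 0`).  Then the following are equivalent:
(i) `β` is algebraic over `𝔽_q(z)`;
(ii) `d_β(1)` is `p`-automatic;
(iii) for every `x ∈ 𝔽_q[[1/z]]`, `d_β(x)` is `p`-automatic iff `x` is algebraic
over `𝔽_q(z)`. -/
theorem beta_expansion_tfae
    (p : ℕ) [Fact p.Prime] (F : Type*) [Field F] [Fintype F] [CharP F p]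
    (β : LaurentSeries F) (hβ : β.order < 0) :
    (IsAlgebraic (RatFunc F) β ↔ IsKAutomatic p (betaDigits β 1)) ∧
      (IsAlgebraic (RatFunc F) β ↔
        ∀ x : LaurentSeries F, 0 ≤ x.order →
          (IsKAutomatic p (betaDigits β x) ↔ IsAlgebraic (RatFunc F) x)) := by
  have hβ0 : β ≠ 0 := by rintro rfl; simp at hβ
  obtain ⟨d, hd, w, w', hw, hβw⟩ := bx_setup β hβ
  obtain ⟨s, hs⟩ := bx_subst (PowerSeries.X ^ d * w) (by simp [hd.ne'])
  have h13 : IsAlgebraic (RatFunc F) β → ∀ x : LaurentSeries F,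
      (IsKAutomatic p (betaDigits β x) ↔ IsAlgebraic (RatFunc F) x) := by
    intro ha x
    have hγ := (bx_gamma β d w w' hw hβw).2 ha
    obtain ⟨y0, hy⟩ := bx_T_form β x
    rw [bx_auto_iff β d hd w' hβw p x y0 hy, ← bx_f_alg β x hβ0 ha d w' hβw y0 hy]
    constructor
    · intro h
      rw [bx_exist d hd w w' hw s hs (w' * y0)]
      refine Subalgebra.sum_mem (Subalgebra.algebraicClosure (Polynomial F) (PowerSeries F))
        fun j _ => mul_mem (pow_mem ?_ _) (bx_forward d hd w w' hw s hs hγ _ (h j))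
      rw [Subalgebra.mem_algebraicClosure]
      have := isAlgebraic_algebraMap (R := Polynomial F) (A := PowerSeries F) Polynomial.X
      simpa [PowerSeries.algebraMap_apply'] using this
    · intro h j
      exact bx_main d hd w w' hw s hs hγ _ h j
  have h21 : IsKAutomatic p (betaDigits β 1) → IsAlgebraic (RatFunc F) β := by
    intro h
    obtain ⟨y0, hy⟩ := bx_T_form β 1
    rw [bx_auto_iff β d hd w' hβw p 1 y0 hy] at h
    obtain ⟨b, _, hb⟩ := bx_int_poly β d w' hβw
    rw [← bx_gamma β d w w' hw hβw]
    refine bx_back d hd w w' hw s hs b y0 ?_ h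
    apply HahnSeries.ofPowerSeries_injective (Γ := ℤ)
    rw [betaT, mul_one] at hy
    rw [map_add, ← hb, ← hβw, pow_succ, mul_assoc, map_mul _ _ (PowerSeries.X * y0), ← hy]
    ring
  have h1 : IsAlgebraic (RatFunc F) (1 : LaurentSeries F) := isAlgebraic_one
  refine ⟨⟨fun h => (h13 h 1).2 h1, h21⟩, ⟨fun h x _ => h13 h x, fun h => h21 ?_⟩⟩
  exact (h 1 (by simp)).2 h1
end
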